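/- arXiv:2303.18000 — 2 statements merged into one kernel-verified Lean document; each statement's English description precedes it below -/
import Mathlib

section
/- Let 𝒱 be a complex Banach space and 𝒜 a closed linear operator on 𝒱 with iℤ ⊆ ρ(𝒜) and sup{‖n(in − 𝒜)⁻¹‖_{𝒱→𝒱} : n ∈ ℤ} < ∞. Then for each f ∈ C^β_{2π}(ℝ,𝒱) there exists a unique 2π-periodic solution u ∈ C^{1+β}_{2π}(ℝ,𝒱) ∩ C^β_{2π}(ℝ,𝒟(𝒜)) of u_t = 𝒜u + f(t) for t ∈ ℝ. -/
open Real Filter Set Function MeasureTheory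
open scoped ENNReal

noncomputable section

namespace HopfStmt

/-- The sup part of the periodic Hölder norm. -/
def supN {E : Type*} [NormedAddCommGroup E] (u : ℝ → E) : ℝ := ⨆ t : ℝ, ‖u t‖

/-- The Hölder seminorm part. -/
def holS {E : Type*} [NormedAddCommGroup E] (β : ℝ) (u : ℝ → E) : ℝ :=
  ⨆ p : ℝ × ℝ, ‖u p.1 - u p.2‖ / |p.1 - p.2| ^ β

/-- The norm of `C^β_{2π}(ℝ, E)`. -/
def holderN {E : Type*} [NormedAddCommGroup E] (β : ℝ) (u : ℝ → E) : ℝ :=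
  supN u + holS β u

/-- Membership in `C^β_{2π}(ℝ, E)`: `2π`-periodic and `β`-Hölder continuous. -/
def MemHolder {E : Type*} [NormedAddCommGroup E] (β : ℝ) (u : ℝ → E) : Prop :=
  Function.Periodic u (2 * π) ∧ ∃ C : ℝ, ∀ s t : ℝ, ‖u s - u t‖ ≤ C * |s - t| ^ β

/-- Membership in the span of the first cosine and sine modes: `w = a ⊗ c₁ + b ⊗ s₁`. -/
def memSp1 {E : Type*} [AddCommGroup E] [Module ℝ E] (w : ℝ → E) : Prop :=
  ∃ a b : E, ∀ t : ℝ, w t = Real.cos t • a + Real.sin t • b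

/-- `L₁ ψ := Re (ψ ⊗ e₁)`, i.e. `(L₁ψ)(t) = cos t • ψ₁ - sin t • ψ₂` for `ψ = ψ₁ + iψ₂`. -/
def L1 {E : Type*} [AddCommGroup E] [Module ℝ E] (ψ : E × E) : ℝ → E :=
  fun t => Real.cos t • ψ.1 - Real.sin t • ψ.2

/-- Multiplication by the complex scalar `c` on the complexification `E_c = E × E`. -/
def csmul {E : Type*} [AddCommGroup E] [Module ℝ E] (c : ℂ) (x : E × E) : E × E :=
  (c.re • x.1 - c.im • x.2, c.im • x.1 + c.re • x.2)

/-- Complex conjugation on the complexification. -/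
def conjC {E : Type*} [AddCommGroup E] (x : E × E) : E × E := (x.1, -x.2)

variable {V : Type*} [NormedAddCommGroup V] [NormedSpace ℝ V]
variable {U : Type*} [NormedAddCommGroup U] [NormedSpace ℝ U]

/-- The complexified inclusion `ι_c : U_c → V_c`. -/
def iotaC (ι : U →L[ℝ] V) (ψ : U × U) : V × V := (ι ψ.1, ι ψ.2)

/-- The complexified operator `A_c : U_c → V_c`. -/
def AcC (A : U →L[ℝ] V) (ψ : U × U) : V × V := (A ψ.1, A ψ.2)

/-- The operator `c - A_c : U_c → V_c` for a complex scalar `c`. -/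
def cMinusA (ι A : U →L[ℝ] V) (c : ℂ) (ψ : U × U) : V × V :=
  csmul c (iotaC ι ψ) - AcC A ψ

/-- The kernel `𝒩(i - A_c) ⊆ U_c`. -/
def kerIA (ι A : U →L[ℝ] V) : Set (U × U) := {ψ | cMinusA ι A Complex.I ψ = 0}

/-- The range `ℛ(i - A_c) ⊆ V_c`. -/
def ranIA (ι A : U →L[ℝ] V) : Set (V × V) := Set.range (cMinusA ι A Complex.I)

/-- `V♯ := ℛ(i - A_c) ∩ ℛ(-i - A_c)`. -/
def Vsharp (ι A : U →L[ℝ] V) : Set (V × V) :=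
  Set.range (cMinusA ι A Complex.I) ∩ Set.range (cMinusA ι A (-Complex.I))

/-- The `V`-valued time derivative of `w : ℝ → U` (through the inclusion `ι`). -/
def Xder (ι : U →L[ℝ] V) (w : ℝ → U) : ℝ → V := fun t => deriv (fun s => ι (w s)) t

/-- Membership in `X := C^{1+β}_{2π}(ℝ,V) ∩ C^β_{2π}(ℝ,U)`. -/
def MemX (β : ℝ) (ι : U →L[ℝ] V) (w : ℝ → U) : Prop :=
  MemHolder β w ∧ (∀ t : ℝ, DifferentiableAt ℝ (fun s => ι (w s)) t) ∧
    MemHolder β (Xder ι w)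

/-- The norm of `X`: `‖w‖_X = ‖w‖_{V,1+β} + ‖w‖_{U,β}`. -/
def normX (β : ℝ) (ι : U →L[ℝ] V) (w : ℝ → U) : ℝ :=
  (holderN β (fun t => ι (w t)) + holderN β (Xder ι w)) + holderN β w

/-- `T₁ w := ẇ - A w`. -/
def T1op (ι A : U →L[ℝ] V) (w : ℝ → U) : ℝ → V := fun t => Xder ι w t - A (w t)

/-- Hypothesis (H2): `±i` are simple eigenvalues of `A`, i.e.
`dim 𝒩(i - A_c) = 1 = codim ℛ(i - A_c)` and nonzero kernel elements do not lie in the range. -/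
def H2hyp (ι A : U →L[ℝ] V) : Prop :=
  (∃ ψ ∈ kerIA ι A, ψ ≠ 0 ∧ ∀ φ ∈ kerIA ι A, ∃ c : ℂ, φ = csmul c ψ) ∧
  (∃ χ : V × V, χ ∉ ranIA ι A ∧ ∀ v : V × V, ∃ c : ℂ, ∃ r ∈ ranIA ι A, v = r + csmul c χ) ∧
  (∀ ψ ∈ kerIA ι A, ψ ≠ 0 → iotaC ι ψ ∉ ranIA ι A)

/-- Hypothesis (H4): `ik ∈ ρ(A_c)` for `k ∈ ℤ \ {-1, 1}`. -/
def H4hyp (ι A : U →L[ℝ] V) : Prop :=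
  ∀ k : ℤ, k ≠ 1 → k ≠ -1 → Function.Bijective (cMinusA ι A (Complex.I * (k : ℂ)))

/-- Hypothesis (H5): `‖(in - A_c)⁻¹‖ ≤ M / n` for `n = 2, 3, 4, ...`. -/
def H5hyp (ι A : U →L[ℝ] V) : Prop :=
  ∃ M : ℝ, 0 < M ∧ ∀ n : ℕ, 2 ≤ n →
    ∀ ψ : U × U, (n : ℝ) * ‖iotaC ι ψ‖ ≤ M * ‖cMinusA ι A (Complex.I * (n : ℂ)) ψ‖

/-- Hypothesis (H3): the eigenvalue branch `μ(λ)` of `A_c + (h_u(λ,0))_c` through `μ(0) = i`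
satisfies the transversality condition `Re μ'(0) ≠ 0`. -/
def H3hyp (ι A : U →L[ℝ] V) (h : ℝ → U → V) : Prop :=
  ∃ (ε : ℝ) (μ : ℝ → ℂ) (ψb : ℝ → U × U) (μ' : ℂ), 0 < ε ∧
    μ 0 = Complex.I ∧ ψb 0 ∈ kerIA ι A ∧ ψb 0 ≠ 0 ∧
    ContinuousOn ψb (Metric.ball (0 : ℝ) ε) ∧
    (∀ lam ∈ Metric.ball (0 : ℝ) ε,
      AcC A (ψb lam) + (fderiv ℝ (h lam) 0 (ψb lam).1, fderiv ℝ (h lam) 0 (ψb lam).2)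
        = csmul (μ lam) (iotaC ι (ψb lam))) ∧
    HasDerivAt μ μ' 0 ∧ μ'.re ≠ 0

/-- Unbundled notion: `f : (E, NE) → (F, NF)` is of class `C²` on `D` (Fréchet sense). -/
def UFC2On {E F : Type*} [AddCommGroup E] [Module ℝ E] [AddCommGroup F] [Module ℝ F]
    (NE : E → ℝ) (NF : F → ℝ) (D : Set E) (f : E → F) : Prop :=
  ∃ (D1 : E → E → F) (D2 : E → E → E → F),
    (∀ x ∈ D, IsLinearMap ℝ (D1 x) ∧ ∃ C : ℝ, ∀ e, NF (D1 x e) ≤ C * NE e) ∧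
    (∀ x ∈ D, ∀ ε > (0 : ℝ), ∃ d > (0 : ℝ), ∀ y ∈ D, NE (y - x) < d →
      NF (f y - f x - D1 x (y - x)) ≤ ε * NE (y - x)) ∧
    (∀ x ∈ D, (∀ e, IsLinearMap ℝ (D2 x e)) ∧ (∀ e', IsLinearMap ℝ (fun e => D2 x e e')) ∧
      ∃ C : ℝ, ∀ e e', NF (D2 x e e') ≤ C * NE e * NE e') ∧
    (∀ x ∈ D, ∀ ε > (0 : ℝ), ∃ d > (0 : ℝ), ∀ y ∈ D, NE (y - x) < d →
      ∀ e, NF (D1 y e - D1 x e - D2 x (y - x) e) ≤ ε * NE (y - x) * NE e) ∧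
    (∀ x ∈ D, ∀ ε > (0 : ℝ), ∃ d > (0 : ℝ), ∀ y ∈ D, NE (y - x) < d →
      ∀ e e', NF (D2 y e e' - D2 x e e') ≤ ε * NE e * NE e')

/-- Unbundled notion: `f : ℝ → (E, NE)` is `C¹` on `s` with derivative `f'`. -/
def UC1On {E : Type*} [AddCommGroup E] [Module ℝ E] (NE : E → ℝ) (s : Set ℝ)
    (f f' : ℝ → E) : Prop :=
  (∀ a ∈ s, ∀ ε > (0 : ℝ), ∃ d > (0 : ℝ), ∀ b ∈ s, |b - a| < d →
    NE (f b - f a - (b - a) • f' a) ≤ ε * |b - a|) ∧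
  (∀ a ∈ s, ∀ ε > (0 : ℝ), ∃ d > (0 : ℝ), ∀ b ∈ s, |b - a| < d → NE (f' b - f' a) ≤ ε)


section Aux

set_option linter.unusedSectionVars false

/-! ### Fourier multipliers -/

/-- The character `e^{ins}`. -/
def ch (n : ℤ) (s : ℝ) : ℂ := Complex.exp (Complex.I * ((n * s : ℝ) : ℂ))

theorem ch_zero_left (s : ℝ) : ch 0 s = 1 := by simp [ch]

theorem norm_ch (n : ℤ) (s : ℝ) : ‖ch n s‖ = 1 := by
  rw [ch, Complex.norm_exp_I_mul_ofReal]

theorem ch_add (n : ℤ) (s t : ℝ) : ch n (s + t) = ch n s * ch n t := by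
  rw [ch, ch, ch, ← Complex.exp_add]; congr 1; push_cast; ring

theorem ch_succ (n m : ℤ) (s : ℝ) : ch (n + m) s = ch n s * ch m s := by
  rw [ch, ch, ch, ← Complex.exp_add]; congr 1; push_cast; ring

theorem ch_neg_mul (n : ℤ) (s : ℝ) : ch (-n) s = ch n (-s) := by
  rw [ch, ch]; congr 2; push_cast; ring

theorem ch_two_pi (n : ℤ) : ch n (2 * π) = 1 := by
  rw [ch, Complex.exp_eq_one_iff]
  exact ⟨n, by push_cast; ring⟩

theorem ch_periodic (n : ℤ) : Function.Periodic (ch n) (2 * π) := by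
  intro s; rw [ch_add, ch_two_pi, mul_one]

theorem hasDerivAt_ch (n : ℤ) (s : ℝ) : HasDerivAt (ch n) ((n * Complex.I) * ch n s) s := by
  have h1 : HasDerivAt (fun s : ℝ => ((n * s : ℝ) : ℂ)) (n : ℂ) s := by
    have := ((hasDerivAt_id s).const_mul (n : ℝ)).ofReal_comp
    simpa using this
  have h2 := (h1.const_mul Complex.I).cexp
  refine h2.congr_deriv ?_
  unfold ch; ring

theorem continuous_ch (n : ℤ) : Continuous (ch n) := by
  unfold ch; fun_prop

theorem integral_ch (n : ℤ) (hn : n ≠ 0) : ∫ s in (-π)..π, ch n s = 0 := by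
  have h1 : ∀ x ∈ Set.uIcc (-π) π,
      HasDerivAt (fun s => (n * Complex.I)⁻¹ * ch n s) (ch n x) x := by
    intro x _
    have h := (hasDerivAt_ch n x).const_mul ((n * Complex.I : ℂ)⁻¹)
    have h0 : (n * Complex.I : ℂ) ≠ 0 := by
      simp [hn]
    rwa [← mul_assoc, inv_mul_cancel₀ h0, one_mul] at h
  rw [intervalIntegral.integral_eq_sub_of_hasDerivAt h1 ((continuous_ch n).intervalIntegrable _ _)]
  have : ch n π = ch n (-π) := by
    have := ch_periodic n (-π)
    rw [← this]; congr 1; ring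
  rw [this, sub_self]

variable {E F : Type*} [NormedAddCommGroup E] [NormedSpace ℂ E]
  [NormedAddCommGroup F] [NormedSpace ℂ F]

/-- Fourier coefficients. -/
def fc (f : ℝ → E) (n : ℤ) : E := (2 * π)⁻¹ • ∫ s in (-π)..π, ch (-n) s • f s

/-- Multiplier operator with symbol supported in `[-N,N]`. -/
def TT (N : ℕ) (m : ℤ → E →L[ℂ] F) (f : ℝ → E) (t : ℝ) : F :=
  ∑ n ∈ Finset.Icc (-(N : ℤ)) N, ch n t • m n (fc f n)

/-- The kernel. -/
def KK (N : ℕ) (m : ℤ → E →L[ℂ] F) (s : ℝ) : E →L[ℂ] F :=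
  ∑ n ∈ Finset.Icc (-(N : ℤ)) N, ch n s • m n

theorem ch_fc (f : ℝ → E) (hp : Function.Periodic f (2 * π)) (n : ℤ) (t : ℝ) :
    ch n t • fc f n = (2 * π)⁻¹ • ∫ s in (-π)..π, ch n s • f (t - s) := by
  rw [fc, smul_comm, ← intervalIntegral.integral_smul]
  congr 1
  have e1 : ∀ s, ch n t • ch (-n) s • f s = (fun x => ch n (t - x) • f x) s := by
    intro s
    rw [smul_smul, ch_neg_mul, ← ch_add]; rfl
  have e2 : ∀ s, ch n s • f (t - s) = (fun x => ch n (t - x) • f x) (t - s) := by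
    intro s; simp
  simp_rw [e1, e2]
  rw [intervalIntegral.integral_comp_sub_left (fun x => ch n (t - x) • f x) t]
  have hP : Function.Periodic (fun x => ch n (t - x) • f x) (2 * π) := by
    intro x
    simp only [hp x]
    congr 1
    have := ch_periodic n (t - (x + 2 * π))
    rw [← this]; congr 1; ring
  have := hP.intervalIntegral_add_eq (-π) (t - π)
  convert this using 2 <;> ring

theorem TT_eq [CompleteSpace E] [CompleteSpace F] (N : ℕ) (m : ℤ → E →L[ℂ] F) (f : ℝ → E)
    (hp : Function.Periodic f (2 * π))
    (hc : Continuous f) (t : ℝ) :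
    TT N m f t - m 0 (f t) = (2 * π)⁻¹ • ∫ s in (-π)..π, KK N m s (f (t - s) - f t) := by
  have h1 : ∀ n, ch n t • m n (fc f n) = (2 * π)⁻¹ • ∫ s in (-π)..π, ch n s • m n (f (t - s)) := by
    intro n
    rw [← map_smul, ch_fc f hp]
    have : ∀ s, ch n s • m n (f (t - s)) = m n (ch n s • f (t - s)) := fun s => by rw [map_smul]
    simp_rw [this]
    rw [ContinuousLinearMap.intervalIntegral_comp_comm]
    · exact (m n).map_smul_of_tower _ _
    · apply Continuous.intervalIntegrable
      exact (continuous_ch n).smul (hc.comp (continuous_const.sub continuous_id))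
  have h2 : m 0 (f t) = (2 * π)⁻¹ • ∫ s in (-π)..π, KK N m s (f t) := by
    simp only [KK, _root_.sum_apply, _root_.smul_apply]
    rw [intervalIntegral.integral_finsetSum]
    · rw [Finset.sum_eq_single 0]
      · simp [ch_zero_left]
        rw [← two_mul, smul_smul]
        have : π⁻¹ * 2⁻¹ * (2 * π) = 1 := by field_simp
        rw [this, one_smul]
      · intro n _ hn
        rw [intervalIntegral.integral_smul_const, integral_ch n hn, zero_smul]
      · intro h; simp at h
    · intro n _
      apply Continuous.intervalIntegrable
      exact (continuous_ch n).smul continuous_const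
  have hK : Continuous (KK N m) := by
    unfold KK
    exact continuous_finsetSum _ fun n _ => (continuous_ch n).smul continuous_const
  have h3 : TT N m f t = (2 * π)⁻¹ • ∫ s in (-π)..π, KK N m s (f (t - s)) := by
    simp only [TT, h1, KK, _root_.sum_apply, _root_.smul_apply]
    rw [← Finset.smul_sum, intervalIntegral.integral_finsetSum]
    intro n _
    apply Continuous.intervalIntegrable
    exact (continuous_ch n).smul
      ((m n).continuous.comp (hc.comp (continuous_const.sub continuous_id)))
  rw [h3, h2, ← smul_sub, ← intervalIntegral.integral_sub]
  · simp only [map_sub]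
  · exact (hK.clm_apply (hc.comp (continuous_const.sub continuous_id))).intervalIntegrable _ _
  · exact (hK.clm_apply continuous_const).intervalIntegrable _ _

/-- Second difference identity for the kernel. -/
theorem sum_diff {G : Type*} [NormedAddCommGroup G] [NormedSpace ℂ G]
    (N : ℕ) (m : ℤ → G) (hm : ∀ n : ℤ, (N : ℤ) < |n| → m n = 0) (s : ℝ) :
    (ch 1 s - 1) ^ 2 • (∑ n ∈ Finset.Icc (-(N : ℤ)) N, ch n s • m n) =
      ∑ n ∈ Finset.Icc (-(N : ℤ) - 2) N, ch (n + 2) s • (m (n + 2) - (2 : ℂ) • m (n + 1) + m n) := by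
  have hs : HasSum (fun n => ch n s • m n) (∑ n ∈ Finset.Icc (-(N : ℤ)) N, ch n s • m n) := by
    apply hasSum_sum_of_ne_finset_zero
    intro n hn
    rw [hm n, smul_zero]
    rw [Finset.mem_Icc, ← abs_le] at hn
    omega
  generalize (∑ n ∈ Finset.Icc (-(N : ℤ)) N, ch n s • m n) = K at hs
  have hs1 : HasSum (fun n => ch (n + 1) s • m (n + 1)) K := by
    have := (Equiv.addRight (1 : ℤ)).hasSum_iff.mpr hs
    simpa only [Function.comp_def, Equiv.coe_addRight] using this
  have hs2 : HasSum (fun n => ch (n + 2) s • m (n + 2)) K := by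
    have := (Equiv.addRight (2 : ℤ)).hasSum_iff.mpr hs
    simpa only [Function.comp_def, Equiv.coe_addRight] using this
  have h := (hs2.sub (hs1.const_smul (2 * ch 1 s))).add (hs.const_smul (ch 2 s))
  have e2 : ch 2 s = ch 1 s * ch 1 s := by rw [← ch_succ]; norm_num
  have e : K - (2 * ch 1 s) • K + ch 2 s • K = (ch 1 s - 1) ^ 2 • K := by
    rw [e2]; module
  rw [e] at h
  have e' : (fun n => ch (n + 2) s • m (n + 2) - (2 * ch 1 s) • ch (n + 1) s • m (n + 1)
      + ch 2 s • ch n s • m n) =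
      fun n => ch (n + 2) s • (m (n + 2) - (2 : ℂ) • m (n + 1) + m n) := by
    funext n
    rw [ch_succ n 2, ch_succ n 1, e2]; module
  rw [e'] at h
  refine h.unique (hasSum_sum_of_ne_finset_zero ?_)
  intro n hn
  rw [Finset.mem_Icc] at hn
  have a0 : m n = 0 := hm n (by rw [lt_abs]; omega)
  have a1 : m (n + 1) = 0 := hm _ (by rw [lt_abs]; omega)
  have a2 : m (n + 2) = 0 := hm _ (by rw [lt_abs]; omega)
  simp [a0, a1, a2]

theorem KK_bound (N : ℕ) (hN : 1 ≤ N) (m : ℤ → E →L[ℂ] F)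
    (hm : ∀ n : ℤ, (N : ℤ) < |n| → m n = 0) (B : ℝ) (hB : ∀ n, ‖m n‖ ≤ B)
    (hB2 : ∀ n, ‖m (n + 2) - (2 : ℂ) • m (n + 1) + m n‖ ≤ B / (N : ℝ) ^ 2)
    (s : ℝ) (hs : |s| ≤ π) :
    ‖KK N m s‖ ≤ 46 * B * N * (1 + N * |s|) ^ (-2 : ℝ) := by
  have hN' : (1 : ℝ) ≤ N := by exact_mod_cast hN
  have hB0 : 0 ≤ B := (norm_nonneg _).trans (hB 0)
  have h1 : ‖KK N m s‖ ≤ 3 * B * N := by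
    refine (norm_sum_le_of_le _ (f := fun n : ℤ => ch n s • m n) (n := fun _ => B) ?_).trans ?_
    · intro n _; rw [norm_smul, norm_ch, one_mul]; exact hB n
    · rw [Finset.sum_const, Int.card_Icc, nsmul_eq_mul]
      have : ((((N : ℤ) + 1 - -(N : ℤ)).toNat : ℕ) : ℝ) = 2 * N + 1 := by
        have : ((N : ℤ) + 1 - -(N : ℤ)).toNat = 2 * N + 1 := by omega
        rw [this]; push_cast; ring
      rw [this]; nlinarith
  have h2 : ‖ch 1 s - 1‖ ^ 2 * ‖KK N m s‖ ≤ 5 * B / N := by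
    rw [← norm_pow, ← norm_smul, KK, sum_diff N m hm]
    refine (norm_sum_le_of_le _ (n := fun _ => B / (N : ℝ) ^ 2) ?_).trans ?_
    · intro n _; rw [norm_smul, norm_ch, one_mul]; exact hB2 n
    · rw [Finset.sum_const, Int.card_Icc, nsmul_eq_mul]
      have : ((((N : ℤ) + 1 - (-(N : ℤ) - 2)).toNat : ℕ) : ℝ) = 2 * N + 3 := by
        have : ((N : ℤ) + 1 - (-(N : ℤ) - 2)).toNat = 2 * N + 3 := by omega
        rw [this]; push_cast; ring
      rw [this, mul_div_assoc', div_le_div_iff₀ (by positivity) (by positivity)]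
      nlinarith [mul_nonneg hB0 (by positivity : (0 : ℝ) ≤ N * (N - 1 : ℝ) + 0 * N)]
  have h3 : 2 / π * |s| ≤ ‖ch 1 s - 1‖ := by
    have := Complex.norm_exp_I_mul_ofReal_sub_one s
    have hh : ch 1 s = Complex.exp (Complex.I * s) := by simp [ch]
    rw [hh, this, norm_mul, Real.norm_eq_abs, Real.norm_eq_abs]
    have h4 := Real.mul_abs_le_abs_sin (x := s / 2) (by rw [abs_div, abs_two]; linarith)
    rw [abs_div, abs_two] at h4
    rw [abs_two]
    linarith
  have h5 : (4 / 16) * s ^ 2 * ‖KK N m s‖ ≤ 5 * B / N := by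
    refine le_trans ?_ h2
    gcongr
    have h6 : 2 / 4 * |s| ≤ ‖ch 1 s - 1‖ := by
      refine le_trans ?_ h3
      gcongr
      exact Real.pi_le_four
    calc 4 / 16 * s ^ 2 = (2 / 4 * |s|) ^ 2 := by rw [mul_pow, sq_abs]; ring
      _ ≤ _ := by gcongr
  have h7 : N ^ 2 * s ^ 2 * ‖KK N m s‖ ≤ 20 * B * N := by
    have : (N : ℝ) ^ 2 * s ^ 2 * ‖KK N m s‖ = 4 * N ^ 2 * ((4 / 16) * s ^ 2 * ‖KK N m s‖) := by ring
    rw [this]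
    calc 4 * (N : ℝ) ^ 2 * ((4 / 16) * s ^ 2 * ‖KK N m s‖) ≤ 4 * (N : ℝ) ^ 2 * (5 * B / N) := by gcongr
      _ = 20 * B * N := by field_simp; ring
  have h8 : (0 : ℝ) < (1 + N * |s|) ^ 2 := by positivity
  rw [Real.rpow_neg (by positivity), ← div_eq_mul_inv, Real.rpow_two, le_div_iff₀ h8]
  have h9 : (1 + N * |s|) ^ 2 ≤ 2 * (1 + N ^ 2 * s ^ 2) := by
    nlinarith [sq_abs s, sq_nonneg (1 - N * |s|)]
  calc ‖KK N m s‖ * (1 + N * |s|) ^ 2 ≤ ‖KK N m s‖ * (2 * (1 + N ^ 2 * s ^ 2)) := by gcongr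
    _ = 2 * (‖KK N m s‖ + N ^ 2 * s ^ 2 * ‖KK N m s‖) := by ring
    _ ≤ 2 * (3 * B * N + 20 * B * N) := by gcongr
    _ = 46 * B * N := by ring



/-- The universal integral constant. -/
def IB (β : ℝ) : ℝ := ∫ x : ℝ, (1 + ‖x‖) ^ (-(2 - β))

theorem IB_nonneg (β : ℝ) : 0 ≤ IB β := integral_nonneg fun x => by positivity

theorem integral_scaled (β : ℝ) (hβ : β ∈ Set.Ioo (0 : ℝ) 1) (N : ℕ) (hN : 1 ≤ N) :
    IntervalIntegrable (fun s : ℝ => (1 + N * |s|) ^ (-(2 - β))) volume (-π) π ∧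
    ∫ s in (-π)..π, (1 + N * |s|) ^ (-(2 - β)) ≤ (N : ℝ)⁻¹ * IB β := by
  have hN0 : (0 : ℝ) < N := by exact_mod_cast hN
  have hi : Integrable (fun x : ℝ => (1 + ‖x‖) ^ (-(2 - β))) := by
    apply integrable_one_add_norm
    simp; linarith [hβ.2]
  have e : (fun s : ℝ => (1 + N * |s|) ^ (-(2 - β))) =
      fun s : ℝ => (fun x : ℝ => (1 + ‖x‖) ^ (-(2 - β))) (N * s) := by
    funext s
    simp
  have hi' : Integrable (fun s : ℝ => (1 + N * |s|) ^ (-(2 - β))) := by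
    rw [e]; exact hi.comp_mul_left' hN0.ne'
  refine ⟨hi'.intervalIntegrable, ?_⟩
  rw [intervalIntegral.integral_of_le (by linarith [Real.pi_pos])]
  refine (setIntegral_le_integral hi' (Eventually.of_forall fun x => by
    simp only [Pi.zero_apply]; positivity)).trans ?_
  have e3 := Measure.integral_comp_mul_left (fun x : ℝ => (1 + ‖x‖) ^ (-(2 - β))) (N : ℝ)
  rw [abs_of_pos (by positivity)] at e3
  rw [e]
  exact e3.le

theorem TT_bound [CompleteSpace E] [CompleteSpace F] (β : ℝ) (hβ : β ∈ Set.Ioo (0 : ℝ) 1)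
    (N : ℕ) (hN : 1 ≤ N) (m : ℤ → E →L[ℂ] F)
    (hm : ∀ n : ℤ, (N : ℤ) < |n| → m n = 0) (B : ℝ) (hB : ∀ n, ‖m n‖ ≤ B)
    (hB2 : ∀ n, ‖m (n + 2) - (2 : ℂ) • m (n + 1) + m n‖ ≤ B / (N : ℝ) ^ 2)
    (f : ℝ → E) (hp : Function.Periodic f (2 * π)) (hc : Continuous f) (H : ℝ) (hH : 0 ≤ H)
    (hf : ∀ s t : ℝ, ‖f s - f t‖ ≤ H * |s - t| ^ β) (t : ℝ) :
    ‖TT N m f t - m 0 (f t)‖ ≤ 46 * B * H * IB β * (N : ℝ) ^ (-β) := by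
  have hN0 : (0 : ℝ) < N := by exact_mod_cast hN
  have hB0 : 0 ≤ B := (norm_nonneg _).trans (hB 0)
  have hpi := Real.pi_gt_three
  obtain ⟨hi, hI⟩ := integral_scaled β hβ N hN
  rw [TT_eq N m f hp hc, norm_smul]
  have key : ‖∫ s in (-π)..π, KK N m s (f (t - s) - f t)‖ ≤
      ∫ s in (-π)..π, (46 * B * H * (N : ℝ) ^ (1 - β)) * (1 + N * |s|) ^ (-(2 - β)) := by
    refine intervalIntegral.norm_integral_le_of_norm_le (by linarith) ?_ (hi.const_mul _)
    refine Eventually.of_forall fun s hs => ?_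
    have hs' : |s| ≤ π := abs_le.mpr ⟨hs.1.le, hs.2⟩
    have h1 := KK_bound N hN m hm B hB hB2 s hs'
    have h2 := hf (t - s) t
    have h3 : |t - s - t| = |s| := by rw [← abs_neg]; congr 1; ring
    rw [h3] at h2
    have h4 : |s| ^ β ≤ (N : ℝ) ^ (-β) * (1 + N * |s|) ^ β := by
      have : |s| = (N : ℝ)⁻¹ * (N * |s|) := by field_simp
      calc |s| ^ β = ((N : ℝ)⁻¹ * (N * |s|)) ^ β := by rw [← this]
        _ = (N : ℝ) ^ (-β) * (N * |s|) ^ β := by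
          rw [Real.mul_rpow (by positivity) (by positivity), Real.rpow_neg hN0.le,
            Real.inv_rpow hN0.le]
        _ ≤ _ := by
          gcongr
          · exact hβ.1.le
          · linarith
    calc ‖KK N m s (f (t - s) - f t)‖ ≤ ‖KK N m s‖ * ‖f (t - s) - f t‖ :=
          ContinuousLinearMap.le_opNorm _ _
      _ ≤ (46 * B * N * (1 + N * |s|) ^ (-2 : ℝ)) *
          (H * ((N : ℝ) ^ (-β) * (1 + N * |s|) ^ β)) := by
          gcongr
          exact h2.trans (by gcongr)
      _ = 46 * B * H * ((N : ℝ) ^ (1 : ℝ) * (N : ℝ) ^ (-β)) *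
          ((1 + N * |s|) ^ (-2 : ℝ) * (1 + N * |s|) ^ β) := by rw [Real.rpow_one]; ring
      _ = _ := by
          rw [← Real.rpow_add hN0, ← Real.rpow_add (by positivity)]
          congr 2
          ring
  rw [intervalIntegral.integral_const_mul] at key
  have h5 : ‖(2 * π)⁻¹‖ ≤ 1 := by
    rw [Real.norm_eq_abs, abs_of_pos (by positivity)]
    exact inv_le_one_of_one_le₀ (by linarith)
  calc _ ≤ 1 * ((46 * B * H * (N : ℝ) ^ (1 - β)) * ((N : ℝ)⁻¹ * IB β)) := by
        gcongr
        refine key.trans ?_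
        gcongr
    _ = 46 * B * H * IB β * ((N : ℝ) ^ (1 - β) * (N : ℝ) ^ (-1 : ℝ)) := by
        rw [Real.rpow_neg_one]; ring
    _ = _ := by
        rw [← Real.rpow_add hN0]
        congr 2
        ring

theorem TT_mono (N N' : ℕ) (h : N ≤ N') (m : ℤ → E →L[ℂ] F)
    (hm : ∀ n : ℤ, (N : ℤ) < |n| → m n = 0) (f : ℝ → E) (t : ℝ) :
    TT N m f t = TT N' m f t := by
  unfold TT
  apply Finset.sum_subset
  · apply Finset.Icc_subset_Icc <;> omega
  · intro n _ hn
    rw [Finset.mem_Icc, ← abs_le] at hn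
    rw [hm n (by omega)]; simp

theorem TT_sub (N : ℕ) (m m' : ℤ → E →L[ℂ] F) (f : ℝ → E) (t : ℝ) :
    TT N m f t - TT N m' f t = TT N (fun n => m n - m' n) f t := by
  unfold TT
  rw [← Finset.sum_sub_distrib]
  exact Finset.sum_congr rfl fun n _ => by
    rw [← smul_sub]; rfl

theorem TT_smul (N : ℕ) (c : ℂ) (m : ℤ → E →L[ℂ] F) (f : ℝ → E) (t : ℝ) :
    TT N (fun n => c • m n) f t = c • TT N m f t := by
  unfold TT
  rw [Finset.smul_sum]
  exact Finset.sum_congr rfl fun n _ => by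
    rw [_root_.smul_apply, smul_comm]

theorem TT_deriv (N : ℕ) (m : ℤ → E →L[ℂ] F) (f : ℝ → E) (t : ℝ) :
    HasDerivAt (TT N m f) (TT N (fun n : ℤ => (n * Complex.I : ℂ) • m n) f t) t := by
  unfold TT
  refine HasDerivAt.fun_sum fun n _ => ?_
  refine ((hasDerivAt_ch n t).smul_const (m n (fc f n))).congr_deriv ?_
  rw [_root_.smul_apply, smul_smul, mul_comm]

theorem TT_periodic (N : ℕ) (m : ℤ → E →L[ℂ] F) (f : ℝ → E) :
    Function.Periodic (TT N m f) (2 * π) := by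
  intro t
  unfold TT
  exact Finset.sum_congr rfl fun n _ => by rw [ch_periodic n t]

/-- Smooth scalar cutoff functions: uniform difference bounds. -/
theorem smooth_bounds (φ : ℝ → ℝ) (hφ : ContDiff ℝ 2 φ) (hs : ∀ x, 1 ≤ |x| → φ x = 0) :
    ∃ D : ℝ, 0 ≤ D ∧ (∀ x, |φ x| ≤ D) ∧ 
      (∀ x h, |φ (x + 2 * h) - 2 * φ (x + h) + φ x| ≤ D * h ^ 2) ∧
      (φ 0 = 0 → deriv φ 0 = 0 → (∀ x, |φ x| ≤ D * x ^ 2) ∧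
        ∀ x h, |φ (x + h) - φ x| ≤ D * |h| * (|x| + |h|)) := by
  have hcs : HasCompactSupport φ := by
    apply HasCompactSupport.of_support_subset_isCompact (isCompact_Icc (a := (-1 : ℝ)) (b := 1))
    intro x hx
    rw [Set.mem_Icc, ← abs_le]
    by_contra h
    exact hx (hs x (le_of_lt (not_le.mp h)))
  have hd1 : ContDiff ℝ 1 (deriv φ) := by
    have := (contDiff_succ_iff_deriv (n := 1) (f := φ) (𝕜 := ℝ)).mp (by exact_mod_cast hφ)
    exact this.2.2
  have hdd : Differentiable ℝ φ := hφ.differentiable (by norm_num)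
  have hdd1 : Differentiable ℝ (deriv φ) := hd1.differentiable (by norm_num)
  obtain ⟨D0, hD0⟩ := hcs.exists_bound_of_continuous hφ.continuous
  obtain ⟨D2, hD2⟩ := hcs.deriv.deriv.exists_bound_of_continuous (hd1.continuous_deriv (by norm_num))
  have hD00 : 0 ≤ D0 := (norm_nonneg _).trans (hD0 0)
  have hD20 : 0 ≤ D2 := (norm_nonneg _).trans (hD2 0)
  have hlip : ∀ x y, |deriv φ y - deriv φ x| ≤ D2 * |y - x| := fun x y =>
    Convex.norm_image_sub_le_of_norm_deriv_le (s := Set.univ) (fun z _ => hdd1 z)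
      (fun z _ => hD2 z) convex_univ (mem_univ _) (mem_univ _)
  have hsecond : ∀ x h, |φ (x + 2 * h) - 2 * φ (x + h) + φ x| ≤ D2 * h ^ 2 := by
    intro x h
    have hg : ∀ z, HasDerivAt (fun z => φ (z + h) - φ z) (deriv φ (z + h) - deriv φ z) z := by
      intro z
      exact ((hdd (z + h)).hasDerivAt.comp_add_const z h).sub (hdd z).hasDerivAt
    have := Convex.norm_image_sub_le_of_norm_hasDerivWithin_le (s := Set.univ)
      (f := fun z => φ (z + h) - φ z) (C := D2 * |h|) (x := x) (y := x + h)
      (fun z _ => (hg z).hasDerivWithinAt)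
      (fun z _ => by simpa using hlip z (z + h)) convex_univ (mem_univ _) (mem_univ _)
    rw [Real.norm_eq_abs, Real.norm_eq_abs] at this
    have e1 : x + h + h = x + 2 * h := by ring
    rw [e1] at this
    have e2 : D2 * |h| * |x + h - x| = D2 * h ^ 2 := by
      rw [add_sub_cancel_left, mul_assoc, abs_mul_abs_self]; ring
    rw [e2] at this
    convert this using 2
    ring
  refine ⟨D0 + D2, by positivity, fun x => (hD0 x).trans (by linarith), fun x h => 
    (hsecond x h).trans (by gcongr; linarith), ?_⟩
  intro h0 h1
  have hfirst : ∀ x h, |φ (x + h) - φ x| ≤ (D0 + D2) * |h| * (|x| + |h|) := by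
    intro x h
    have := Convex.norm_image_sub_le_of_norm_deriv_le (f := φ) (s := Set.uIcc x (x + h))
      (C := D2 * (|x| + |h|)) (x := x) (y := x + h)
      (fun z _ => hdd z) (fun z hz => ?_) (convex_uIcc _ _) left_mem_uIcc right_mem_uIcc
    · rw [Real.norm_eq_abs, Real.norm_eq_abs, add_sub_cancel_left] at this
      refine this.trans ?_
      calc D2 * (|x| + |h|) * |h| = D2 * |h| * (|x| + |h|) := by ring
        _ ≤ _ := by gcongr; linarith
    · have h2 := hlip 0 z
      rw [h1, sub_zero, sub_zero] at h2
      refine h2.trans ?_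
      gcongr
      have h3 : |z - x| ≤ |h| := by
        have := Set.abs_sub_left_of_mem_uIcc hz
        simpa using this
      calc |z| = |x + (z - x)| := by ring_nf
        _ ≤ |x| + |z - x| := abs_add_le _ _
        _ ≤ _ := by linarith
  refine ⟨fun x => ?_, hfirst⟩
  have := hfirst 0 x
  rw [zero_add, h0, sub_zero, abs_zero, zero_add, mul_assoc, abs_mul_abs_self] at this
  rw [pow_two]; exact this


theorem resolvent_identity (ι A : F →L[ℂ] E) (R : ℤ → E →L[ℂ] F)
    (hR : ∀ (n : ℤ) (v : E), ((n : ℂ) * Complex.I) • ι (R n v) - A (R n v) = v)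
    (hR' : ∀ (n : ℤ) (w : F), R n (((n : ℂ) * Complex.I) • ι w - A w) = w) (p q : ℤ) :
    R p - R q = (((q : ℂ) - p) * Complex.I) • (R p ∘L ι ∘L R q) := by
  ext v
  have h1 : ((p : ℂ) * Complex.I) • ι (R q v) - A (R q v) =
      v - (((q : ℂ) - p) * Complex.I) • ι (R q v) := by
    have h := hR q v
    rw [sub_mul, sub_smul]
    nth_rw 3 [← h]
    abel
  have h2 := hR' p (R q v)
  rw [h1, map_sub, map_smul] at h2
  simp only [_root_.sub_apply, _root_.smul_apply, ContinuousLinearMap.comp_apply]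
  rw [sub_eq_iff_eq_add, add_comm, ← sub_eq_iff_eq_add]
  exact h2

theorem exists_resolvent [CompleteSpace E] [CompleteSpace F] (ι A : F →L[ℂ] E)
    (hgraph : ∀ w : F, ‖w‖ = ‖ι w‖ + ‖A w‖)
    (hres : ∀ n : ℤ, Function.Bijective (fun w : F => ((n : ℂ) * Complex.I) • ι w - A w))
    (hbd : ∃ M : ℝ, ∀ (n : ℤ) (w : F),
      |(n : ℝ)| * ‖ι w‖ ≤ M * ‖((n : ℂ) * Complex.I) • ι w - A w‖) :
    ∃ (R : ℤ → E →L[ℂ] F) (C : ℝ), 0 ≤ C ∧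
      (∀ (n : ℤ) (v : E), ((n : ℂ) * Complex.I) • ι (R n v) - A (R n v) = v) ∧
      (∀ (n : ℤ) (w : F), R n (((n : ℂ) * Complex.I) • ι w - A w) = w) ∧
      (∀ n, ‖R n‖ ≤ C) ∧ (∀ n, ‖ι ∘L R n‖ ≤ C / (1 + |(n : ℝ)|)) := by
  have h1 : ∀ n : ℤ, ∃ R : E →L[ℂ] F,
      (∀ (v : E), ((n : ℂ) * Complex.I) • ι (R v) - A (R v) = v) ∧
      (∀ (w : F), R (((n : ℂ) * Complex.I) • ι w - A w) = w) := by
    intro n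
    let L : F →L[ℂ] E := ((n : ℂ) * Complex.I) • ι - A
    have hL : ∀ w, L w = ((n : ℂ) * Complex.I) • ι w - A w := fun w => rfl
    let e := ContinuousLinearEquiv.ofBijective L
      (LinearMap.ker_eq_bot.mpr (hres n).1) (LinearMap.range_eq_top.mpr (hres n).2)
    refine ⟨e.symm, fun v => ?_, fun w => ?_⟩
    · rw [← hL]; exact e.apply_symm_apply v
    · rw [← hL]; exact e.symm_apply_apply w
  choose R hR hR' using h1
  obtain ⟨M, hM⟩ := hbd
  have hM0 : ∀ (n : ℤ) (v : E), |(n : ℝ)| * ‖ι (R n v)‖ ≤ |M| * ‖v‖ := by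
    intro n v
    have := hM n (R n v)
    rw [hR] at this
    exact this.trans (by gcongr; exact le_abs_self M)
  have hA : ∀ (n : ℤ) (v : E), ‖A (R n v)‖ ≤ (|M| + 1) * ‖v‖ := by
    intro n v
    have h2 : A (R n v) = ((n : ℂ) * Complex.I) • ι (R n v) - v := by
      nth_rw 3 [← hR n v]; abel
    rw [h2]
    refine (norm_sub_le _ _).trans ?_
    have : ‖((n : ℂ) * Complex.I) • ι (R n v)‖ = |(n : ℝ)| * ‖ι (R n v)‖ := by
      rw [norm_smul, norm_mul, Complex.norm_I, mul_one, Complex.norm_intCast]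
    rw [this]
    linarith [hM0 n v]
  have hι : ∀ (n : ℤ) (v : E), (1 + |(n : ℝ)|) * ‖ι (R n v)‖ ≤ (2 * |M| + ‖ι ∘L R 0‖) * ‖v‖ := by
    intro n v
    by_cases hn : n = 0
    · subst hn
      have := (ι ∘L R 0).le_opNorm v
      simp only [Int.cast_zero, abs_zero, add_zero, one_mul]
      refine this.trans ?_
      gcongr
      linarith [abs_nonneg M]
    · have h3 : (1 : ℝ) ≤ |(n : ℝ)| := by
        have := Int.one_le_abs hn
        exact_mod_cast this
      have h4 := hM0 n v
      calc (1 + |(n : ℝ)|) * ‖ι (R n v)‖ ≤ (|(n : ℝ)| + |(n : ℝ)|) * ‖ι (R n v)‖ := by gcongr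
        _ ≤ 2 * |M| * ‖v‖ := by linarith
        _ ≤ _ := by gcongr; linarith [norm_nonneg (ι ∘L R 0)]
  refine ⟨R, 3 * |M| + 1 + ‖ι ∘L R 0‖, by positivity, hR, hR', fun n => ?_, fun n => ?_⟩
  · refine ContinuousLinearMap.opNorm_le_bound _ (by positivity) fun v => ?_
    rw [hgraph]
    have h5 : ‖ι (R n v)‖ ≤ (1 + |(n : ℝ)|) * ‖ι (R n v)‖ :=
      le_mul_of_one_le_left (norm_nonneg _) (by linarith [abs_nonneg (n : ℝ)])
    linarith [hι n v, hA n v]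
  · refine ContinuousLinearMap.opNorm_le_bound _ (by positivity) fun v => ?_
    rw [div_mul_eq_mul_div, le_div_iff₀ (by positivity), mul_comm]
    refine (hι n v).trans ?_
    gcongr
    linarith [abs_nonneg M]

theorem symbol_bound (ι A : F →L[ℂ] E) (R : ℤ → E →L[ℂ] F) (C : ℝ) (hC : 0 ≤ C)
    (hR : ∀ (n : ℤ) (v : E), ((n : ℂ) * Complex.I) • ι (R n v) - A (R n v) = v)
    (hR' : ∀ (n : ℤ) (w : F), R n (((n : ℂ) * Complex.I) • ι w - A w) = w)
    (hRC : ∀ n, ‖R n‖ ≤ C) (hιRC : ∀ n, ‖ι ∘L R n‖ ≤ C / (1 + |(n : ℝ)|))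
    (φ : ℝ → ℝ) (hφ : ContDiff ℝ 2 φ) (hs : ∀ x, 1 ≤ |x| → φ x = 0)
    (h0 : φ 0 = 0) (h0' : deriv φ 0 = 0) :
    ∃ B : ℝ, 0 ≤ B ∧ ∀ N : ℕ, 1 ≤ N → ∀ m : ℤ → E →L[ℂ] F,
      (∀ n : ℤ, m n = ((φ (n / N) : ℝ) : ℂ) • R n) → 
      (∀ n : ℤ, (N : ℤ) < |n| → m n = 0) ∧ (∀ n, ‖m n‖ ≤ B) ∧
      ∀ n, ‖m (n + 2) - (2 : ℂ) • m (n + 1) + m n‖ ≤ B / (N : ℝ) ^ 2 := by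
  obtain ⟨D, hD, hb, hb2, hb3⟩ := smooth_bounds φ hφ hs
  obtain ⟨hb0, hb1⟩ := hb3 h0 h0'
  refine ⟨D * (16 * C ^ 3 + 4 * C ^ 2 + C), by positivity, fun N hN m hm => ?_⟩
  have hN0 : (0 : ℝ) < N := by exact_mod_cast hN
  refine ⟨fun n hn => ?_, fun n => ?_, fun n => ?_⟩
  · rw [hm, hs, Complex.ofReal_zero, zero_smul]
    rw [abs_div, Nat.abs_cast, one_le_div hN0]
    exact_mod_cast hn.le
  · rw [hm, norm_smul, Complex.norm_real]
    have := hb (n / N)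
    have h2 := hRC n
    calc ‖φ (n / N)‖ * ‖R n‖ ≤ D * C := by gcongr; exact this
      _ ≤ _ := by gcongr; nlinarith [pow_nonneg hC 3, pow_nonneg hC 2]
  · set k : ℝ := 1 + |(n : ℝ)| with hk
    have hk0 : 0 < k := by positivity
    have i10 := resolvent_identity ι A R hR hR' (n + 1) n
    have i21 := resolvent_identity ι A R hR hR' (n + 2) (n + 1)
    have i01 := resolvent_identity ι A R hR hR' n (n + 1)
    have i20 := resolvent_identity ι A R hR hR' (n + 2) n
    have d2 : R (n + 2) - (2 : ℂ) • R (n + 1) + R n =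
        (-2 : ℂ) • (R (n + 2) ∘L (ι ∘L R n) ∘L (ι ∘L R (n + 1))) := by
      have e1 : R (n + 2) - (2 : ℂ) • R (n + 1) + R n =
        (R (n + 2) - R (n + 1)) + (R n - R (n + 1)) := by rw [two_smul]; abel
      have e2 : (((n + 1 : ℤ) : ℂ) - (n + 2 : ℤ)) * Complex.I = - Complex.I := by push_cast; ring
      have e3 : (((n + 1 : ℤ) : ℂ) - (n : ℤ)) * Complex.I = Complex.I := by push_cast; ring
      have e4 : (((n : ℤ) : ℂ) - (n + 2 : ℤ)) * Complex.I = - (2 * Complex.I) := by push_cast; ring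
      rw [e2] at i21
      rw [e3] at i01
      rw [e4] at i20
      rw [e1, i21, i01, neg_smul, neg_add_eq_sub, ← smul_sub, ← ContinuousLinearMap.sub_comp,
        ← neg_sub, i20, neg_smul, neg_neg, ContinuousLinearMap.smul_comp, smul_smul]
      congr 1
      rw [mul_left_comm, Complex.I_mul_I]; ring
    have n1 : |((n + 1 : ℤ) : ℝ)| ≤ k := by
      push_cast; rw [hk]; linarith [abs_add_le (n : ℝ) 1, abs_one (α := ℝ)]
    have n2 : |((n + 2 : ℤ) : ℝ)| ≤ 2 * k := by
      push_cast; rw [hk]; linarith [abs_add_le (n : ℝ) 2, abs_two (α := ℝ), abs_nonneg (n : ℝ)]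
    have n3 : k ≤ 2 * (1 + |((n + 1 : ℤ) : ℝ)|) := by
      push_cast; rw [hk]
      have := abs_add_le ((n : ℝ) + 1) (-1)
      rw [add_neg_cancel_right, abs_neg, abs_one] at this
      linarith [abs_nonneg ((n : ℝ) + 1)]
    have b2 : ‖R (n + 2) - (2 : ℂ) • R (n + 1) + R n‖ ≤ 4 * C ^ 3 / k ^ 2 := by
      rw [d2, norm_smul, norm_neg, Complex.norm_two]
      have : ‖ι ∘L R (n + 1)‖ ≤ 2 * C / k := by
        refine (hιRC (n + 1)).trans ?_
        rw [div_le_div_iff₀ (by positivity) hk0]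
        nlinarith
      calc 2 * ‖R (n + 2) ∘L (ι ∘L R n) ∘L (ι ∘L R (n + 1))‖
          ≤ 2 * (‖R (n + 2)‖ * (‖ι ∘L R n‖ * ‖ι ∘L R (n + 1)‖)) := by
            gcongr
            refine (ContinuousLinearMap.opNorm_comp_le _ _).trans ?_
            gcongr
            exact ContinuousLinearMap.opNorm_comp_le _ _
        _ ≤ 2 * (C * (C / k * (2 * C / k))) := by
            gcongr
            · exact hRC _
            · exact hιRC n
        _ = _ := by field_simp; ring
    have b1 : ‖R (n + 1) - R n‖ ≤ C ^ 2 / k := by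
      rw [i10]
      have e5 : (((n : ℤ) : ℂ) - (n + 1 : ℤ)) * Complex.I = - Complex.I := by push_cast; ring
      rw [e5, norm_smul, norm_neg, Complex.norm_I, one_mul]
      calc ‖R (n + 1) ∘L ι ∘L R n‖ ≤ ‖R (n + 1)‖ * ‖ι ∘L R n‖ :=
            ContinuousLinearMap.opNorm_comp_le _ _
        _ ≤ C * (C / k) := by
            gcongr
            · exact hRC _
            · exact hιRC n
        _ = _ := by ring
    set a0 : ℝ := φ (n / N) with ha0
    set a1 : ℝ := φ ((n + 1 : ℤ) / N) with ha1
    set a2 : ℝ := φ ((n + 2 : ℤ) / N) with ha2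
    have c2 : |a2| ≤ D * (4 * k ^ 2) / N ^ 2 := by
      refine (hb0 _).trans ?_
      rw [div_pow, mul_div_assoc]
      gcongr
      rw [← sq_abs]
      calc |((n + 2 : ℤ) : ℝ)| ^ 2 ≤ (2 * k) ^ 2 := by gcongr
        _ = _ := by ring
    have c1 : |a2 - a1| ≤ D * (2 * k) / N ^ 2 := by
      have := hb1 ((n + 1 : ℤ) / N) (1 / N)
      have e6 : ((n + 1 : ℤ) : ℝ) / N + 1 / N = (n + 2 : ℤ) / N := by push_cast; ring
      rw [e6] at this
      refine this.trans ?_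
      rw [abs_div, abs_div, Nat.abs_cast, abs_one]
      calc D * (1 / N) * (|((n + 1 : ℤ) : ℝ)| / N + 1 / N)
          = D * (|((n + 1 : ℤ) : ℝ)| + 1) / N ^ 2 := by field_simp
        _ ≤ _ := by gcongr; linarith [abs_nonneg (n : ℝ)]
    have c0 : |a2 - 2 * a1 + a0| ≤ D / N ^ 2 := by
      have := hb2 (n / N) (1 / N)
      have e6 : (n : ℝ) / N + 1 / N = (n + 1 : ℤ) / N := by push_cast; ring
      have e7 : (n : ℝ) / N + 2 * (1 / N) = (n + 2 : ℤ) / N := by push_cast; ring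
      rw [e6, e7] at this
      refine this.trans (le_of_eq ?_)
      field_simp
    have dec : m (n + 2) - (2 : ℂ) • m (n + 1) + m n =
        (a2 : ℂ) • (R (n + 2) - (2 : ℂ) • R (n + 1) + R n) +
        ((2 : ℂ) * ((a2 - a1 : ℝ) : ℂ)) • (R (n + 1) - R n) +
        ((a2 - 2 * a1 + a0 : ℝ) : ℂ) • R n := by
      rw [hm, hm, hm, ← ha0, ← ha1, ← ha2]
      generalize R (n + 2) = x
      generalize R (n + 1) = y
      generalize R n = z
      push_cast
      module
    rw [dec]
    refine (norm_add₃_le).trans ?_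
    rw [norm_smul, norm_smul, norm_smul, norm_mul, Complex.norm_real, Complex.norm_real,
      Complex.norm_real, Complex.norm_two]
    calc _ ≤ D * (4 * k ^ 2) / N ^ 2 * (4 * C ^ 3 / k ^ 2) +
          2 * (D * (2 * k) / N ^ 2) * (C ^ 2 / k) + D / N ^ 2 * C := by
          gcongr
          · exact c2
          · exact c1
          · exact c0
          · exact hRC n
      _ = _ := by field_simp; ring


theorem exists_cutoff : ∃ φ : ℝ → ℝ, ContDiff ℝ 2 φ ∧ (∀ x, 1 ≤ |x| → φ x = 0) ∧
    (∀ x, |x| ≤ 1 / 4 → φ x = 1) := by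
  let b : ContDiffBump (0 : ℝ) := ⟨1 / 4, 1, by norm_num, by norm_num⟩
  refine ⟨b, b.contDiff, fun x hx => b.zero_of_le_dist ?_, fun x hx => 
    b.one_of_mem_closedBall ?_⟩
  · simpa using hx
  · rw [mem_closedBall_zero_iff]
    exact hx

theorem MemHolder.nice {β : ℝ} (hβ : β ∈ Set.Ioo (0 : ℝ) 1) {f : ℝ → E} (hf : MemHolder β f) :
    Continuous f ∧ ∃ H : ℝ, 0 ≤ H ∧ ∀ s t : ℝ, ‖f s - f t‖ ≤ H * |s - t| ^ β := by
  obtain ⟨_, C, hC⟩ := hf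
  have h1 : ∀ s t : ℝ, ‖f s - f t‖ ≤ |C| * |s - t| ^ β := fun s t =>
    (hC s t).trans (by gcongr; exact le_abs_self C)
  refine ⟨?_, |C|, abs_nonneg _, h1⟩
  rw [continuous_iff_continuousAt]
  intro t
  rw [ContinuousAt, tendsto_iff_norm_sub_tendsto_zero]
  refine squeeze_zero (fun _ => norm_nonneg _) (fun s => h1 s t) ?_
  have : Continuous fun s : ℝ => |C| * |s - t| ^ β := by
    refine continuous_const.mul (Continuous.rpow_const (by fun_prop) fun _ => Or.inr hβ.1.le)
  have h2 := this.tendsto t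
  simpa [Real.zero_rpow hβ.1.ne'] using h2

theorem pow_cast_rpow (j : ℕ) (a : ℝ) : (((2 ^ j : ℕ) : ℝ)) ^ a = ((2 : ℝ) ^ a) ^ j := by
  push_cast
  rw [← Real.rpow_natCast, ← Real.rpow_natCast, ← Real.rpow_mul (by norm_num),
    ← Real.rpow_mul (by norm_num), mul_comm]

/-- Uniform approximation by the smooth partial sums. -/
theorem approx_id [CompleteSpace E] {β : ℝ} (hβ : β ∈ Set.Ioo (0 : ℝ) 1) (φ : ℝ → ℝ)
    (hφ : ContDiff ℝ 2 φ) (hs : ∀ x, 1 ≤ |x| → φ x = 0) (h1 : ∀ x, |x| ≤ 1 / 4 → φ x = 1)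
    {f : ℝ → E} (hf : MemHolder β f) :
    ∃ C : ℝ, ∀ (j : ℕ) (t : ℝ),
      ‖TT (2 ^ j) (fun n : ℤ => ((φ (n / (2 ^ j : ℕ)) : ℝ) : ℂ) • ContinuousLinearMap.id ℂ E) f t
        - f t‖ ≤ C * ((2 : ℝ) ^ (-β)) ^ j := by
  obtain ⟨D, hD, hb, hb2, -⟩ := smooth_bounds φ hφ hs
  obtain ⟨hc, H, hH, hfH⟩ := hf.nice hβ
  refine ⟨46 * D * H * IB β, fun j t => ?_⟩
  have hN : 1 ≤ 2 ^ j := Nat.one_le_two_pow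
  generalize hN' : (2 ^ j : ℕ) = N at *
  have hN0 : (0 : ℝ) < N := by exact_mod_cast hN
  have hid : ‖ContinuousLinearMap.id ℂ E‖ ≤ 1 := ContinuousLinearMap.norm_id_le
  have := TT_bound β hβ N hN
    (fun n : ℤ => ((φ (n / N) : ℝ) : ℂ) • ContinuousLinearMap.id ℂ E) ?_ D ?_ ?_ f hf.1 hc H hH hfH t
  · rw [← pow_cast_rpow, hN']
    have e : φ (((0 : ℤ) : ℝ) / N) = 1 := h1 _ (by simp)
    simpa only [e, Complex.ofReal_one, one_smul, ContinuousLinearMap.id_apply] using this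
  · intro n hn
    rw [hs, Complex.ofReal_zero, zero_smul]
    rw [abs_div, Nat.abs_cast, one_le_div hN0]
    exact_mod_cast hn.le
  · intro n
    rw [norm_smul, Complex.norm_real]
    calc _ ≤ D * 1 := by gcongr; exact hb _
      _ = D := mul_one D
  · intro n
    have e : ((φ ((n + 2 : ℤ) / N) : ℝ) : ℂ) • ContinuousLinearMap.id ℂ E
        - (2 : ℂ) • ((φ ((n + 1 : ℤ) / N) : ℝ) : ℂ) • ContinuousLinearMap.id ℂ E
        + ((φ (n / N) : ℝ) : ℂ) • ContinuousLinearMap.id ℂ E =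
        ((φ ((n + 2 : ℤ) / N) - 2 * φ ((n + 1 : ℤ) / N) + φ (n / N) : ℝ) : ℂ)
          • ContinuousLinearMap.id ℂ E := by
      generalize ContinuousLinearMap.id ℂ E = x
      push_cast; module
    rw [e, norm_smul, Complex.norm_real]
    have h2 := hb2 (n / N) (1 / N)
    have e6 : (n : ℝ) / N + 1 / N = (n + 1 : ℤ) / N := by push_cast; ring
    have e7 : (n : ℝ) / N + 2 * (1 / N) = (n + 2 : ℤ) / N := by push_cast; ring
    rw [e6, e7] at h2
    calc _ ≤ (D * (1 / N) ^ 2) * 1 := by gcongr; exact h2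
      _ = _ := by field_simp

theorem holder_of_dyadic {β : ℝ} (hβ : β ∈ Set.Ioo (0 : ℝ) 1) (u : ℝ → F) (U : ℕ → ℝ → F)
    (C C' : ℝ) (hC : 0 ≤ C) (hC' : 0 ≤ C')
    (h1 : ∀ j t, ‖U j t - u t‖ ≤ C * ((2 : ℝ) ^ (-β)) ^ j)
    (h2 : ∀ j s t, ‖U j s - U j t‖ ≤ C' * ((2 : ℝ) ^ (1 - β)) ^ j * |s - t|)
    (h0 : ∀ s t, U 0 s = U 0 t) :
    ∀ s t : ℝ, ‖u s - u t‖ ≤ (4 * C + C') * |s - t| ^ β := by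
  intro s t
  have key : ∀ j, ‖u s - u t‖ ≤ 2 * (C * ((2 : ℝ) ^ (-β)) ^ j) + ‖U j s - U j t‖ := by
    intro j
    have e : u s - u t = (U j s - U j t) - (U j s - u s) + (U j t - u t) := by abel
    rw [e]
    refine (norm_add_le _ _).trans ?_
    linarith [norm_sub_le (U j s - U j t) (U j s - u s), h1 j s, h1 j t]
  rcases eq_or_ne s t with rfl | hne
  · simp [Real.zero_rpow hβ.1.ne']
  have hpos : 0 < |s - t| := abs_pos.mpr (sub_ne_zero.mpr hne)
  set h := |s - t| with hh
  rcases lt_or_ge 1 h with hlt | hle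
  · have hk := key 0
    rw [h0 s t, sub_self, norm_zero, pow_zero, mul_one, add_zero] at hk
    have : 1 ≤ h ^ β := Real.one_le_rpow hlt.le hβ.1.le
    calc _ ≤ 2 * C * 1 := by linarith
      _ ≤ (4 * C + C') * h ^ β := by gcongr; linarith
  · obtain ⟨j, hj1, hj2⟩ := exists_nat_pow_near_of_lt_one (x := h) (y := (1 / 2 : ℝ)) hpos hle
      (by norm_num) (by norm_num)
    have p2 : (0 : ℝ) < 2 ^ j := by positivity
    have hk := (key j).trans (add_le_add_right (h2 j s t) _)
    have e1 : ((2 : ℝ) ^ (-β)) ^ j ≤ 2 * h ^ β := by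
      rw [← pow_cast_rpow]
      push_cast
      rw [Real.rpow_neg p2.le, ← Real.inv_rpow p2.le]
      have : ((2 : ℝ) ^ j)⁻¹ ≤ 2 * h := by
        rw [pow_succ, one_div, inv_pow] at hj1
        linarith
      calc (((2 : ℝ) ^ j)⁻¹) ^ β ≤ (2 * h) ^ β := by gcongr; exact hβ.1.le
        _ = 2 ^ β * h ^ β := Real.mul_rpow (by norm_num) hpos.le
        _ ≤ 2 ^ (1 : ℝ) * h ^ β := by gcongr; norm_num; exact hβ.2.le
        _ = _ := by rw [Real.rpow_one]
    have e2 : ((2 : ℝ) ^ (1 - β)) ^ j * h ≤ h ^ β := by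
      rw [← pow_cast_rpow]
      push_cast
      have : h = h ^ (1 - β) * h ^ β := by
        rw [← Real.rpow_add hpos]; simp
      calc ((2 : ℝ) ^ j) ^ (1 - β) * h = ((2 : ℝ) ^ j) ^ (1 - β) * (h ^ (1 - β) * h ^ β) := by
            rw [← this]
        _ = (2 ^ j * h) ^ (1 - β) * h ^ β := by rw [Real.mul_rpow p2.le hpos.le]; ring
        _ ≤ 1 * h ^ β := by
            gcongr
            apply Real.rpow_le_one (by positivity) _ (by linarith [hβ.2])
            rw [one_div, inv_pow] at hj2
            calc 2 ^ j * h ≤ 2 ^ j * (2 ^ j)⁻¹ := by gcongr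
              _ = 1 := mul_inv_cancel₀ p2.ne'
        _ = _ := one_mul _
    calc _ ≤ _ := hk
      _ = 2 * C * ((2 : ℝ) ^ (-β)) ^ j + C' * (((2 : ℝ) ^ (1 - β)) ^ j * h) := by ring
      _ ≤ 2 * C * (2 * h ^ β) + C' * h ^ β := by gcongr
      _ = _ := by ring

theorem dyadic_growth (q C : ℝ) (hq : 1 < q) (hC : 0 ≤ C) (d : ℕ → F) (h0 : d 0 = 0)
    (h : ∀ j, ‖d (j + 1) - d j‖ ≤ C * q ^ (j + 1)) (j : ℕ) :
    ‖d j‖ ≤ C * q / (q - 1) * q ^ j := by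
  have hq1 : 0 < q - 1 := by linarith
  induction j with
  | zero => rw [h0, norm_zero]; positivity
  | succ j ih =>
    have e : d (j + 1) = d j + (d (j + 1) - d j) := by abel
    rw [e]
    refine (norm_add_le _ _).trans ((add_le_add ih (h j)).trans (le_of_eq ?_))
    field_simp
    ring

/-- Existence. -/
theorem existence [CompleteSpace E] [CompleteSpace F] (ι A : F →L[ℂ] E) 
    (hgraph : ∀ w : F, ‖w‖ = ‖ι w‖ + ‖A w‖)
    {β : ℝ} (hβ : β ∈ Set.Ioo (0 : ℝ) 1)
    (hres : ∀ n : ℤ, Function.Bijective (fun w : F => ((n : ℂ) * Complex.I) • ι w - A w))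
    (hbd : ∃ M : ℝ, ∀ (n : ℤ) (w : F),
      |(n : ℝ)| * ‖ι w‖ ≤ M * ‖((n : ℂ) * Complex.I) • ι w - A w‖)
    (f : ℝ → E) (hf : MemHolder β f) :
    ∃ u : ℝ → F, MemHolder β u ∧ ∀ t : ℝ, HasDerivAt (fun s : ℝ => ι (u s)) (A (u t) + f t) t := by
  obtain ⟨R, CR, hCR, hR, hR', hRC, hιRC⟩ := exists_resolvent ι A hgraph hres hbd
  obtain ⟨φ, hφ, hs, h1⟩ := exists_cutoff
  obtain ⟨hc, H, hH, hfH⟩ := hf.nice hβ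
  obtain ⟨Cid, hid⟩ := approx_id hβ φ hφ hs h1 hf
  -- the two auxiliary cutoffs
  let η : ℝ → ℝ := fun x => φ x - φ (2 * x)
  let ζ : ℝ → ℝ := fun x => x * η x
  have hη : ContDiff ℝ 2 η := hφ.sub (hφ.comp (contDiff_const.mul contDiff_id))
  have hζ : ContDiff ℝ 2 ζ := contDiff_id.mul hη
  have hηs : ∀ x, 1 ≤ |x| → η x = 0 := by
    intro x hx
    simp only [η]
    rw [hs x hx, hs (2 * x) (by rw [abs_mul, abs_two]; linarith), sub_zero]
  have hζs : ∀ x, 1 ≤ |x| → ζ x = 0 := fun x hx => by simp only [ζ]; rw [hηs x hx, mul_zero]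
  have hη0 : ∀ x, |x| ≤ 1 / 8 → η x = 0 := by
    intro x hx
    simp only [η]
    rw [h1 x (by linarith), h1 (2 * x) (by rw [abs_mul, abs_two]; linarith), sub_self]
  have hη1 : η =ᶠ[nhds 0] fun _ => 0 := by
    have : Metric.ball (0 : ℝ) (1 / 8) ∈ nhds (0 : ℝ) := Metric.ball_mem_nhds _ (by norm_num)
    filter_upwards [this] with x hx
    apply hη0
    rw [mem_ball_zero_iff] at hx
    exact hx.le
  have hζ1 : ζ =ᶠ[nhds 0] fun _ => 0 := by
    filter_upwards [hη1] with x hx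
    simp only [ζ]; rw [hx, mul_zero]
  have hηd : deriv η 0 = 0 := by rw [hη1.deriv_eq]; simp
  have hζd : deriv ζ 0 = 0 := by rw [hζ1.deriv_eq]; simp
  have hη00 : η 0 = 0 := hη0 0 (by simp)
  have hζ00 : ζ 0 = 0 := by simp [ζ]
  obtain ⟨Bη, hBη, Hη⟩ := symbol_bound ι A R CR hCR hR hR' hRC hιRC η hη hηs hη00 hηd
  obtain ⟨Bζ, hBζ, Hζ⟩ := symbol_bound ι A R CR hCR hR hR' hRC hιRC ζ hζ hζs hζ00 hζd
  have hIB := IB_nonneg β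
  -- approximations
  let m : ℕ → ℤ → E →L[ℂ] F := fun j n => ((φ (n / (2 ^ j : ℕ)) : ℝ) : ℂ) • R n
  let U : ℕ → ℝ → F := fun j => TT (2 ^ j) (m j) f
  let dm : ℕ → ℤ → E →L[ℂ] F := fun j n => (n * Complex.I : ℂ) • m j n
  let dU : ℕ → ℝ → F := fun j => TT (2 ^ j) (dm j) f
  have hmsupp : ∀ j (n : ℤ), ((2 ^ j : ℕ) : ℤ) < |n| → m j n = 0 := by
    intro j n hn
    simp only [m]
    have hN0 : (0 : ℝ) < (2 ^ j : ℕ) := by positivity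
    rw [hs, Complex.ofReal_zero, zero_smul]
    rw [abs_div, Nat.abs_cast, one_le_div hN0]
    exact_mod_cast hn.le
  have hdmsupp : ∀ j (n : ℤ), ((2 ^ j : ℕ) : ℤ) < |n| → dm j n = 0 := by
    intro j n hn
    simp only [dm]
    rw [hmsupp j n hn, smul_zero]
  have hle2 : ∀ j : ℕ, 2 ^ j ≤ 2 ^ (j + 1) := fun j => Nat.pow_le_pow_right (by norm_num) (by omega)
  have hηφ : ∀ (j : ℕ) (n : ℤ), η (n / (2 ^ (j + 1) : ℕ)) =
      φ (n / (2 ^ (j + 1) : ℕ)) - φ (n / (2 ^ j : ℕ)) := by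
    intro j n
    simp only [η]
    congr 2
    push_cast
    rw [pow_succ]; field_simp
  have hUd : ∀ j t, ‖U (j + 1) t - U j t‖ ≤
      (46 * Bη * H * IB β) * ((2 : ℝ) ^ (-β)) ^ (j + 1) := by
    intro j t
    simp only [U]
    rw [TT_mono _ _ (hle2 j) (m j) (hmsupp j), TT_sub]
    have hsym : ∀ n : ℤ, m (j + 1) n - m j n = ((η (n / (2 ^ (j + 1) : ℕ)) : ℝ) : ℂ) • R n := by
      intro n
      rw [hηφ]
      simp only [m]
      rw [← sub_smul]; norm_cast
    obtain ⟨k1, k2, k3⟩ := Hη (2 ^ (j + 1)) Nat.one_le_two_pow (fun n => m (j + 1) n - m j n) hsym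
    have := TT_bound β hβ (2 ^ (j + 1)) Nat.one_le_two_pow _ k1 Bη k2 k3 f hf.1 hc H hH hfH t
    rw [hsym 0, Int.cast_zero, zero_div, hη00, Complex.ofReal_zero, zero_smul, _root_.zero_apply,
      sub_zero, pow_cast_rpow] at this
    exact this
  have hdUd : ∀ j t, ‖dU (j + 1) t - dU j t‖ ≤
      (46 * Bζ * H * IB β) * ((2 : ℝ) ^ (1 - β)) ^ (j + 1) := by
    intro j t
    simp only [dU]
    rw [TT_mono _ _ (hle2 j) (dm j) (hdmsupp j), TT_sub]
    have hsym : ∀ n : ℤ, dm (j + 1) n - dm j n = (((2 ^ (j + 1) : ℕ) : ℂ) * Complex.I) •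
        (((ζ (n / (2 ^ (j + 1) : ℕ)) : ℝ) : ℂ) • R n) := by
      intro n
      simp only [ζ]
      rw [hηφ]
      simp only [dm, m]
      rw [smul_smul, smul_smul, smul_smul, ← sub_smul]
      congr 1
      push_cast
      field_simp
    obtain ⟨k1, k2, k3⟩ := Hζ (2 ^ (j + 1)) Nat.one_le_two_pow _ (fun n => rfl)
    have := TT_bound β hβ (2 ^ (j + 1)) Nat.one_le_two_pow _ k1 Bζ k2 k3 f hf.1 hc H hH hfH t
    rw [Int.cast_zero, zero_div, hζ00, Complex.ofReal_zero, zero_smul, _root_.zero_apply,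
      sub_zero] at this
    simp_rw [hsym]
    rw [TT_smul, norm_smul, norm_mul, Complex.norm_I, mul_one, Complex.norm_natCast]
    have hN0 : (0 : ℝ) < (2 ^ (j + 1) : ℕ) := by positivity
    calc _ ≤ ((2 ^ (j + 1) : ℕ) : ℝ) *
          (46 * Bζ * H * IB β * ((2 ^ (j + 1) : ℕ) : ℝ) ^ (-β)) := by gcongr
      _ = 46 * Bζ * H * IB β *
          (((2 ^ (j + 1) : ℕ) : ℝ) ^ (1 : ℝ) * ((2 ^ (j + 1) : ℕ) : ℝ) ^ (-β)) := by
          rw [Real.rpow_one]; ring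
      _ = _ := by rw [← Real.rpow_add hN0, ← sub_eq_add_neg, pow_cast_rpow]
  have hdU0 : ∀ t, dU 0 t = 0 := by
    intro t
    simp only [dU, TT]
    refine Finset.sum_eq_zero fun n _ => ?_
    by_cases hn : n = 0
    · simp [hn, dm]
    · have : φ (n / (2 ^ 0 : ℕ)) = 0 := by
        apply hs
        have := Int.one_le_abs hn
        simp only [pow_zero, Nat.cast_one, div_one]
        exact_mod_cast this
      simp only [dm, m]
      rw [this]; simp
  set r : ℝ := (2 : ℝ) ^ (-β) with hr
  set q : ℝ := (2 : ℝ) ^ (1 - β) with hq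
  have hr1 : r < 1 := Real.rpow_lt_one_of_one_lt_of_neg (by norm_num) (by linarith [hβ.1])
  have hr0 : 0 < r := by positivity
  have hq1 : 1 < q := Real.one_lt_rpow (by norm_num) (by linarith [hβ.2])
  set CU : ℝ := 46 * Bη * H * IB β with hCU
  have hCU0 : 0 ≤ CU := by positivity
  set CD : ℝ := 46 * Bζ * H * IB β with hCD
  have hCD0 : 0 ≤ CD := by positivity
  have hdist : ∀ t j, dist (U j t) (U (j + 1) t) ≤ CU * r ^ j := by
    intro t j
    rw [dist_comm, dist_eq_norm]
    refine (hUd j t).trans (mul_le_mul_of_nonneg_left ?_ hCU0)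
    exact pow_le_pow_of_le_one hr0.le hr1.le (Nat.le_succ j)
  have hlim : ∀ t, ∃ w, Tendsto (fun j => U j t) atTop (nhds w) := fun t =>
    cauchySeq_tendsto_of_complete (cauchySeq_of_le_geometric r CU hr1 (hdist t))
  choose u hu using hlim
  have hUu : ∀ j t, ‖U j t - u t‖ ≤ CU / (1 - r) * r ^ j := by
    intro j t
    have := dist_le_of_le_geometric_of_tendsto r CU hr1 (hdist t) (hu t) j
    rw [dist_eq_norm] at this
    refine this.trans (le_of_eq ?_)
    ring
  have h1r : 0 < 1 - r := by linarith
  have hq1' : 0 < q - 1 := by linarith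
  have hdUb : ∀ j t, ‖dU j t‖ ≤ CD * q / (q - 1) * q ^ j := fun j t =>
    dyadic_growth q CD hq1 hCD0 (fun j => dU j t) (hdU0 t) (fun j => hdUd j t) j
  have hUderiv : ∀ j t, HasDerivAt (U j) (dU j t) t := fun j t => TT_deriv (2 ^ j) (m j) f t
  have hUlip : ∀ j (C : ℝ), (∀ t, ‖dU j t‖ ≤ C) → ∀ s t, ‖U j s - U j t‖ ≤ C * |s - t| := by
    intro j C hC s t
    exact Convex.norm_image_sub_le_of_norm_hasDerivWithin_le (s := Set.univ)
      (fun z _ => (hUderiv j z).hasDerivWithinAt) (fun z _ => hC z) convex_univ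
      (mem_univ _) (mem_univ _)
  have hper : Function.Periodic u (2 * π) := by
    intro t
    refine tendsto_nhds_unique (hu (t + 2 * π)) ?_
    have : (fun j => U j (t + 2 * π)) = fun j => U j t := by
      funext j; exact TT_periodic _ _ f t
    rw [this]; exact hu t
  refine ⟨u, ⟨hper, 4 * (CU / (1 - r)) + CD * q / (q - 1), ?_⟩, ?_⟩
  · refine holder_of_dyadic hβ u U _ _ (by positivity) (by positivity) hUu
      (fun j => hUlip j _ (hdUb j)) ?_
    intro s t
    have := hUlip 0 0 (fun t => by rw [hdU0 t, norm_zero]) s t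
    rw [zero_mul] at this
    exact sub_eq_zero.mp (norm_le_zero_iff.mp this)
  · let S : ℕ → ℝ → E := fun j =>
      TT (2 ^ j) (fun n : ℤ => ((φ (n / (2 ^ j : ℕ)) : ℝ) : ℂ) • ContinuousLinearMap.id ℂ E) f
    have hιd : ∀ j t, ι (dU j t) = A (U j t) + S j t := by
      intro j t
      simp only [dU, U, S, TT, map_sum]
      rw [← Finset.sum_add_distrib]
      refine Finset.sum_congr rfl fun n _ => ?_
      simp only [dm, m, _root_.smul_apply, map_smul, ContinuousLinearMap.id_apply]
      rw [← smul_add]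
      congr 1
      nth_rw 3 [← hR n (fc f n)]
      rw [smul_comm, ← smul_add]
      congr 1
      abel
    have hr_tend : ∀ C : ℝ, Tendsto (fun j : ℕ => C * r ^ j) atTop (nhds 0) := by
      intro C
      simpa using (tendsto_pow_atTop_nhds_zero_of_lt_one hr0.le hr1).const_mul C
    have hunif : TendstoUniformly (fun j t => ι (dU j t)) (fun t => A (u t) + f t) atTop := by
      rw [Metric.tendstoUniformly_iff]
      intro ε hε
      have := (hr_tend (‖A‖ * (CU / (1 - r)) + Cid)).eventually (gt_mem_nhds hε)
      filter_upwards [this] with j hj t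
      rw [dist_comm, dist_eq_norm, hιd]
      refine lt_of_le_of_lt ?_ hj
      have e : A (U j t) + S j t - (A (u t) + f t) = A (U j t - u t) + (S j t - f t) := by
        rw [map_sub]; abel
      rw [e]
      refine (norm_add_le _ _).trans ?_
      rw [add_mul, mul_assoc]
      gcongr
      · refine (A.le_opNorm _).trans ?_
        gcongr
        exact hUu j t
      · exact hid j t
    refine hasDerivAt_of_tendstoUniformly (f := fun j s => ι (U j s)) hunif ?_ ?_
    · refine Eventually.of_forall fun j t => ?_
      exact (ι.restrictScalars ℝ).hasFDerivAt.comp_hasDerivAt t (hUderiv j t)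
    · intro t
      exact (ι.continuous.tendsto _).comp (hu t)

/-- Uniqueness for the homogeneous problem. -/
theorem uniqueness [CompleteSpace E] [CompleteSpace F] (ι A : F →L[ℂ] E)
    {β : ℝ} (hβ : β ∈ Set.Ioo (0 : ℝ) 1)
    (hres : ∀ n : ℤ, Function.Bijective (fun w : F => ((n : ℂ) * Complex.I) • ι w - A w))
    (w : ℝ → F) (hw : MemHolder β w)
    (hd : ∀ t : ℝ, HasDerivAt (fun s : ℝ => ι (w s)) (A (w t)) t) (t : ℝ) : w t = 0 := by
  obtain ⟨hc, -⟩ := hw.nice hβ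
  obtain ⟨φ, hφ, hs, h1⟩ := exists_cutoff
  obtain ⟨C, hC⟩ := approx_id hβ φ hφ hs h1 hw
  have hfc : ∀ n, fc w n = 0 := by
    intro n
    have hint : IntervalIntegrable (fun s => ch (-n) s • w s) volume (-π) π :=
      ((continuous_ch _).smul hc).intervalIntegrable _ _
    have hparts := intervalIntegral.integral_smul_deriv_eq_deriv_smul (a := -π) (b := π)
      (u := ch (-n)) (v := fun s => ι (w s))
      (fun x _ => hasDerivAt_ch (-n) x) (fun x _ => hd x)
      ((continuous_const.mul (continuous_ch (-n))).intervalIntegrable _ _)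
      ((A.continuous.comp hc).intervalIntegrable _ _)
    have hp1 : ch (-n) π = ch (-n) (-π) := by
      have := ch_periodic (-n) (-π)
      rw [← this]; congr 1; ring
    have hp2 : w π = w (-π) := by
      have := hw.1 (-π)
      rw [← this]; congr 1; ring
    rw [hp1, hp2, sub_self, zero_sub] at hparts
    have e1 : ∫ s in (-π)..π, ch (-n) s • A (w s) = A (∫ s in (-π)..π, ch (-n) s • w s) := by
      rw [← ContinuousLinearMap.intervalIntegral_comp_comm _ hint]
      simp only [map_smul]
    have e2 : ∫ s in (-π)..π, (((-n : ℤ) : ℂ) * Complex.I * ch (-n) s) • ι (w s) =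
        (((-n : ℤ) : ℂ) * Complex.I) • ι (∫ s in (-π)..π, ch (-n) s • w s) := by
      rw [← ContinuousLinearMap.intervalIntegral_comp_comm _ hint, ← intervalIntegral.integral_smul]
      simp only [map_smul, smul_smul]
    rw [e1, e2] at hparts
    have hz : ∫ s in (-π)..π, ch (-n) s • w s = 0 := by
      apply (hres n).1
      simp only [map_zero, smul_zero, sub_zero]
      rw [hparts]
      push_cast
      rw [neg_mul, neg_smul, neg_neg, sub_self]
    rw [fc, hz, smul_zero]
  have hb : ∀ j : ℕ, ‖w t‖ ≤ C * ((2 : ℝ) ^ (-β)) ^ j := by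
    intro j
    have := hC j t
    simpa [TT, hfc] using this
  have hr1 : (2 : ℝ) ^ (-β) < 1 := 
    Real.rpow_lt_one_of_one_lt_of_neg (by norm_num) (by linarith [hβ.1])
  have ht : Tendsto (fun j : ℕ => C * ((2 : ℝ) ^ (-β)) ^ j) atTop (nhds 0) := by
    simpa using (tendsto_pow_atTop_nhds_zero_of_lt_one (by positivity) hr1).const_mul C
  exact norm_le_zero_iff.mp (ge_of_tendsto' ht hb)

end Aux

/-- **Proposition 3.5.** Let `𝒱` be a complex Banach space and `𝒜` a closed linear operator
on `𝒱` (whose domain `W = 𝒟(𝒜)` carries the graph norm) with `iℤ ⊆ ρ(𝒜)` and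
`sup {‖n (in - 𝒜)⁻¹‖ : n ∈ ℤ} < ∞`.  Then for each `f ∈ C^β_{2π}(ℝ, 𝒱)` there exists a
unique `2π`-periodic solution `u ∈ C^{1+β}_{2π}(ℝ, 𝒱) ∩ C^β_{2π}(ℝ, 𝒟(𝒜))` of
`u_t = 𝒜u + f(t)` for `t ∈ ℝ`. -/
theorem periodic_solution_exists_unique
    {𝒱 : Type*} [NormedAddCommGroup 𝒱] [NormedSpace ℂ 𝒱] [CompleteSpace 𝒱]
    {W : Type*} [NormedAddCommGroup W] [NormedSpace ℂ W] [CompleteSpace W]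
    -- `W = 𝒟(𝒜) ⊆ 𝒱` via the continuous injective inclusion `ιW`, with the graph norm:
    (ιW 𝒜 : W →L[ℂ] 𝒱) (hιW : Function.Injective ιW)
    (hgraph : ∀ w : W, ‖w‖ = ‖ιW w‖ + ‖𝒜 w‖)
    (β : ℝ) (hβ : β ∈ Set.Ioo (0 : ℝ) 1)
    -- `iℤ ⊆ ρ(𝒜)`:
    (hres : ∀ n : ℤ, Function.Bijective
      (fun w : W => ((n : ℂ) * Complex.I) • ιW w - 𝒜 w))
    -- `sup {‖n (in - 𝒜)⁻¹‖ : n ∈ ℤ} < ∞`: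
    (hbd : ∃ M : ℝ, ∀ (n : ℤ) (w : W),
      |(n : ℝ)| * ‖ιW w‖ ≤ M * ‖((n : ℂ) * Complex.I) • ιW w - 𝒜 w‖) :
    ∀ f : ℝ → 𝒱, MemHolder β f →
      ∃! u : ℝ → W, MemHolder β u ∧
        ∀ t : ℝ, HasDerivAt (fun s : ℝ => ιW (u s)) (𝒜 (u t) + f t) t := by
  intro f hf
  obtain ⟨u, hu, hu'⟩ := existence ιW 𝒜 hgraph hβ hres hbd f hf
  refine ⟨u, ⟨hu, hu'⟩, ?_⟩
  rintro v ⟨hv, hv'⟩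
  funext t
  have hw : MemHolder β (fun t => v t - u t) := by
    obtain ⟨pu, Cu, hCu⟩ := hu
    obtain ⟨pv, Cv, hCv⟩ := hv
    refine ⟨fun x => by simp only [pu x, pv x], Cv + Cu, fun s t => ?_⟩
    have e : v s - u s - (v t - u t) = (v s - v t) - (u s - u t) := by abel
    rw [e, add_mul]
    exact (norm_sub_le _ _).trans (add_le_add (hCv s t) (hCu s t))
  refine sub_eq_zero.mp (uniqueness ιW 𝒜 hβ hres (fun t => v t - u t) hw (fun t => ?_) t)
  have := (hv' t).sub (hu' t)
  have e : 𝒜 (v t) + f t - (𝒜 (u t) + f t) = 𝒜 (v t - u t) := by rw [map_sub]; abel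
  rw [e] at this
  refine this.congr_of_eventuallyEq (Eventually.of_forall fun s => ?_)
  simp [map_sub]
end HopfStmt
end
end

section
/- Assume (H2), (H4) and (H5). Then the linear operator T : X_∞ → Y_∞ defined by Tu := u_t − Au is bijective. -/
open Real Filter Set Function MeasureTheory
open scoped ENNReal

noncomputable section

namespace HopfStmt

variable {V : Type*} [NormedAddCommGroup V] [NormedSpace ℝ V]
variable {U : Type*} [NormedAddCommGroup U] [NormedSpace ℝ U]

/-- The `n`-th Fourier coefficient `φ̂(n) = (1/2π) ∫₀^{2π} φ(t) e^{-int} dt ∈ V_c`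
of a periodic `V`-valued function. -/
def fourierC {V : Type*} [NormedAddCommGroup V] [NormedSpace ℝ V] [CompleteSpace V]
    (u : ℝ → V) (n : ℤ) : V × V :=
  ((2 * π)⁻¹ • ∫ t in (0:ℝ)..(2 * π), Real.cos ((n : ℝ) * t) • u t,
    -((2 * π)⁻¹ • ∫ t in (0:ℝ)..(2 * π), Real.sin ((n : ℝ) * t) • u t))

lemma weight_integral (β : ℝ) (hβ0 : 0 < β) (hβ1 : β < 1) :
    ∃ I : ℝ, 0 ≤ I ∧ ∀ N : ℝ, 0 < N →
      ∫ s in (-π)..π, N / (1 + N ^ 2 * s ^ 2) * |s| ^ β ≤ I * N ^ (-β) := by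
  have hInt0 : Integrable (fun x : ℝ => (1 + ‖x‖ ^ 2) ^ (-(2 - β) / 2)) volume :=
    integrable_rpow_neg_one_add_norm_sq (by simp; linarith)
  refine ⟨∫ x : ℝ, (1 + ‖x‖ ^ 2) ^ (-(2 - β) / 2), integral_nonneg (fun x => by positivity), ?_⟩
  intro N hN
  have hpt : ∀ s : ℝ, N / (1 + N ^ 2 * s ^ 2) * |s| ^ β ≤
      N ^ (-β) * (N * (1 + ‖N * s‖ ^ 2) ^ (-(2 - β) / 2)) := by
    intro s
    have h0 : (1 : ℝ) + ‖N * s‖ ^ 2 = 1 + N ^ 2 * s ^ 2 := by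
      rw [Real.norm_eq_abs, sq_abs]; ring
    rw [h0]
    set q : ℝ := 1 + N ^ 2 * s ^ 2 with hq
    have hq0 : 0 < q := by positivity
    have h1 : |s| ^ β = N ^ (-β) * (N ^ 2 * s ^ 2) ^ (β / 2) := by
      have : N ^ 2 * s ^ 2 = (N * |s|) ^ (2 : ℝ) := by
        rw [Real.rpow_two, mul_pow, sq_abs]
      rw [this, ← Real.rpow_mul (by positivity), show (2 : ℝ) * (β / 2) = β by ring,
        Real.mul_rpow hN.le (abs_nonneg s), ← mul_assoc, ← Real.rpow_add hN]
      simp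
    have h2 : (N ^ 2 * s ^ 2) ^ (β / 2) ≤ q ^ (β / 2) :=
      Real.rpow_le_rpow (by positivity) (by linarith) (by linarith)
    have h3 : q ^ (-(2 - β) / 2) = q ^ (β / 2) / q := by
      rw [show -(2 - β) / 2 = β / 2 - 1 by ring, Real.rpow_sub hq0, Real.rpow_one]
    rw [h1, h3]
    have : N / q * (N ^ (-β) * (N ^ 2 * s ^ 2) ^ (β / 2)) ≤ N / q * (N ^ (-β) * q ^ (β / 2)) := by
      gcongr
    refine this.trans (le_of_eq ?_)
    ring
  have hint2 : Integrable (fun s : ℝ => N ^ (-β) * (N * (1 + ‖N * s‖ ^ 2) ^ (-(2 - β) / 2))) volume :=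
    ((hInt0.comp_mul_left' hN.ne').const_mul N).const_mul _
  have hI : ∫ s : ℝ, N ^ (-β) * (N * (1 + ‖N * s‖ ^ 2) ^ (-(2 - β) / 2)) =
      (∫ x : ℝ, (1 + ‖x‖ ^ 2) ^ (-(2 - β) / 2)) * N ^ (-β) := by
    rw [integral_const_mul, integral_const_mul,
      Measure.integral_comp_mul_left (fun x : ℝ => (1 + ‖x‖ ^ 2) ^ (-(2 - β) / 2)) N,
      abs_of_pos (inv_pos.2 hN), smul_eq_mul]
    field_simp
  have hle : -π ≤ π := by linarith [pi_pos]
  have hcont : Continuous (fun s : ℝ => N / (1 + N ^ 2 * s ^ 2) * |s| ^ β) := by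
    refine Continuous.mul ?_ ?_
    · refine continuous_const.div (by fun_prop) (fun s => by positivity)
    · exact continuous_abs.rpow_const (fun s => Or.inr hβ0.le)
  calc ∫ s in (-π)..π, N / (1 + N ^ 2 * s ^ 2) * |s| ^ β
      ≤ ∫ s in (-π)..π, N ^ (-β) * (N * (1 + ‖N * s‖ ^ 2) ^ (-(2 - β) / 2)) :=
        intervalIntegral.integral_mono_on hle (hcont.intervalIntegrable _ _)
          hint2.intervalIntegrable (fun s _ => hpt s)
    _ ≤ ∫ s : ℝ, N ^ (-β) * (N * (1 + ‖N * s‖ ^ 2) ^ (-(2 - β) / 2)) := by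
        rw [intervalIntegral.integral_of_le hle]
        exact setIntegral_le_integral hint2 (Eventually.of_forall (fun s => by positivity))
    _ = _ := hI

/-- Summing dyadic blocks gives Hölder continuity. -/
lemma holder_of_dyadic_s16 {E : Type*} [NormedAddCommGroup E] [CompleteSpace E]
    (β : ℝ) (hβ0 : 0 < β) (hβ1 : β < 1) (a : ℝ) (ha : 0 ≤ a) (G : ℕ → ℝ → E)
    (h1 : ∀ j t, ‖G j t‖ ≤ a * ((2 : ℝ) ^ j) ^ (-β))
    (h2 : ∀ j t s, ‖G j t - G j s‖ ≤ a * ((2 : ℝ) ^ j) ^ (1 - β) * |t - s|) :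
    Summable (fun j : ℕ => a * ((2 : ℝ) ^ j) ^ (-β)) ∧
    ∃ C : ℝ, ∀ t s, ‖(∑' j, G j t) - ∑' j, G j s‖ ≤ C * |t - s| ^ β := by
  set r : ℝ := (2 : ℝ) ^ (-β) with hr
  set q : ℝ := (2 : ℝ) ^ (1 - β) with hq
  have hr0 : 0 < r := by positivity
  have hr1 : r < 1 := Real.rpow_lt_one_of_one_lt_of_neg (by norm_num) (by linarith)
  have hq1 : 1 < q := Real.one_lt_rpow (by norm_num) (by linarith)
  have hrj : ∀ j : ℕ, ((2 : ℝ) ^ j) ^ (-β) = r ^ j := by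
    intro j
    rw [hr, ← Real.rpow_natCast, ← Real.rpow_natCast, ← Real.rpow_mul (by norm_num),
      ← Real.rpow_mul (by norm_num), mul_comm]
  have hqj : ∀ j : ℕ, ((2 : ℝ) ^ j) ^ (1 - β) = q ^ j := by
    intro j
    rw [hq, ← Real.rpow_natCast, ← Real.rpow_natCast, ← Real.rpow_mul (by norm_num),
      ← Real.rpow_mul (by norm_num), mul_comm]
  simp only [hrj, hqj] at h1 h2 ⊢
  have hsr : Summable (fun j : ℕ => r ^ j) := summable_geometric_of_lt_one hr0.le hr1
  have hs : Summable (fun j : ℕ => a * r ^ j) := hsr.mul_left a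
  have hG : ∀ t, Summable (fun j => G j t) := fun t => Summable.of_norm_bounded hs (fun j => h1 j t)
  refine ⟨hs, 2 * a * (1 - r)⁻¹ + a * q / (q - 1), ?_⟩
  have h1r : 0 < 1 - r := by linarith
  have hq1' : 0 < q - 1 := by linarith
  intro t s
  rw [← (hG t).tsum_sub (hG s)]
  set D : ℕ → E := fun j => G j t - G j s with hD
  have hDs : Summable D := (hG t).sub (hG s)
  have hDn : ∀ j, ‖D j‖ ≤ 2 * a * r ^ j := by
    intro j
    have := norm_sub_le (G j t) (G j s)
    have := h1 j t
    have := h1 j s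
    simp only [hD]; linarith
  have hs2 : Summable (fun j : ℕ => 2 * a * r ^ j) := hsr.mul_left _
  rcases eq_or_ne t s with rfl | hts
  · simp [hD, Real.zero_rpow hβ0.ne']
  set h : ℝ := |t - s| with hh
  have hh0 : 0 < h := abs_pos.2 (sub_ne_zero.2 hts)
  rcases le_or_gt 1 h with h1h | h1h
  · have e1 : ‖∑' j, D j‖ ≤ ∑' j : ℕ, 2 * a * r ^ j :=
      tsum_of_norm_bounded hs2.hasSum hDn
    rw [tsum_mul_left, tsum_geometric_of_lt_one hr0.le hr1] at e1
    have e2 : 1 ≤ h ^ β := Real.one_le_rpow h1h hβ0.le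
    have e3 : 0 ≤ a * q / (q - 1) := by positivity
    have e4 : 0 ≤ 2 * a * (1 - r)⁻¹ := by positivity
    nlinarith
  · obtain ⟨J, hJ1, hJ2⟩ := exists_nat_pow_near (x := h⁻¹) (y := 2)
      ((one_le_inv₀ hh0).2 h1h.le) (by norm_num)
    have e0 : ∑' j, D j = ∑ j ∈ Finset.range (J + 1), D j + ∑' j, D (j + (J + 1)) :=
      (hDs.sum_add_tsum_nat_add (J + 1)).symm
    have e1 : ‖∑ j ∈ Finset.range (J + 1), D j‖ ≤ a * q / (q - 1) * h ^ β := by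
      have f1 : ‖∑ j ∈ Finset.range (J + 1), D j‖ ≤ ∑ j ∈ Finset.range (J + 1), a * q ^ j * h :=
        norm_sum_le_of_le _ (fun j _ => h2 j t s)
      rw [← Finset.sum_mul, ← Finset.mul_sum, geom_sum_eq hq1.ne'] at f1
      have f2 : q ^ J * h ≤ h ^ β := by
        rw [← hqj]
        have : ((2 : ℝ) ^ J) ^ (1 - β) ≤ (h⁻¹) ^ (1 - β) :=
          Real.rpow_le_rpow (by positivity) hJ1 (by linarith)
        calc ((2 : ℝ) ^ J) ^ (1 - β) * h ≤ (h⁻¹) ^ (1 - β) * h := by gcongr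
          _ = h ^ β := by
            rw [Real.inv_rpow hh0.le, ← Real.rpow_neg hh0.le]
            nth_rewrite 2 [← Real.rpow_one h]
            rw [← Real.rpow_add hh0]; congr 1; ring
      calc _ ≤ a * ((q ^ (J + 1) - 1) / (q - 1)) * h := f1
        _ ≤ a * (q ^ (J + 1) / (q - 1)) * h := by gcongr; linarith
        _ = a * q / (q - 1) * (q ^ J * h) := by rw [pow_succ]; ring
        _ ≤ _ := by gcongr
    have e2 : ‖∑' j, D (j + (J + 1))‖ ≤ 2 * a * (1 - r)⁻¹ * h ^ β := by
      have f0 : HasSum (fun j : ℕ => 2 * a * r ^ (J + 1) * r ^ j) (2 * a * r ^ (J + 1) * (1 - r)⁻¹) :=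
        (hasSum_geometric_of_lt_one hr0.le hr1).mul_left _
      have f1 : ‖∑' j, D (j + (J + 1))‖ ≤ 2 * a * r ^ (J + 1) * (1 - r)⁻¹ := by
        refine tsum_of_norm_bounded f0 (fun j => (hDn _).trans (le_of_eq ?_))
        rw [pow_add]; ring
      have f2 : r ^ (J + 1) ≤ h ^ β := by
        rw [← hrj, Real.rpow_neg (by positivity), ← Real.inv_rpow (by positivity)]
        refine Real.rpow_le_rpow (by positivity) ?_ hβ0.le
        exact inv_le_of_inv_le₀ hh0 hJ2.le
      calc _ ≤ 2 * a * r ^ (J + 1) * (1 - r)⁻¹ := f1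
        _ = 2 * a * (1 - r)⁻¹ * r ^ (J + 1) := by ring
        _ ≤ _ := by gcongr
    rw [e0]
    calc _ ≤ _ := norm_add_le _ _
      _ ≤ _ := add_le_add e1 e2
      _ = _ := by ring

/-- Uniqueness of Fourier coefficients. -/
lemma fourier_unique {E : Type*} [NormedAddCommGroup E] [NormedSpace ℝ E] [CompleteSpace E]
    (f : ℝ → E) (hf : Continuous f) (hp : Function.Periodic f (2 * π))
    (hc : ∀ n : ℕ, ∫ t in (0:ℝ)..(2 * π), Real.cos (n * t) • f t = 0)
    (hs : ∀ n : ℕ, ∫ t in (0:ℝ)..(2 * π), Real.sin (n * t) • f t = 0) : ∀ t, f t = 0 := by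
  intro t₀
  by_contra hne
  obtain ⟨ℓ, -, hℓ⟩ := exists_dual_vector ℝ (f t₀) (norm_ne_zero_iff.2 hne)
  set g : ℝ → ℝ := fun t => ℓ (f t) with hg
  have hgc : Continuous g := ℓ.continuous.comp hf
  have hcg : ∀ n : ℕ, ∫ t in (0:ℝ)..(2 * π), Real.cos (n * t) * g t = 0 := by
    intro n
    have := ℓ.intervalIntegral_comp_comm (μ := volume) (a := 0) (b := 2 * π)
      (f := fun t => Real.cos (n * t) • f t)
      (Continuous.intervalIntegrable (by fun_prop) _ _)
    rw [hc n] at this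
    simpa using this
  have hsg : ∀ n : ℕ, ∫ t in (0:ℝ)..(2 * π), Real.sin (n * t) * g t = 0 := by
    intro n
    have := ℓ.intervalIntegral_comp_comm (μ := volume) (a := 0) (b := 2 * π)
      (f := fun t => Real.sin (n * t) • f t)
      (Continuous.intervalIntegrable (by fun_prop) _ _)
    rw [hs n] at this
    simpa using this
  have : Fact (0 < 2 * π) := ⟨by positivity⟩
  have hgp : Function.Periodic (fun t => (g t : ℂ)) (2 * π) := fun t => by simp [hg, hp t]
  let F : C(AddCircle (2 * π), ℂ) := ⟨hgp.lift, by
    rw [continuous_coinduced_dom]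
    exact Complex.continuous_ofReal.comp hgc⟩
  have hF : ∀ t : ℝ, F (t : AddCircle (2 * π)) = (g t : ℂ) := fun t => rfl
  have hcoef : ∀ n : ℤ, fourierCoeff F n = 0 := by
    intro n
    rw [fourierCoeff_eq_intervalIntegral _ n 0]
    have e : ∀ t : ℝ, fourier (-n) (t : AddCircle (2 * π)) • F (t : AddCircle (2 * π)) =
        ((Real.cos (n * t) * g t : ℝ) : ℂ) - Complex.I * ((Real.sin (n * t) * g t : ℝ) : ℂ) := by
      intro t
      rw [hF, fourier_coe_apply]
      have : 2 * (π : ℂ) * Complex.I * ((-n : ℤ) : ℂ) * t / ((2 * π : ℝ) : ℂ) =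
          -((n * t : ℝ) : ℂ) * Complex.I := by
        have : (π : ℂ) ≠ 0 := by exact_mod_cast pi_ne_zero
        push_cast; field_simp
      rw [this, Complex.exp_mul_I, Complex.cos_neg, Complex.sin_neg]
      push_cast
      rw [smul_eq_mul]; ring
    have hcn : ∫ t in (0:ℝ)..(2 * π), Real.cos (n * t) * g t = 0 := by
      rcases Int.natAbs_eq n with h | h <;> rw [h]
      · simpa using hcg n.natAbs
      · simpa [Real.cos_neg] using hcg n.natAbs
    have hsn : ∫ t in (0:ℝ)..(2 * π), Real.sin (n * t) * g t = 0 := by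
      rcases Int.natAbs_eq n with h | h <;> rw [h]
      · simpa using hsg n.natAbs
      · simpa [Real.sin_neg] using hsg n.natAbs
    have hz : ∫ x in (0:ℝ)..(0 + 2 * π), fourier (-n) (x : AddCircle (2 * π)) • F (x : AddCircle (2 * π)) = 0 := by
      simp_rw [e]
      rw [zero_add, intervalIntegral.integral_sub, intervalIntegral.integral_const_mul,
        intervalIntegral.integral_ofReal, intervalIntegral.integral_ofReal, hcn, hsn]
      · simp
      · exact Continuous.intervalIntegrable (by fun_prop) _ _
      · exact Continuous.intervalIntegrable (by fun_prop) _ _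
    rw [hz, smul_zero]
  have hsum : Summable (fourierCoeff F) := by
    have : fourierCoeff F = fun _ => 0 := funext hcoef
    rw [this]; exact summable_zero
  have hH := hasSum_fourier_series_of_summable hsum
  simp only [hcoef, zero_smul] at hH
  have hF0 : F = 0 := hH.unique hasSum_zero
  have : (g t₀ : ℂ) = 0 := by rw [← hF, hF0]; rfl
  have h0 : g t₀ = 0 := by exact_mod_cast this
  rw [hg] at h0
  simp only [hℓ] at h0
  exact hne (norm_eq_zero.1 (by simpa using h0))

section blocks
variable {F : Type*} [NormedAddCommGroup F] [NormedSpace ℝ F]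

/-- second difference -/
def dd (c : ℕ → F) (n : ℕ) : F := c (n + 2) - (2 : ℝ) • c (n + 1) + c n

/-- A coefficient block at scale `N`, supported in `(N, 4 * N)`. -/
structure Blk (N : ℕ) (C : ℝ) (c : ℕ → F) : Prop where
  low : ∀ n, n ≤ N → c n = 0
  high : ∀ n, 4 * N ≤ n → c n = 0
  bd : ∀ n, ‖c n‖ ≤ C
  d1 : ∀ n, ‖c (n + 1) - c n‖ ≤ C / N
  d2 : ∑ n ∈ Finset.range (4 * N), ‖dd c n‖ ≤ C / N

/-- Symbol type bounds on the scale `N`. -/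
structure Loc (N : ℕ) (C : ℝ) (S : ℕ → F) : Prop where
  bd : ∀ n, n ≤ 4 * N + 1 → ‖S n‖ ≤ C
  d1 : ∀ n, N ≤ n + 1 → n ≤ 4 * N → ‖S (n + 1) - S n‖ ≤ C / N
  d2 : ∀ n, N ≤ n + 1 → n < 4 * N → ‖dd S n‖ ≤ C / N ^ 2

lemma Blk.smul {N : ℕ} (hN : 1 ≤ N) {C D : ℝ} (hC : 0 ≤ C) (hD : 0 ≤ D) {ψ : ℕ → ℝ} {S : ℕ → F}
    (hψ : Blk N C ψ) (hS : Loc N D S) : Blk N (13 * C * D) (fun n => ψ n • S n) := by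
  have hN0 : (0 : ℝ) < N := by exact_mod_cast hN
  have hCD : 0 ≤ C * D := mul_nonneg hC hD
  refine ⟨fun n hn => by simp [hψ.low n hn], fun n hn => by simp [hψ.high n hn], ?_, ?_, ?_⟩
  · intro n
    rcases le_or_gt (4 * N) n with h | h
    · simp [hψ.high n h]; linarith
    · rw [norm_smul]
      have := mul_le_mul (hψ.bd n) (hS.bd n (by omega)) (norm_nonneg _) hC
      linarith
  · intro n
    have hpos : 0 ≤ 13 * C * D / N := by rw [mul_assoc]; positivity
    rcases le_or_gt (4 * N) n with h | h
    · simp [hψ.high n h, hψ.high (n + 1) (by omega)]; linarith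
    rcases lt_or_ge (n + 1) N with h' | h'
    · simp [hψ.low n (by omega), hψ.low (n + 1) (by omega)]; linarith
    have e : ψ (n + 1) • S (n + 1) - ψ n • S n
        = (ψ (n + 1) - ψ n) • S (n + 1) + ψ n • (S (n + 1) - S n) := by module
    rw [e]
    refine (norm_add_le _ _).trans ?_
    rw [norm_smul, norm_smul]
    have h1 := mul_le_mul (hψ.d1 n) (hS.bd (n + 1) (by omega)) (norm_nonneg _) (by positivity)
    have h2 := mul_le_mul (hψ.bd n) (hS.d1 n h' h.le) (norm_nonneg _) hC
    have h3 : C / N * D + C * (D / N) = 2 * (C * D / N) := by ring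
    have h4 : 13 * C * D / N = 13 * (C * D / N) := by ring
    have h5 : 0 ≤ C * D / N := by positivity
    linarith
  · have key : ∀ n ∈ Finset.range (4 * N), ‖dd (fun n => ψ n • S n) n‖ ≤
        3 * C * D / N ^ 2 * (if N ≤ n + 1 then 1 else 0) + D * ‖dd ψ n‖ := by
      intro n hn
      have hn' := Finset.mem_range.1 hn
      split_ifs with h
      · have e : dd (fun n => ψ n • S n) n = ψ (n + 1) • dd S n +
            (ψ (n + 2) - ψ (n + 1)) • ((S (n + 2) - S (n + 1)) + (S (n + 1) - S n))
            + dd ψ n • S n := by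
          simp only [dd, smul_eq_mul]; module
        rw [e]
        refine (norm_add₃_le).trans ?_
        rw [norm_smul, norm_smul, norm_smul]
        have h1 := mul_le_mul (hψ.bd (n + 1)) (hS.d2 n h hn') (norm_nonneg _) hC
        have h2a : ‖(S (n + 2) - S (n + 1)) + (S (n + 1) - S n)‖ ≤ D / N + D / N :=
          (norm_add_le _ _).trans
            (add_le_add (hS.d1 (n + 1) (by omega) (by omega)) (hS.d1 n h hn'.le))
        have h2 := mul_le_mul (hψ.d1 (n + 1)) h2a (norm_nonneg _) (by positivity)
        have h3 := mul_le_mul_of_nonneg_left (hS.bd n (by omega)) (norm_nonneg (dd ψ n))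
        have h4 : C * (D / N ^ 2) + C / N * (D / N + D / N) = 3 * C * D / N ^ 2 := by
          field_simp; ring
        linarith
      · have h1 : dd (fun n => ψ n • S n) n = 0 := by
          simp [dd, hψ.low n (by omega), hψ.low (n + 1) (by omega), hψ.low (n + 2) (by omega)]
        rw [h1]; simp; positivity
    refine (Finset.sum_le_sum key).trans ?_
    rw [Finset.sum_add_distrib, ← Finset.mul_sum, ← Finset.mul_sum]
    have h1 : ∑ n ∈ Finset.range (4 * N), (if N ≤ n + 1 then (1:ℝ) else 0) ≤ 4 * N := by
      refine (Finset.sum_le_sum (g := fun _ => (1:ℝ)) (fun n _ => by split_ifs <;> norm_num)).trans ?_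
      simp
    have h2 : 3 * C * D / N ^ 2 * ∑ n ∈ Finset.range (4 * N), (if N ≤ n + 1 then (1:ℝ) else 0) ≤
        3 * C * D / N ^ 2 * (4 * N) := by
      refine mul_le_mul_of_nonneg_left h1 ?_
      rw [mul_assoc]; positivity
    have h3 := mul_le_mul_of_nonneg_left hψ.d2 hD
    have h4 : 3 * C * D / N ^ 2 * (4 * N) + D * (C / N) = 13 * C * D / N := by
      field_simp; ring
    linarith

lemma Loc_id {N : ℕ} (hN : 1 ≤ N) : Loc N 5 (fun n : ℕ => (n : ℝ) / N) := by
  have hN0 : (1 : ℝ) ≤ N := by exact_mod_cast hN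
  refine ⟨?_, ?_, ?_⟩
  · intro n hn
    have : (n : ℝ) ≤ 4 * N + 1 := by exact_mod_cast hn
    rw [Real.norm_eq_abs, abs_of_nonneg (by positivity), div_le_iff₀ (by linarith)]
    linarith
  · intro n _ _
    have : ((n + 1 : ℕ) : ℝ) / N - n / N = 1 / N := by push_cast; ring
    rw [this, Real.norm_eq_abs, abs_of_nonneg (by positivity)]
    gcongr; norm_num
  · intro n _ _
    have : dd (fun n : ℕ => (n : ℝ) / N) n = 0 := by
      simp only [dd, smul_eq_mul]; push_cast; ring
    rw [this, norm_zero]; positivity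

/-- truncated linear function -/
def tau (M n : ℕ) : ℝ := ((M - n : ℕ) : ℝ)

lemma tau_of_le {M n : ℕ} (h : n ≤ M) : tau M n = M - n := by
  rw [tau, Nat.cast_sub h]

lemma tau_of_ge {M n : ℕ} (h : M ≤ n) : tau M n = 0 := by
  rw [tau, Nat.sub_eq_zero_of_le h]; simp

lemma tau_d1 (M n : ℕ) : |tau M (n + 1) - tau M n| ≤ 1 := by
  rcases le_or_gt M n with h | h
  · rw [tau_of_ge h, tau_of_ge (by omega)]; simp
  · rw [tau_of_le h.le, tau_of_le (by omega)]; push_cast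
    rw [show (M : ℝ) - (n + 1) - (M - n) = -1 by ring]; simp

lemma tau_dd (M n : ℕ) : dd (tau M) n = if n + 1 = M then 1 else 0 := by
  simp only [dd, smul_eq_mul]
  split_ifs with h
  · rw [tau_of_ge (n := n + 2) (by omega), tau_of_ge (n := n + 1) (by omega), tau_of_le (by omega), ← h]
    push_cast; ring
  · rcases le_or_gt M n with h' | h'
    · rw [tau_of_ge h', tau_of_ge (n := n + 2) (by omega), tau_of_ge (n := n + 1) (by omega)]; ring
    · rw [tau_of_le h'.le, tau_of_le (n := n + 2) (by omega), tau_of_le (n := n + 1) (by omega)]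
      push_cast; ring

lemma tau_dd_sum (M K : ℕ) : ∑ n ∈ Finset.range K, ‖dd (tau M) n‖ ≤ 1 := by
  have e : ∀ n, ‖dd (tau M) n‖ = if n + 1 = M then 1 else 0 := by
    intro n; rw [tau_dd]; split_ifs <;> simp
  simp_rw [e]
  rcases M with _ | M
  · simp
  · simp only [add_left_inj]
    rw [Finset.sum_ite_eq']
    split_ifs <;> norm_num

/-- the cutoff -/
def chi (N n : ℕ) : ℝ := (tau (2 * N) n - tau N n) / N

def phi (N n : ℕ) : ℝ := chi (2 * N) n - chi N n

lemma phi_eq (N n : ℕ) : phi N n =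
    (tau (4 * N) n * (1 / 2) - tau (2 * N) n * (3 / 2) + tau N n) * (1 / N) := by
  rw [phi, chi, chi, show 2 * (2 * N) = 4 * N by ring]
  rcases eq_or_ne N 0 with rfl | h
  · simp
  have : (N : ℝ) ≠ 0 := by exact_mod_cast h
  push_cast; field_simp; ring

lemma phi_blk {N : ℕ} (hN : 1 ≤ N) : Blk N 3 (phi N) := by
  have hN0 : (1 : ℝ) ≤ N := by exact_mod_cast hN
  have hN1 : (0 : ℝ) < N := by linarith
  refine ⟨?_, ?_, ?_, ?_, ?_⟩
  · intro n hn
    rw [phi_eq, tau_of_le hn, tau_of_le (M := 2 * N) (by omega), tau_of_le (M := 4 * N) (by omega)]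
    push_cast; ring
  · intro n hn
    rw [phi_eq, tau_of_ge hn, tau_of_ge (M := 2 * N) (by omega), tau_of_ge (M := N) (by omega)]
    ring
  · intro n
    rw [phi_eq, norm_mul, Real.norm_eq_abs, Real.norm_eq_abs, abs_of_pos (by positivity : 0 < 1 / (N : ℝ)),
      mul_one_div, div_le_iff₀ hN1]
    rcases le_or_gt n N with h | h
    · rw [tau_of_le h, tau_of_le (M := 2 * N) (by omega), tau_of_le (M := 4 * N) (by omega)]
      push_cast
      rw [show (4 * (N : ℝ) - n) * (1 / 2) - (2 * N - n) * (3 / 2) + (N - n) = 0 by ring]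
      simp
    have h0 : (N : ℝ) < n := by exact_mod_cast h
    rcases le_or_gt n (2 * N) with h1 | h1
    · have h2 : (n : ℝ) ≤ 2 * N := by exact_mod_cast h1
      rw [tau_of_ge h.le, tau_of_le h1, tau_of_le (M := 4 * N) (by omega)]
      push_cast
      rw [abs_le]; constructor <;> linarith
    rcases le_or_gt n (4 * N) with h2 | h2
    · have h3 : (n : ℝ) ≤ 4 * N := by exact_mod_cast h2
      rw [tau_of_ge h.le, tau_of_ge h1.le, tau_of_le h2]
      push_cast
      rw [abs_le]; constructor <;> linarith
    · rw [tau_of_ge h.le, tau_of_ge h1.le, tau_of_ge h2.le]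
      simp
  · intro n
    rw [phi_eq, phi_eq, ← sub_mul, norm_mul, Real.norm_eq_abs, Real.norm_eq_abs,
      abs_of_pos (by positivity : 0 < 1 / (N : ℝ)), mul_one_div]
    gcongr
    have h1 := abs_le.1 (tau_d1 (4 * N) n)
    have h2 := abs_le.1 (tau_d1 (2 * N) n)
    have h3 := abs_le.1 (tau_d1 N n)
    rw [abs_le]; constructor <;> linarith
  · have e : ∀ n ∈ Finset.range (4 * N), ‖dd (phi N) n‖ ≤
        (‖dd (tau (4 * N)) n‖ * (1 / 2) + ‖dd (tau (2 * N)) n‖ * (3 / 2) + ‖dd (tau N) n‖) * (1 / N) := by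
      intro n _
      have : dd (phi N) n = (dd (tau (4 * N)) n * (1 / 2) - dd (tau (2 * N)) n * (3 / 2)
          + dd (tau N) n) * (1 / N) := by
        simp only [dd, phi_eq, smul_eq_mul]; ring
      rw [this, norm_mul, Real.norm_eq_abs (1 / (N : ℝ)), abs_of_pos (by positivity : 0 < 1 / (N : ℝ))]
      gcongr
      refine (norm_add_le _ _).trans ?_
      gcongr
      refine (norm_sub_le _ _).trans ?_
      rw [norm_mul, norm_mul]
      norm_num
    refine (Finset.sum_le_sum e).trans ?_
    rw [← Finset.sum_mul, Finset.sum_add_distrib, Finset.sum_add_distrib, ← Finset.sum_mul,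
      ← Finset.sum_mul, mul_one_div]
    gcongr
    have h1 := tau_dd_sum (4 * N) (4 * N)
    have h2 := tau_dd_sum (2 * N) (4 * N)
    have h3 := tau_dd_sum N (4 * N)
    linarith

lemma phi_hasSum (n : ℕ) : HasSum (fun j : ℕ => phi (2 ^ j) n) (if 2 ≤ n then 1 else 0) := by
  have htel : ∀ m, ∑ j ∈ Finset.range m, phi (2 ^ j) n = chi (2 ^ m) n - chi 1 n := by
    intro m
    induction m with
    | zero => simp
    | succ m ih =>
      rw [Finset.sum_range_succ, ih, phi, show 2 * 2 ^ m = 2 ^ (m + 1) by ring]; ring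
  have hchi : ∀ N, 1 ≤ N → n ≤ N → chi N n = 1 := by
    intro N h1 h2
    have hN0 : (N : ℝ) ≠ 0 := by positivity
    rw [chi, tau_of_le h2, tau_of_le (by omega)]; push_cast; field_simp; ring
  have hz : ∀ j ∉ Finset.range n, phi (2 ^ j) n = 0 := by
    intro j hj
    have : n ≤ j := by simpa using hj
    exact (phi_blk Nat.one_le_two_pow).low n (this.trans (Nat.lt_two_pow_self).le)
  have h : HasSum (fun j : ℕ => phi (2 ^ j) n) (∑ j ∈ Finset.range n, phi (2 ^ j) n) :=
    hasSum_sum_of_ne_finset_zero hz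
  rw [htel, hchi _ Nat.one_le_two_pow (Nat.lt_two_pow_self).le] at h
  convert h using 1
  split_ifs with h2
  · rw [chi, tau_of_ge (by omega), tau_of_ge (by omega)]; simp
  · rw [hchi 1 le_rfl (by omega)]; simp

end blocks

section kernel
variable {W : Type*} [NormedAddCommGroup W] [NormedSpace ℝ W]

/-- `e^{iθ}` for the complex structure `J`. -/
def Ee (J : W →L[ℝ] W) (θ : ℝ) : W →L[ℝ] W := Real.cos θ • 1 + Real.sin θ • J

lemma Ee_apply (J : W →L[ℝ] W) (θ : ℝ) (w : W) : Ee J θ w = Real.cos θ • w + Real.sin θ • J w := by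
  simp [Ee]

lemma Ee_add {J : W →L[ℝ] W} (hJ : J * J = -1) (a b : ℝ) : Ee J (a + b) = Ee J a * Ee J b := by
  simp only [Ee, Real.cos_add, Real.sin_add, mul_add, add_mul, smul_mul_smul_comm, one_mul, mul_one, hJ]
  module

lemma Ee_add_apply {J : W →L[ℝ] W} (hJ : J * J = -1) (a b : ℝ) (w : W) :
    Ee J (a + b) w = Ee J a (Ee J b w) := by
  rw [Ee_add hJ]; rfl

lemma Ee_norm {J : W →L[ℝ] W} (hJ1 : ‖J‖ ≤ 1) (θ : ℝ) : ‖Ee J θ‖ ≤ 2 := by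
  have h1 : ‖Real.cos θ • (1 : W →L[ℝ] W)‖ ≤ 1 := by
    rw [norm_smul]
    have : ‖(1 : W →L[ℝ] W)‖ ≤ 1 := ContinuousLinearMap.norm_id_le
    exact mul_le_one₀ (Real.abs_cos_le_one θ) (norm_nonneg _) this
  have h2 : ‖Real.sin θ • J‖ ≤ 1 := by
    rw [norm_smul]
    exact mul_le_one₀ (Real.abs_sin_le_one θ) (norm_nonneg _) hJ1
  exact (norm_add_le _ _).trans (by linarith)

lemma Ee_cont (J : W →L[ℝ] W) : Continuous (Ee J) := by
  unfold Ee; fun_prop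

lemma Ee_hasDerivAt {J : W →L[ℝ] W} (hJ : J * J = -1) (n : ℝ) (t : ℝ) :
    HasDerivAt (fun t => Ee J (n * t)) (n • (J * Ee J (n * t))) t := by
  have h1 : HasDerivAt (fun t : ℝ => n * t) n t := by simpa using (hasDerivAt_id t).const_mul n
  have h := (h1.cos.smul_const (1 : W →L[ℝ] W)).add (h1.sin.smul_const J)
  have e : n • (J * Ee J (n * t)) = (-Real.sin (n * t) * n) • (1 : W →L[ℝ] W)
      + (Real.cos (n * t) * n) • J := by
    simp only [Ee, mul_add, mul_smul_comm, mul_one, hJ]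
    module
  rw [e]; exact h

lemma Ee_rec {J : W →L[ℝ] W} (n : ℕ) (s : ℝ) :
    (2 * Real.cos s) • Ee J ((n + 1 : ℕ) * s) = Ee J ((n + 2 : ℕ) * s) + Ee J (n * s) := by
  have h1 : ((n + 2 : ℕ) : ℝ) * s = (n + 1 : ℕ) * s + s := by push_cast; ring
  have h2 : (n : ℝ) * s = (n + 1 : ℕ) * s - s := by push_cast; ring
  rw [h1, h2]
  simp only [Ee, Real.cos_add, Real.sin_add, Real.cos_sub, Real.sin_sub]
  module

/-- The kernel. -/
def Kc (J : W →L[ℝ] W) (c : ℕ → W →L[ℝ] W) (m : ℕ) (s : ℝ) : W →L[ℝ] W :=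
  ∑ n ∈ Finset.range m, c n * Ee J (n * s)

lemma Kc_parts (J : W →L[ℝ] W) (c : ℕ → W →L[ℝ] W) (s : ℝ) (m : ℕ) :
    ∑ n ∈ Finset.range m, dd c n * Ee J ((n + 1 : ℕ) * s)
      + (2 - 2 * Real.cos s) • ∑ n ∈ Finset.range m, c (n + 1) * Ee J ((n + 1 : ℕ) * s)
    = c (m + 1) * Ee J (m * s) - c 1 * Ee J ((0 : ℕ) * s) + c 0 * Ee J ((1 : ℕ) * s)
      - c m * Ee J ((m + 1 : ℕ) * s) := by
  induction m with
  | zero => simp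
  | succ m ih =>
    rw [Finset.sum_range_succ, Finset.sum_range_succ, smul_add]
    have h := Ee_rec (J := J) m s
    have h2 : (2 - 2 * Real.cos s) • (c (m + 1) * Ee J ((m + 1 : ℕ) * s)) =
        (2 : ℝ) • (c (m + 1) * Ee J ((m + 1 : ℕ) * s)) -
          c (m + 1) * (Ee J ((m + 2 : ℕ) * s) + Ee J (m * s)) := by
      rw [← h, sub_smul, mul_smul_comm]
    rw [h2]
    have h3 : dd c m * Ee J ((m + 1 : ℕ) * s) = c (m + 2) * Ee J ((m + 1 : ℕ) * s)
        - (2 : ℝ) • (c (m + 1) * Ee J ((m + 1 : ℕ) * s)) + c m * Ee J ((m + 1 : ℕ) * s) := by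
      rw [dd, add_mul, sub_mul, smul_mul_assoc]
    rw [h3, mul_add]
    have h4 : ∀ a b x y z : W →L[ℝ] W, a + b = x → a + y + (b + z) = x + (y + z) := by
      intro a b x y z h; rw [← h]; abel
    rw [h4 _ _ _ _ _ ih]
    abel

lemma Kc_bound {J : W →L[ℝ] W} (hJ1 : ‖J‖ ≤ 1) {N : ℕ} (hN : 1 ≤ N) {C : ℝ} (hC : 0 ≤ C)
    {c : ℕ → W →L[ℝ] W} (hc : Blk N C c) {s : ℝ} (hs : |s| ≤ π) :
    ‖Kc J c (4 * N) s‖ ≤ 16 * C * (N / (1 + (N : ℝ) ^ 2 * s ^ 2)) := by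
  have hN0 : (0 : ℝ) < N := by exact_mod_cast hN
  have hterm : ∀ (T : W →L[ℝ] W) (θ : ℝ), ‖T * Ee J θ‖ ≤ ‖T‖ * 2 := fun T θ =>
    (norm_mul_le _ _).trans (mul_le_mul_of_nonneg_left (Ee_norm hJ1 θ) (norm_nonneg _))
  have h1 : ‖Kc J c (4 * N) s‖ ≤ 8 * C * N := by
    have : ‖Kc J c (4 * N) s‖ ≤ ∑ n ∈ Finset.range (4 * N), C * 2 :=
      norm_sum_le_of_le _ (fun n _ => (hterm _ _).trans
        (mul_le_mul_of_nonneg_right (hc.bd n) (by norm_num)))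
    simp at this
    linarith
  have h2 : (2 - 2 * Real.cos s) * ‖Kc J c (4 * N) s‖ ≤ 2 * C / N := by
    have hp := Kc_parts J c s (4 * N)
    rw [hc.high (4 * N) le_rfl, hc.high (4 * N + 1) (by omega), hc.low 0 (by omega), hc.low 1 hN] at hp
    simp only [zero_mul, sub_zero, add_zero] at hp
    have hK : Kc J c (4 * N) s = ∑ n ∈ Finset.range (4 * N), c (n + 1) * Ee J ((n + 1 : ℕ) * s) := by
      have e1 := Finset.sum_range_succ (fun n : ℕ => c n * Ee J (n * s)) (4 * N)
      have e2 := Finset.sum_range_succ' (fun n : ℕ => c n * Ee J (n * s)) (4 * N)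
      rw [e1, hc.high (4 * N) le_rfl, hc.low 0 (by omega)] at e2
      simpa [Kc] using e2
    rw [← hK] at hp
    have hp2 := eq_neg_of_add_eq_zero_right hp
    have h3 : ‖(2 - 2 * Real.cos s) • Kc J c (4 * N) s‖ ≤ 2 * C / N := by
      rw [hp2, norm_neg]
      refine (norm_sum_le_of_le _ (fun n _ => hterm (dd c n) _)).trans ?_
      rw [← Finset.sum_mul]
      have := hc.d2
      calc _ ≤ C / N * 2 := by gcongr
        _ = _ := by ring
    rwa [norm_smul, Real.norm_eq_abs, abs_of_nonneg (by linarith [Real.cos_le_one s])] at h3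
  have h3 := Real.cos_le_one_sub_mul_cos_sq hs
  set κ := ‖Kc J c (4 * N) s‖ with hκ
  have hκ0 : 0 ≤ κ := norm_nonneg _
  have hpi : π ^ 2 < 10 := by nlinarith [Real.pi_lt_d2, Real.pi_pos]
  have h4 : 4 / 10 * s ^ 2 ≤ 2 - 2 * Real.cos s := by
    have : (2 : ℝ) / 10 * s ^ 2 ≤ 2 / π ^ 2 * s ^ 2 := by gcongr
    linarith
  have h5 : 4 / 10 * s ^ 2 * κ ≤ 2 * C / N := (mul_le_mul_of_nonneg_right h4 hκ0).trans h2
  have h6 : (N : ℝ) ^ 2 * s ^ 2 * κ ≤ 5 * C * N := by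
    have : (N : ℝ) ^ 2 * (4 / 10 * s ^ 2 * κ) ≤ (N : ℝ) ^ 2 * (2 * C / N) := by gcongr
    have e : (N : ℝ) ^ 2 * (2 * C / N) = 2 * C * N := by field_simp
    rw [e] at this; nlinarith
  rw [← mul_div_assoc, le_div_iff₀ (by positivity)]
  nlinarith [mul_nonneg hC hN0.le]

lemma Ee_periodic (J : W →L[ℝ] W) (n : ℕ) (t a : ℝ) :
    Ee J (n * (t + 2 * π) + a) = Ee J (n * t + a) := by
  have : (n : ℝ) * (t + 2 * π) + a = n * t + a + n * (2 * π) := by ring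
  rw [this, Ee, Ee, Real.cos_add_nat_mul_two_pi, Real.sin_add_nat_mul_two_pi]

variable [CompleteSpace W]

/-- Fourier coefficient (times `2π`). -/
def zc (J : W →L[ℝ] W) (Y : ℝ → W) (n : ℕ) : W := ∫ s in (0:ℝ)..(2 * π), Ee J (-(n * s)) (Y s)

def Gc (J : W →L[ℝ] W) (Y : ℝ → W) (c : ℕ → W →L[ℝ] W) (m : ℕ) (t : ℝ) : W :=
  ∑ n ∈ Finset.range m, c n (Ee J (n * t) (zc J Y n))

lemma Gc_periodic (J : W →L[ℝ] W) (Y : ℝ → W) (c : ℕ → W →L[ℝ] W) (m : ℕ) :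
    Function.Periodic (Gc J Y c m) (2 * π) := by
  intro t
  unfold Gc
  refine Finset.sum_congr rfl (fun n _ => ?_)
  have := Ee_periodic J n t 0
  simp only [add_zero] at this
  rw [this]

lemma int_cos_zero (n : ℕ) (hn : n ≠ 0) (a b : ℝ) (hab : b = a + 2 * π) :
    ∫ s in a..b, Real.cos (n * s) = 0 := by
  have hn' : (n : ℝ) ≠ 0 := by exact_mod_cast hn
  rw [intervalIntegral.integral_comp_mul_left (fun x => Real.cos x) hn', integral_cos, hab,
    mul_add, Real.sin_add_nat_mul_two_pi]
  simp

lemma int_sin_zero (n : ℕ) (a b : ℝ) (hab : b = a + 2 * π) :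
    ∫ s in a..b, Real.sin (n * s) = 0 := by
  rcases eq_or_ne n 0 with rfl | hn
  · simp
  have hn' : (n : ℝ) ≠ 0 := by exact_mod_cast hn
  rw [intervalIntegral.integral_comp_mul_left (fun x => Real.sin x) hn', integral_sin, hab,
    mul_add, Real.cos_add_nat_mul_two_pi]
  simp

lemma Ee_conv {J : W →L[ℝ] W} (hJ : J * J = -1) {Y : ℝ → W} (hY : Continuous Y)
    (hp : Function.Periodic Y (2 * π)) (n : ℕ) (hn : n ≠ 0) (t : ℝ) :
    Ee J (n * t) (zc J Y n) = ∫ s in (-π)..π, Ee J (n * s) (Y (t - s) - Y t) := by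
  have hE := Ee_cont J
  have c1 : Continuous (fun s => Ee J (n * s) (Y (t - s))) := by
    exact (hE.comp (by fun_prop)).clm_apply (by fun_prop)
  have c2 : Continuous (fun s => Ee J (n * s) (Y t)) :=
    (hE.comp (by fun_prop)).clm_apply (by fun_prop)
  have c3 : Continuous (fun s => Ee J (-(n * s)) (Y s)) :=
    (hE.comp (by fun_prop)).clm_apply (by fun_prop)
  have hz : ∫ s in (-π)..π, Ee J (n * s) (Y t) = 0 := by
    simp only [Ee_apply]
    rw [intervalIntegral.integral_add (Continuous.intervalIntegrable (by fun_prop) _ _)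
      (Continuous.intervalIntegrable (by fun_prop) _ _), intervalIntegral.integral_smul_const,
      intervalIntegral.integral_smul_const, int_cos_zero n hn _ _ (by ring),
      int_sin_zero n _ _ (by ring)]
    simp
  have e1 : ∫ s in (-π)..π, Ee J (n * s) (Y (t - s) - Y t) =
      ∫ s in (-π)..π, Ee J (n * s) (Y (t - s)) := by
    simp only [map_sub]
    rw [intervalIntegral.integral_sub (c1.intervalIntegrable _ _) (c2.intervalIntegrable _ _), hz, sub_zero]
  have e2 : ∫ s in (-π)..π, Ee J (n * s) (Y (t - s)) =
      ∫ s in (t - π)..(t - π + 2 * π), Ee J (n * (t - s)) (Y s) := by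
    have := intervalIntegral.integral_comp_sub_left (a := -π) (b := π)
      (fun s => Ee J (n * (t - s)) (Y s)) t
    simp only [sub_sub_cancel] at this
    rw [this]; congr 1; ring
  have hper : Function.Periodic (fun s => Ee J (n * (t - s)) (Y s)) (2 * π) := by
    intro s
    have h := Ee_periodic J n (t - (s + 2 * π)) 0
    simp only [add_zero] at h
    simp only [hp s]
    rw [← h]; congr 2; ring
  rw [e1, e2, hper.intervalIntegral_add_eq (t - π) 0, zero_add, zc,
    ← ContinuousLinearMap.intervalIntegral_comp_comm _ (c3.intervalIntegrable _ _)]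
  refine intervalIntegral.integral_congr (fun s _ => ?_)
  change Ee J (n * t) (Ee J (-(n * s)) (Y s)) = Ee J (n * (t - s)) (Y s)
  rw [← Ee_add_apply hJ]; congr 2; ring

lemma Gc_eq {J : W →L[ℝ] W} (hJ : J * J = -1) {Y : ℝ → W} (hY : Continuous Y)
    (hp : Function.Periodic Y (2 * π)) {c : ℕ → W →L[ℝ] W} (hc0 : c 0 = 0) (m : ℕ) (t : ℝ) :
    Gc J Y c m t = ∫ s in (-π)..π, Kc J c m s (Y (t - s) - Y t) := by
  have hE := Ee_cont J
  have c1 : ∀ n : ℕ, Continuous (fun s => Ee J (n * s) (Y (t - s) - Y t)) := fun n =>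
    (hE.comp (by fun_prop)).clm_apply (by fun_prop)
  have e : ∀ s, Kc J c m s (Y (t - s) - Y t) =
      ∑ n ∈ Finset.range m, c n (Ee J (n * s) (Y (t - s) - Y t)) := by
    intro s; simp [Kc]
  simp_rw [e]
  have c2 : ∀ n : ℕ, Continuous (fun s => c n (Ee J (n * s) (Y (t - s) - Y t))) := fun n =>
    (c n).continuous.comp (c1 n)
  rw [intervalIntegral.integral_finsetSum (fun n _ => (c2 n).intervalIntegrable _ _)]
  refine Finset.sum_congr rfl (fun n _ => ?_)
  rw [ContinuousLinearMap.intervalIntegral_comp_comm _ ((c1 n).intervalIntegrable _ _)]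
  rcases eq_or_ne n 0 with rfl | hn
  · simp [hc0]
  · rw [Ee_conv hJ hY hp n hn]

lemma Gc_bound {J : W →L[ℝ] W} (hJ : J * J = -1) (hJ1 : ‖J‖ ≤ 1) {Y : ℝ → W} (hY : Continuous Y)
    (hp : Function.Periodic Y (2 * π)) {β L I : ℝ} (hβ0 : 0 < β) (hL : 0 ≤ L)
    (hYL : ∀ s t, ‖Y s - Y t‖ ≤ L * |s - t| ^ β)
    (hI : ∀ N : ℝ, 0 < N →
      ∫ s in (-π)..π, N / (1 + N ^ 2 * s ^ 2) * |s| ^ β ≤ I * N ^ (-β))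
    {N : ℕ} (hN : 1 ≤ N) {C : ℝ} (hC : 0 ≤ C) {c : ℕ → W →L[ℝ] W} (hc : Blk N C c) (t : ℝ) :
    ‖Gc J Y c (4 * N) t‖ ≤ 16 * C * L * I * (N : ℝ) ^ (-β) := by
  have hN0 : (0 : ℝ) < N := by exact_mod_cast hN
  rw [Gc_eq hJ hY hp (hc.low 0 (by omega))]
  have hcont : Continuous (fun s : ℝ => (N : ℝ) / (1 + (N : ℝ) ^ 2 * s ^ 2) * |s| ^ β) := by
    refine Continuous.mul ?_ ?_
    · refine continuous_const.div (by fun_prop) (fun s => by positivity)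
    · exact continuous_abs.rpow_const (fun s => Or.inr hβ0.le)
  have h := intervalIntegral.norm_integral_le_of_norm_le (a := -π) (b := π) (μ := volume)
    (f := fun s => Kc J c (4 * N) s (Y (t - s) - Y t))
    (g := fun s => 16 * C * L * ((N : ℝ) / (1 + (N : ℝ) ^ 2 * s ^ 2) * |s| ^ β))
    (by linarith [pi_pos]) (Eventually.of_forall (fun s hs => ?_))
    ((hcont.const_mul _).intervalIntegrable _ _)
  · refine h.trans ?_
    rw [intervalIntegral.integral_const_mul, mul_assoc _ I]
    exact mul_le_mul_of_nonneg_left (hI N hN0) (by positivity)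
  · have h1 := Kc_bound hJ1 hN hC hc (s := s) (abs_le.2 ⟨hs.1.le, hs.2⟩)
    have h2 := hYL (t - s) t
    rw [show t - s - t = -s by ring, abs_neg] at h2
    refine (ContinuousLinearMap.le_opNorm _ _).trans ?_
    refine (mul_le_mul h1 h2 (norm_nonneg _) (by positivity)).trans (le_of_eq (by ring))

lemma Gc_hasDerivAt {J : W →L[ℝ] W} (hJ : J * J = -1) (Y : ℝ → W) (c : ℕ → W →L[ℝ] W) (m : ℕ)
    (t : ℝ) : HasDerivAt (Gc J Y c m) (Gc J Y (fun n => (n : ℝ) • (c n * J)) m t) t := by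
  unfold Gc
  refine HasDerivAt.fun_sum (fun n _ => ?_)
  have h := ((Ee_hasDerivAt hJ (n : ℝ) t).clm_apply (hasDerivAt_const t (zc J Y n)))
  have h2 := (c n).hasFDerivAt.comp_hasDerivAt t h
  refine h2.congr_deriv ?_
  simp

end kernel

section orth

lemma int_cosZ (k : ℤ) (hk : k ≠ 0) : ∫ s in (0:ℝ)..(2 * π), Real.cos (k * s) = 0 := by
  rcases Int.natAbs_eq k with h | h <;> rw [h]
  · simpa using int_cos_zero k.natAbs (by omega) 0 (2 * π) (by ring)
  · simpa [Real.cos_neg] using int_cos_zero k.natAbs (by omega) 0 (2 * π) (by ring)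

lemma int_sinZ (k : ℤ) : ∫ s in (0:ℝ)..(2 * π), Real.sin (k * s) = 0 := by
  rcases Int.natAbs_eq k with h | h <;> rw [h]
  · simpa using int_sin_zero k.natAbs 0 (2 * π) (by ring)
  · simpa [Real.sin_neg] using int_sin_zero k.natAbs 0 (2 * π) (by ring)

lemma orth_cc (m n : ℕ) (hn : n ≠ 0) :
    ∫ t in (0:ℝ)..(2 * π), Real.cos (m * t) * Real.cos (n * t) = if n = m then π else 0 := by
  have e : ∀ t : ℝ, Real.cos (m * t) * Real.cos (n * t) =
      (1 / 2) * Real.cos (((m + n : ℤ) : ℝ) * t) + (1 / 2) * Real.cos (((m - n : ℤ) : ℝ) * t) := by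
    intro t; push_cast; rw [add_mul, sub_mul, Real.cos_add, Real.cos_sub]; ring
  simp_rw [e]
  rw [intervalIntegral.integral_add (Continuous.intervalIntegrable (by fun_prop) _ _)
    (Continuous.intervalIntegrable (by fun_prop) _ _), intervalIntegral.integral_const_mul,
    intervalIntegral.integral_const_mul, int_cosZ _ (by omega)]
  split_ifs with h
  · subst h; simp
  · rw [int_cosZ _ (by omega)]; simp

lemma orth_ss (m n : ℕ) (hn : n ≠ 0) :
    ∫ t in (0:ℝ)..(2 * π), Real.sin (m * t) * Real.sin (n * t) = if n = m then π else 0 := by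
  have e : ∀ t : ℝ, Real.sin (m * t) * Real.sin (n * t) =
      (1 / 2) * Real.cos (((m - n : ℤ) : ℝ) * t) - (1 / 2) * Real.cos (((m + n : ℤ) : ℝ) * t) := by
    intro t; push_cast; rw [add_mul, sub_mul, Real.cos_add, Real.cos_sub]; ring
  simp_rw [e]
  rw [intervalIntegral.integral_sub (Continuous.intervalIntegrable (by fun_prop) _ _)
    (Continuous.intervalIntegrable (by fun_prop) _ _), intervalIntegral.integral_const_mul,
    intervalIntegral.integral_const_mul, int_cosZ (m + n) (by omega)]
  split_ifs with h
  · subst h; simp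
  · rw [int_cosZ _ (by omega)]; simp

lemma orth_sc (m n : ℕ) :
    ∫ t in (0:ℝ)..(2 * π), Real.sin (m * t) * Real.cos (n * t) = 0 := by
  have e : ∀ t : ℝ, Real.sin (m * t) * Real.cos (n * t) =
      (1 / 2) * Real.sin (((m + n : ℤ) : ℝ) * t) + (1 / 2) * Real.sin (((m - n : ℤ) : ℝ) * t) := by
    intro t; push_cast; rw [add_mul, sub_mul, Real.sin_add, Real.sin_sub]; ring
  simp_rw [e]
  rw [intervalIntegral.integral_add (Continuous.intervalIntegrable (by fun_prop) _ _)
    (Continuous.intervalIntegrable (by fun_prop) _ _), intervalIntegral.integral_const_mul,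
    intervalIntegral.integral_const_mul, int_sinZ, int_sinZ]
  simp

lemma orth_cs (m n : ℕ) :
    ∫ t in (0:ℝ)..(2 * π), Real.cos (m * t) * Real.sin (n * t) = 0 := by
  have e : (fun t : ℝ => Real.cos (m * t) * Real.sin (n * t)) =
      fun t : ℝ => Real.sin (n * t) * Real.cos (m * t) := by ext t; ring
  rw [e]; exact orth_sc n m

end orth

section mult
variable {W : Type*} [NormedAddCommGroup W] [NormedSpace ℝ W] [CompleteSpace W]

lemma cos_Ee (J : W →L[ℝ] W) (m n : ℕ) (hn : n ≠ 0) (x : W) :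
    ∫ t in (0:ℝ)..(2 * π), Real.cos (m * t) • Ee J (n * t) x = if n = m then π • x else 0 := by
  simp_rw [Ee_apply, smul_add, smul_smul]
  rw [intervalIntegral.integral_add (Continuous.intervalIntegrable (by fun_prop) _ _)
    (Continuous.intervalIntegrable (by fun_prop) _ _), intervalIntegral.integral_smul_const,
    intervalIntegral.integral_smul_const, orth_cc m n hn, orth_cs]
  split_ifs <;> simp

lemma sin_Ee (J : W →L[ℝ] W) (m n : ℕ) (hn : n ≠ 0) (x : W) :
    ∫ t in (0:ℝ)..(2 * π), Real.sin (m * t) • Ee J (n * t) x = if n = m then π • J x else 0 := by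
  simp_rw [Ee_apply, smul_add, smul_smul]
  rw [intervalIntegral.integral_add (Continuous.intervalIntegrable (by fun_prop) _ _)
    (Continuous.intervalIntegrable (by fun_prop) _ _), intervalIntegral.integral_smul_const,
    intervalIntegral.integral_smul_const, orth_ss m n hn, orth_sc]
  split_ifs <;> simp

lemma Gc_trig (J : W →L[ℝ] W) (Y : ℝ → W) {c : ℕ → W →L[ℝ] W} (M m : ℕ) (hc0 : c 0 = 0)
    (hcM : ∀ n, M ≤ n → c n = 0) (θ : ℝ → ℝ) (hθ : Continuous θ) (Q : W →L[ℝ] W)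
    (h : ∀ n : ℕ, n ≠ 0 → ∀ x, ∫ t in (0:ℝ)..(2 * π), θ t • Ee J (n * t) x =
      if n = m then π • Q x else 0) :
    ∫ t in (0:ℝ)..(2 * π), θ t • Gc J Y c M t = π • c m (Q (zc J Y m)) := by
  have hE := Ee_cont J
  have c1 : ∀ (n : ℕ) (x : W), Continuous (fun t => θ t • Ee J (n * t) x) := fun n x =>
    hθ.smul ((hE.comp (by fun_prop)).clm_apply continuous_const)
  have c2 : ∀ (n : ℕ) (x : W), Continuous (fun t => c n (θ t • Ee J (n * t) x)) := fun n x =>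
    (c n).continuous.comp (c1 n x)
  have e : ∀ t, θ t • Gc J Y c M t = ∑ n ∈ Finset.range M, c n (θ t • Ee J (n * t) (zc J Y n)) := by
    intro t; rw [Gc, Finset.smul_sum]; simp
  simp_rw [e]
  rw [intervalIntegral.integral_finsetSum (fun n _ => (c2 n _).intervalIntegrable _ _)]
  have e2 : ∀ n ∈ Finset.range M, ∫ t in (0:ℝ)..(2 * π), c n (θ t • Ee J (n * t) (zc J Y n)) =
      if n = m then π • c m (Q (zc J Y m)) else 0 := by
    intro n _
    rw [ContinuousLinearMap.intervalIntegral_comp_comm _ ((c1 n _).intervalIntegrable _ _)]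
    rcases eq_or_ne n 0 with rfl | hn
    · rw [hc0]; split_ifs with h0
      · rw [← h0, hc0]; simp
      · simp
    · rw [h n hn]
      split_ifs with h0
      · subst h0; simp
      · simp
  rw [Finset.sum_congr rfl e2, Finset.sum_ite_eq']
  split_ifs with h0
  · rfl
  · rw [hcM m (by simpa using h0)]; simp

/-- dyadic piece -/
def Gj (J : W →L[ℝ] W) (Y : ℝ → W) (S : ℕ → W →L[ℝ] W) (j : ℕ) (t : ℝ) : W :=
  Gc J Y (fun n => phi (2 ^ j) n • S n) (4 * 2 ^ j) t

theorem multiplier {J : W →L[ℝ] W} (hJ : J * J = -1) (hJ1 : ‖J‖ ≤ 1) {Y : ℝ → W}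
    (hY : Continuous Y)
    (hp : Function.Periodic Y (2 * π)) {β L : ℝ} (hβ0 : 0 < β) (hβ1 : β < 1) (hL : 0 ≤ L)
    (hYL : ∀ s t, ‖Y s - Y t‖ ≤ L * |s - t| ^ β) (S : ℕ → W →L[ℝ] W) {D : ℝ} (hD : 0 ≤ D)
    (hS : ∀ j : ℕ, Loc (2 ^ j) D S) :
    (∃ u : ℕ → ℝ, Summable u ∧ ∀ j t, ‖Gj J Y S j t‖ ≤ u j) ∧
    (∃ C : ℝ, ∀ t s, ‖(∑' j, Gj J Y S j t) - ∑' j, Gj J Y S j s‖ ≤ C * |t - s| ^ β) := by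
  obtain ⟨I, hI0, hI⟩ := weight_integral β hβ0 hβ1
  set a : ℝ := 16 * (13 * (13 * 3 * 5) * D) * L * I with ha
  have ha0 : 0 ≤ a := by positivity
  have h1 : ∀ j t, ‖Gj J Y S j t‖ ≤ a * ((2 : ℝ) ^ j) ^ (-β) := by
    intro j t
    have hN : 1 ≤ 2 ^ j := Nat.one_le_two_pow
    have hb := (phi_blk hN).smul hN (by norm_num) hD (hS j)
    have := Gc_bound hJ hJ1 hY hp hβ0 hL hYL hI hN (by positivity) hb t
    push_cast at this
    refine this.trans ?_
    refine mul_le_mul_of_nonneg_right ?_ (by positivity)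
    rw [ha]; gcongr; norm_num
  have hder : ∀ j t, HasDerivAt (Gj J Y S j)
      (Gc J Y (fun n => (n : ℝ) • ((phi (2 ^ j) n • S n) * J)) (4 * 2 ^ j) t) t := by
    intro j t
    exact Gc_hasDerivAt hJ Y _ _ t
  have hdb : ∀ j t, ‖Gc J Y (fun n => (n : ℝ) • ((phi (2 ^ j) n • S n) * J)) (4 * 2 ^ j) t‖ ≤
      a * ((2 : ℝ) ^ j) ^ (1 - β) := by
    intro j t
    have hN : 1 ≤ 2 ^ j := Nat.one_le_two_pow
    have hSJ : Loc (2 ^ j) D (fun n => S n * J) := by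
      have hm : ∀ T : W →L[ℝ] W, ‖T * J‖ ≤ ‖T‖ := fun T =>
        (norm_mul_le _ _).trans (mul_le_of_le_one_right (norm_nonneg _) hJ1)
      refine ⟨fun n hn => (hm _).trans ((hS j).bd n hn), fun n h h' => ?_, fun n h h' => ?_⟩
      · rw [← sub_mul]; exact (hm _).trans ((hS j).d1 n h h')
      · have : dd (fun n => S n * J) n = dd S n * J := by
          simp only [dd, add_mul, sub_mul, smul_mul_assoc]
        rw [this]; exact (hm _).trans ((hS j).d2 n h h')
    have hψ := (phi_blk hN).smul hN (by norm_num) (by norm_num) (Loc_id hN)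
    have hb := hψ.smul hN (by norm_num) hD hSJ
    have hbd := Gc_bound hJ hJ1 hY hp hβ0 hL hYL hI hN (by positivity) hb t
    have e : Gc J Y (fun n => (n : ℝ) • ((phi (2 ^ j) n • S n) * J)) (4 * 2 ^ j) t =
        ((2 : ℝ) ^ j) • Gc J Y (fun n => (phi (2 ^ j) n • ((n : ℝ) / ((2 ^ j : ℕ) : ℝ))) • (S n * J))
          (4 * 2 ^ j) t := by
      rw [Gc, Gc, Finset.smul_sum]
      refine Finset.sum_congr rfl (fun n _ => ?_)
      rw [← smul_apply]
      congr 1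
      rw [smul_mul_assoc, smul_smul, smul_smul]
      congr 1
      push_cast
      rw [smul_eq_mul]
      field_simp
    rw [e, norm_smul, Real.norm_eq_abs, abs_of_pos (by positivity)]
    push_cast at hbd ⊢
    have e2 : ((2 : ℝ) ^ j) ^ (1 - β) = (2 : ℝ) ^ j * ((2 : ℝ) ^ j) ^ (-β) := by
      rw [sub_eq_add_neg, Real.rpow_add (by positivity), Real.rpow_one]
    rw [e2]
    calc _ ≤ (2 : ℝ) ^ j * (a * ((2 : ℝ) ^ j) ^ (-β)) := by
          refine mul_le_mul_of_nonneg_left ?_ (by positivity)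
          exact hbd
      _ = _ := by ring
  have h2 : ∀ j t s, ‖Gj J Y S j t - Gj J Y S j s‖ ≤ a * ((2 : ℝ) ^ j) ^ (1 - β) * |t - s| := by
    intro j t s
    have := Convex.norm_image_sub_le_of_norm_hasDerivWithin_le (s := Set.univ) (x := s) (y := t)
      (fun x _ => (hder j x).hasDerivWithinAt) (fun x _ => hdb j x) convex_univ
      (mem_univ _) (mem_univ _)
    simpa [Real.norm_eq_abs] using this
  obtain ⟨hs, C, hC⟩ := holder_of_dyadic_s16 β hβ0 hβ1 a ha0 (Gj J Y S) h1 h2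
  exact ⟨⟨_, hs, h1⟩, C, hC⟩

lemma Gj_cont (J : W →L[ℝ] W) (Y : ℝ → W) (S : ℕ → W →L[ℝ] W) (j : ℕ) : Continuous (Gj J Y S j) := by
  unfold Gj Gc
  refine continuous_finsetSum _ (fun n _ => ?_)
  exact (ContinuousLinearMap.continuous _).comp
    (((Ee_cont J).comp (by fun_prop)).clm_apply continuous_const)

lemma mult_coef (J : W →L[ℝ] W) (Y : ℝ → W) (S : ℕ → W →L[ℝ] W) (u : ℕ → ℝ) (hu : Summable u)
    (hGu : ∀ j t, ‖Gj J Y S j t‖ ≤ u j) (m : ℕ) (θ : ℝ → ℝ) (hθ : Continuous θ)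
    (hθ1 : ∀ t, |θ t| ≤ 1) (Q : W →L[ℝ] W)
    (h : ∀ n : ℕ, n ≠ 0 → ∀ x, ∫ t in (0:ℝ)..(2 * π), θ t • Ee J (n * t) x =
      if n = m then π • Q x else 0) :
    ∫ t in (0:ℝ)..(2 * π), θ t • ∑' j, Gj J Y S j t =
      if 2 ≤ m then π • S m (Q (zc J Y m)) else 0 := by
  have hsum : HasSum (fun j => ∫ t in (0:ℝ)..(2 * π), θ t • Gj J Y S j t)
      (∫ t in (0:ℝ)..(2 * π), θ t • ∑' j, Gj J Y S j t) := by
    refine intervalIntegral.hasSum_integral_of_dominated_convergence (fun j _ => u j)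
      (fun j => (hθ.smul (Gj_cont J Y S j)).aestronglyMeasurable) ?_ ?_ ?_ ?_
    · intro j
      refine Eventually.of_forall (fun t _ => ?_)
      rw [norm_smul]
      have h1 := mul_le_mul (hθ1 t) (hGu j t) (norm_nonneg _) zero_le_one
      rw [one_mul] at h1
      exact h1
    · exact Eventually.of_forall (fun t _ => hu)
    · exact continuous_const.intervalIntegrable _ _
    · refine Eventually.of_forall (fun t _ => ?_)
      exact (Summable.of_norm_bounded hu (fun j => hGu j t)).hasSum.const_smul _
  have e : ∀ j, ∫ t in (0:ℝ)..(2 * π), θ t • Gj J Y S j t =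
      phi (2 ^ j) m • (π • S m (Q (zc J Y m))) := by
    intro j
    have hb := phi_blk (N := 2 ^ j) Nat.one_le_two_pow
    have := Gc_trig J Y (c := fun n => phi (2 ^ j) n • S n) (4 * 2 ^ j) m
      (by simp [hb.low 0]) (fun n hn => by simp [hb.high n hn]) θ hθ Q h
    simp only [Gj]
    rw [this, smul_apply, smul_comm]
  simp_rw [e] at hsum
  have h2 := (phi_hasSum m).smul_const (π • S m (Q (zc J Y m)))
  rw [hsum.unique h2]
  split_ifs <;> simp

end mult

section algebra

lemma res_id {R : Type*} [Ring R] [Algebra ℝ R] (D : R) (a b : ℝ) (Sa Sb : R)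
    (ha : Sa * (a • D - 1) = 1) (hb : (b • D - 1) * Sb = 1) :
    Sa - Sb = (b - a) • (Sa * D * Sb) := by
  have h1 : Sa = Sa * ((b • D - 1) * Sb) := by rw [hb, mul_one]
  have h2 : Sb = (Sa * (a • D - 1)) * Sb := by rw [ha, one_mul]
  calc Sa - Sb = Sa * ((b • D - 1) * Sb) - (Sa * (a • D - 1)) * Sb := by rw [← h1, ← h2]
    _ = _ := by
      simp only [mul_sub, sub_mul, mul_smul_comm, smul_mul_assoc, one_mul, mul_one, mul_assoc]
      module

lemma Loc_S {R : Type*} [NormedRing R] [NormedAlgebra ℝ R] (D : R) (S : ℕ → R) (M : ℝ) (hM : 0 ≤ M)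
    (h1 : ∀ n : ℕ, 2 ≤ n → ((n : ℝ) • D - 1) * S n = 1)
    (h2 : ∀ n : ℕ, 2 ≤ n → S n * ((n : ℝ) • D - 1) = 1)
    (hb : ∀ n : ℕ, 2 ≤ n → ‖D * S n‖ ≤ M / n)
    (hS : ∀ n, ‖S n‖ ≤ M + 1) (j : ℕ) : Loc (2 ^ j) (16 * (M + 1) ^ 3) S := by
  set q := M + 1 with hq
  have hq1 : 1 ≤ q := by linarith
  have hq2 : q ≤ q ^ 2 := by nlinarith
  have hq3 : q ^ 2 ≤ q ^ 3 := by nlinarith [sq_nonneg q]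
  have hN1 : (1 : ℝ) ≤ ((2 ^ j : ℕ) : ℝ) := by exact_mod_cast Nat.one_le_two_pow
  have hD1 : ∀ n, ‖S (n + 1) - S n‖ ≤ 2 * q := fun n =>
    (norm_sub_le _ _).trans (by linarith [hS n, hS (n + 1)])
  have step1 : ∀ n : ℕ, 2 ≤ n → S n - S (n + 1) = S n * (D * S (n + 1)) := by
    intro n hn
    have := res_id D n (n + 1 : ℕ) (S n) (S (n + 1)) (h2 n hn) (h1 (n + 1) (by omega))
    rw [this, mul_assoc]; push_cast; simp
  have step2 : ∀ n : ℕ, 2 ≤ n → S (n + 1) - S n = -(S (n + 1) * (D * S n)) := by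
    intro n hn
    have := res_id D (n + 1 : ℕ) n (S (n + 1)) (S n) (h2 (n + 1) (by omega)) (h1 n hn)
    rw [this, mul_assoc]; push_cast; simp
  have step3 : ∀ n : ℕ, 2 ≤ n → dd S n = (2 : ℝ) • (S n * (D * S (n + 2)) * (D * S (n + 1))) := by
    intro n hn
    have e1 := step2 (n + 1) (by omega)
    have e2 := step1 n hn
    have e3 := res_id D n (n + 2 : ℕ) (S n) (S (n + 2)) (h2 n hn) (h1 (n + 2) (by omega))
    have e4 : dd S n = (S (n + 1 + 1) - S (n + 1)) + (S n - S (n + 1)) := by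
      simp only [dd]; module
    rw [e4, e1, e2, neg_add_eq_sub, ← sub_mul, e3, smul_mul_assoc, mul_assoc (S n) D]
    push_cast; congr 1; ring
  refine ⟨fun n _ => (hS n).trans (by nlinarith), ?_, ?_⟩
  · intro n hn hn'
    rcases Nat.lt_or_ge j 2 with hj | hj
    · have hN2 : ((2 ^ j : ℕ) : ℝ) ≤ 2 := by interval_cases j <;> norm_num
      rw [le_div_iff₀ (by linarith)]
      have : ‖S (n + 1) - S n‖ * ((2 ^ j : ℕ) : ℝ) ≤ 2 * q * 2 :=
        mul_le_mul (hD1 n) hN2 (by linarith) (by linarith)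
      linarith
    · have h4 : 4 ≤ 2 ^ j := by
        calc 4 = 2 ^ 2 := by norm_num
          _ ≤ 2 ^ j := Nat.pow_le_pow_right (by norm_num) hj
      have hn2 : 2 ≤ n := by omega
      have hnR : ((2 ^ j : ℕ) : ℝ) ≤ 2 * n := by exact_mod_cast (by omega : 2 ^ j ≤ 2 * n)
      have hn0 : (0 : ℝ) < n := by positivity
      rw [step2 n hn2, norm_neg]
      calc ‖S (n + 1) * (D * S n)‖ ≤ q * (M / n) := (norm_mul_le _ _).trans
            (mul_le_mul (hS _) (hb n hn2) (norm_nonneg _) (by linarith))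
        _ ≤ 16 * q ^ 3 / ((2 ^ j : ℕ) : ℝ) := by
          rw [← mul_div_assoc, div_le_div_iff₀ hn0 (by linarith)]
          have a1 : q * M * ((2 ^ j : ℕ) : ℝ) ≤ q * M * (2 * n) :=
            mul_le_mul_of_nonneg_left hnR (by positivity)
          have a2 : q * M ≤ q ^ 3 := by nlinarith
          have a3 : q * M * (2 * n) ≤ q ^ 3 * (2 * n) :=
            mul_le_mul_of_nonneg_right a2 (by positivity)
          have a4 : 0 ≤ q ^ 3 * n := by positivity
          linarith
  · intro n hn hn'
    rcases Nat.lt_or_ge j 2 with hj | hj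
    · have hN2 : ((2 ^ j : ℕ) : ℝ) ≤ 2 := by interval_cases j <;> norm_num
      have e4 : dd S n = (S (n + 1 + 1) - S (n + 1)) - (S (n + 1) - S n) := by
        simp only [dd]; module
      have e5 : ‖dd S n‖ ≤ 4 * q := by
        rw [e4]; exact (norm_sub_le _ _).trans (by linarith [hD1 n, hD1 (n + 1)])
      rw [le_div_iff₀ (by positivity)]
      have : ‖dd S n‖ * ((2 ^ j : ℕ) : ℝ) ^ 2 ≤ 4 * q * 4 :=
        mul_le_mul e5 (by nlinarith) (by positivity) (by linarith)
      linarith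
    · have h4 : 4 ≤ 2 ^ j := by
        calc 4 = 2 ^ 2 := by norm_num
          _ ≤ 2 ^ j := Nat.pow_le_pow_right (by norm_num) hj
      have hn2 : 2 ≤ n := by omega
      have hb' : ∀ k : ℕ, 2 ≤ k → 2 ^ j ≤ k → ‖D * S k‖ ≤ q / ((2 ^ j : ℕ) : ℝ) := by
        intro k hk hk'
        refine (hb k hk).trans ?_
        have : ((2 ^ j : ℕ) : ℝ) ≤ k := by exact_mod_cast hk'
        gcongr
        linarith
      rw [step3 n hn2, norm_smul]
      have b1 : ‖S n * (D * S (n + 2)) * (D * S (n + 1))‖ ≤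
          q * (q / ((2 ^ j : ℕ) : ℝ)) * (q / ((2 ^ j : ℕ) : ℝ)) := by
        refine (norm_mul_le _ _).trans (mul_le_mul ?_ (hb' (n + 1) (by omega) hn) (norm_nonneg _)
          (by positivity))
        exact (norm_mul_le _ _).trans (mul_le_mul (hS n) (hb' (n + 2) (by omega) (by omega))
          (norm_nonneg _) (by positivity))
      have b2 : q * (q / ((2 ^ j : ℕ) : ℝ)) * (q / ((2 ^ j : ℕ) : ℝ)) = q ^ 3 / ((2 ^ j : ℕ) : ℝ) ^ 2 := by
        ring
      have b3 : 16 * q ^ 3 / ((2 ^ j : ℕ) : ℝ) ^ 2 = 16 * (q ^ 3 / ((2 ^ j : ℕ) : ℝ) ^ 2) := by ring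
      have b4 : 0 ≤ q ^ 3 / ((2 ^ j : ℕ) : ℝ) ^ 2 := by positivity
      rw [Real.norm_eq_abs, abs_of_pos (by norm_num : (0:ℝ) < 2)]
      linarith

lemma Loc_one {W : Type*} [NormedAddCommGroup W] [NormedSpace ℝ W] (j : ℕ) :
    Loc (2 ^ j) 1 (fun _ => (1 : W →L[ℝ] W)) := by
  refine ⟨fun n _ => ContinuousLinearMap.norm_id_le, fun n _ _ => ?_, fun n _ _ => ?_⟩
  · simp
  · have : dd (fun _ => (1 : W →L[ℝ] W)) n = 0 := by simp only [dd]; module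
    rw [this, norm_zero]; positivity

end algebra

section deriv
variable {W : Type*} [NormedAddCommGroup W] [NormedSpace ℝ W] [CompleteSpace W]

lemma Gj_BB_deriv {J BB : W →L[ℝ] W} (hJ : J * J = -1) (hJB : J * BB = BB * J) (Y : ℝ → W)
    (S : ℕ → W →L[ℝ] W)
    (h1 : ∀ n : ℕ, 2 ≤ n → ((n : ℝ) • (J * BB) - 1) * S n = 1)
    (h2 : ∀ n : ℕ, 2 ≤ n → S n * ((n : ℝ) • (J * BB) - 1) = 1) (j : ℕ) (t : ℝ) :
    HasDerivAt (fun t => BB (Gj J Y S j t)) (Gj J Y S j t + Gj J Y (fun _ => 1) j t) t := by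
  have h := BB.hasFDerivAt.comp_hasDerivAt t
    (Gc_hasDerivAt hJ Y (fun n => phi (2 ^ j) n • S n) (4 * 2 ^ j) t)
  refine h.congr_deriv ?_
  unfold Gj Gc
  rw [map_sum, ← Finset.sum_add_distrib]
  refine Finset.sum_congr rfl (fun n _ => ?_)
  set x := Ee J (n * t) (zc J Y n)
  rcases Nat.lt_or_ge n 2 with hn | hn
  · have : phi (2 ^ j) n = 0 :=
      (phi_blk Nat.one_le_two_pow).low n ((by omega : n ≤ 1).trans Nat.one_le_two_pow)
    simp [this]
  · have hc : J * ((n : ℝ) • (J * BB) - 1) = ((n : ℝ) • (J * BB) - 1) * J := by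
      have e0 : J * (BB * J) = J * (J * BB) := by rw [hJB]
      simp only [mul_sub, sub_mul, mul_smul_comm, smul_mul_assoc, mul_one, one_mul, mul_assoc, e0]
    have hSJ : S n * J = J * S n := by
      calc S n * J = S n * J * (((n : ℝ) • (J * BB) - 1) * S n) := by rw [h1 n hn, mul_one]
        _ = S n * (J * ((n : ℝ) • (J * BB) - 1)) * S n := by simp only [mul_assoc]
        _ = (S n * ((n : ℝ) • (J * BB) - 1)) * J * S n := by rw [hc]; simp only [mul_assoc]
        _ = J * S n := by rw [h2 n hn, one_mul]
    have key : (n : ℝ) • (BB * (S n * J)) = S n + 1 := by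
      have := h1 n hn
      rw [sub_mul, one_mul, smul_mul_assoc, sub_eq_iff_eq_add] at this
      rw [hSJ, ← mul_assoc, ← hJB, this, add_comm]
    have key2 : (n : ℝ) • BB (S n (J x)) = S n x + x := by
      have := congrArg (fun T : W →L[ℝ] W => T x) key
      simpa using this
    have : BB (((n : ℝ) • ((phi (2 ^ j) n • S n) * J)) x) =
        phi (2 ^ j) n • ((n : ℝ) • BB (S n (J x))) := by
      change BB ((n : ℝ) • (phi (2 ^ j) n • S n (J x))) = _
      rw [map_smul, map_smul, smul_comm]
    rw [this, key2]
    simp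

lemma G_BB_deriv {J BB : W →L[ℝ] W} (hJ : J * J = -1) (hJB : J * BB = BB * J) (Y : ℝ → W)
    (S : ℕ → W →L[ℝ] W)
    (h1 : ∀ n : ℕ, 2 ≤ n → ((n : ℝ) • (J * BB) - 1) * S n = 1)
    (h2 : ∀ n : ℕ, 2 ≤ n → S n * ((n : ℝ) • (J * BB) - 1) = 1)
    (u v : ℕ → ℝ) (hu : Summable u) (hv : Summable v) (hGu : ∀ j t, ‖Gj J Y S j t‖ ≤ u j)
    (hGv : ∀ j t, ‖Gj J Y (fun _ => 1) j t‖ ≤ v j) (t : ℝ) :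
    HasDerivAt (fun t => BB (∑' j, Gj J Y S j t))
      (∑' j, Gj J Y S j t + ∑' j, Gj J Y (fun _ => 1) j t) t := by
  have hs : ∀ t, Summable (fun j => Gj J Y S j t) := fun t =>
    Summable.of_norm_bounded hu (fun j => hGu j t)
  have hs' : ∀ t, Summable (fun j => Gj J Y (fun _ => 1) j t) := fun t =>
    Summable.of_norm_bounded hv (fun j => hGv j t)
  have h := hasDerivAt_tsum (hu.add hv) (fun j t => Gj_BB_deriv hJ hJB Y S h1 h2 j t)
    (fun j t => (norm_add_le _ _).trans (add_le_add (hGu j t) (hGv j t))) (y₀ := 0)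
    ((hs 0).map BB BB.continuous) t
  rw [(hs t).tsum_add (hs' t)] at h
  have e : (fun t => BB (∑' j, Gj J Y S j t)) = fun t => ∑' j, BB (Gj J Y S j t) := by
    ext t; exact BB.map_tsum (hs t)
  rw [e]; exact h

end deriv

section final

lemma MemHolder.continuous {E : Type*} [NormedAddCommGroup E] {β : ℝ} (hβ : 0 < β) {u : ℝ → E}
    (h : MemHolder β u) : Continuous u := by
  obtain ⟨-, C, hC⟩ := h
  rw [continuous_iff_continuousAt]
  intro t
  rw [ContinuousAt, tendsto_iff_norm_sub_tendsto_zero]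
  have h0 : Tendsto (fun s : ℝ => C * |s - t| ^ β) (nhds t) (nhds 0) := by
    have : Continuous (fun s : ℝ => C * |s - t| ^ β) :=
      continuous_const.mul ((by fun_prop : Continuous (fun s : ℝ => |s - t|)).rpow_const
        (fun s => Or.inr hβ.le))
    have h := this.tendsto t
    simpa [Real.zero_rpow hβ.ne'] using h
  exact squeeze_zero (fun s => norm_nonneg _) (fun s => hC s t) h0

lemma MemHolder.sub {E : Type*} [NormedAddCommGroup E] {β : ℝ} {u v : ℝ → E}
    (hu : MemHolder β u) (hv : MemHolder β v) : MemHolder β (fun t => u t - v t) := by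
  obtain ⟨pu, C, hC⟩ := hu
  obtain ⟨pv, D, hD⟩ := hv
  refine ⟨fun t => by simp only [pu t, pv t], C + D, fun s t => ?_⟩
  have e : u s - v s - (u t - v t) = (u s - u t) - (v s - v t) := by abel
  rw [e, add_mul]
  exact (norm_sub_le _ _).trans (add_le_add (hC s t) (hD s t))

lemma MemHolder.clm {E F : Type*} [NormedAddCommGroup E] [NormedSpace ℝ E] [NormedAddCommGroup F]
    [NormedSpace ℝ F] {β : ℝ} {u : ℝ → E}
    (hu : MemHolder β u) (T : E →L[ℝ] F) : MemHolder β (fun t => T (u t)) := by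
  obtain ⟨pu, C, hC⟩ := hu
  refine ⟨fun t => by simp only [pu t], ‖T‖ * C, fun s t => ?_⟩
  rw [← map_sub, mul_assoc]
  exact (T.le_opNorm _).trans (mul_le_mul_of_nonneg_left (hC s t) (norm_nonneg _))

lemma fourierC_zero_iff {V : Type*} [NormedAddCommGroup V] [NormedSpace ℝ V] [CompleteSpace V]
    (u : ℝ → V) (n : ℤ) : fourierC u n = 0 ↔
      (∫ t in (0:ℝ)..(2 * π), Real.cos ((n : ℝ) * t) • u t = 0 ∧
       ∫ t in (0:ℝ)..(2 * π), Real.sin ((n : ℝ) * t) • u t = 0) := by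
  have : (2 * π)⁻¹ ≠ 0 := by positivity
  rw [fourierC, Prod.mk_eq_zero, neg_eq_zero, smul_eq_zero_iff_right this,
    smul_eq_zero_iff_right this]

lemma parts {V : Type*} [NormedAddCommGroup V] [NormedSpace ℝ V] [CompleteSpace V]
    (v v' : ℝ → V) (hd : ∀ t, HasDerivAt v (v' t) t) (hc : Continuous v')
    (hp : Function.Periodic v (2 * π)) (k : ℤ) :
    (∫ t in (0:ℝ)..(2 * π), Real.cos (k * t) • v' t =
      (k : ℝ) • ∫ t in (0:ℝ)..(2 * π), Real.sin (k * t) • v t) ∧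
    (∫ t in (0:ℝ)..(2 * π), Real.sin (k * t) • v' t =
      -((k : ℝ) • ∫ t in (0:ℝ)..(2 * π), Real.cos (k * t) • v t)) := by
  have hv : Continuous v := continuous_iff_continuousAt.2 (fun t => (hd t).continuousAt)
  have h1 : ∀ t : ℝ, HasDerivAt (fun t : ℝ => (k : ℝ) * t) (k : ℝ) t := fun t => by
    simpa using (hasDerivAt_id t).const_mul (k : ℝ)
  have hp0 : v (2 * π) = v 0 := by simpa using hp 0
  have hcz : Real.cos ((k : ℝ) * (2 * π)) = 1 := Real.cos_int_mul_two_pi k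
  have hsz : Real.sin ((k : ℝ) * (2 * π)) = 0 := by
    have := Real.sin_int_mul_pi (2 * k)
    push_cast at this; rw [← this]; congr 1; ring
  have hcd : ∀ t, HasDerivAt (fun t => Real.cos (k * t) • v t)
      (Real.cos (k * t) • v' t - (k : ℝ) • (Real.sin (k * t) • v t)) t := by
    intro t
    refine ((h1 t).cos.smul (hd t)).congr_deriv ?_
    module
  have hsd : ∀ t, HasDerivAt (fun t => Real.sin (k * t) • v t)
      (Real.sin (k * t) • v' t + (k : ℝ) • (Real.cos (k * t) • v t)) t := by
    intro t
    refine ((h1 t).sin.smul (hd t)).congr_deriv ?_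
    module
  constructor
  · have h := intervalIntegral.integral_eq_sub_of_hasDerivAt (a := 0) (b := 2 * π)
      (fun t _ => hcd t) (Continuous.intervalIntegrable (by fun_prop) _ _)
    rw [intervalIntegral.integral_sub (Continuous.intervalIntegrable (by fun_prop) _ _)
      (Continuous.intervalIntegrable (by fun_prop) _ _), intervalIntegral.integral_smul, hcz, hp0] at h
    simpa [sub_eq_zero] using h
  · have h := intervalIntegral.integral_eq_sub_of_hasDerivAt (a := 0) (b := 2 * π)
      (fun t _ => hsd t) (Continuous.intervalIntegrable (by fun_prop) _ _)
    rw [intervalIntegral.integral_add (Continuous.intervalIntegrable (by fun_prop) _ _)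
      (Continuous.intervalIntegrable (by fun_prop) _ _), intervalIntegral.integral_smul, hsz, hp0] at h
    rw [eq_neg_iff_add_eq_zero]
    simpa using h

/-- complex structure on `V × V` -/
def Jop (V : Type*) [NormedAddCommGroup V] [NormedSpace ℝ V] : (V × V) →L[ℝ] (V × V) :=
  (-(ContinuousLinearMap.snd ℝ V V)).prod (ContinuousLinearMap.fst ℝ V V)

lemma Jop_apply {V : Type*} [NormedAddCommGroup V] [NormedSpace ℝ V] (x : V × V) :
    Jop V x = (-x.2, x.1) := rfl

lemma Jop_sq (V : Type*) [NormedAddCommGroup V] [NormedSpace ℝ V] : Jop V * Jop V = -1 := by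
  refine ContinuousLinearMap.ext (fun x => ?_)
  change Jop V (Jop V x) = -x
  rw [Jop_apply, Jop_apply]; rfl

lemma Jop_norm (V : Type*) [NormedAddCommGroup V] [NormedSpace ℝ V] : ‖Jop V‖ ≤ 1 := by
  refine ContinuousLinearMap.opNorm_le_bound _ zero_le_one (fun x => ?_)
  rw [Jop_apply, one_mul, Prod.norm_def, Prod.norm_def]
  simp only [norm_neg]
  rw [max_comm]

end final

section assembly

lemma fourier_low {V : Type*} [NormedAddCommGroup V] [NormedSpace ℝ V] [CompleteSpace V]
    (u : ℝ → V) : (∀ n : ℤ, n = -1 ∨ n = 0 ∨ n = 1 → fourierC u n = 0) ↔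
      ∀ m : ℕ, m < 2 → (∫ t in (0:ℝ)..(2 * π), Real.cos ((m : ℝ) * t) • u t = 0 ∧
       ∫ t in (0:ℝ)..(2 * π), Real.sin ((m : ℝ) * t) • u t = 0) := by
  constructor
  · intro h m hm
    have := (fourierC_zero_iff u (m : ℤ)).1 (h m (by omega))
    simpa using this
  · intro h n hn
    rw [fourierC_zero_iff]
    rcases hn with rfl | rfl | rfl
    · have := h 1 (by norm_num)
      simpa [Real.cos_neg, Real.sin_neg] using this
    · simpa using h 0 (by norm_num)
    · simpa using h 1 (by norm_num)

lemma coef_clm {E F : Type*} [NormedAddCommGroup E] [NormedSpace ℝ E] [CompleteSpace E]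
    [NormedAddCommGroup F] [NormedSpace ℝ F] [CompleteSpace F] (R : E →L[ℝ] F)
    (θ : ℝ → ℝ) (hθ : Continuous θ) (u : ℝ → E) (hu : Continuous u) :
    ∫ t in (0:ℝ)..(2 * π), θ t • R (u t) = R (∫ t in (0:ℝ)..(2 * π), θ t • u t) := by
  have h := R.intervalIntegral_comp_comm (f := fun t => θ t • u t) (μ := volume) (a := 0)
    (b := 2 * π) (Continuous.intervalIntegrable (by fun_prop) _ _)
  rw [← h]
  simp only [map_smul]

lemma zc_Y {V : Type*} [NormedAddCommGroup V] [NormedSpace ℝ V] [CompleteSpace V]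
    (y : ℝ → V) (hy : Continuous y) (m : ℕ) :
    (zc (Jop V) (fun t => (y t, (0 : V))) m).1 = ∫ t in (0:ℝ)..(2 * π), Real.cos (m * t) • y t ∧
    (Jop V (zc (Jop V) (fun t => (y t, (0 : V))) m)).1 =
      ∫ t in (0:ℝ)..(2 * π), Real.sin (m * t) • y t := by
  have hc : Continuous (fun s : ℝ => Ee (Jop V) (-(m * s)) (y s, (0 : V))) :=
    ((Ee_cont (Jop V)).comp (by fun_prop)).clm_apply (by fun_prop)
  constructor
  · have h := (ContinuousLinearMap.fst ℝ V V).intervalIntegral_comp_comm (μ := volume)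
      (hc.intervalIntegrable 0 (2 * π))
    rw [zc]
    refine h.symm.trans ?_
    congr 1; ext s
    simp [Ee_apply, Jop_apply]
  · have h := ((ContinuousLinearMap.fst ℝ V V).comp (Jop V)).intervalIntegral_comp_comm
      (μ := volume) (hc.intervalIntegrable 0 (2 * π))
    rw [zc]
    refine h.symm.trans ?_
    congr 1; ext s
    simp [Ee_apply, Jop_apply]

/-- `A⁻¹` on both components. -/
def BBop {V U : Type*} [NormedAddCommGroup V] [NormedSpace ℝ V] [NormedAddCommGroup U]
    [NormedSpace ℝ U] (ι : U →L[ℝ] V) (e : U ≃L[ℝ] V) : (V × V) →L[ℝ] (V × V) :=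
  (ι.comp (e.symm : V →L[ℝ] U)).prodMap (ι.comp (e.symm : V →L[ℝ] U))

lemma BBop_apply {V U : Type*} [NormedAddCommGroup V] [NormedSpace ℝ V] [NormedAddCommGroup U]
    [NormedSpace ℝ U] (ι : U →L[ℝ] V) (e : U ≃L[ℝ] V) (x : V × V) :
    BBop ι e x = (ι (e.symm x.1), ι (e.symm x.2)) := rfl

lemma resolvent {V : Type*} [NormedAddCommGroup V] [NormedSpace ℝ V] [CompleteSpace V]
    {U : Type*} [NormedAddCommGroup U] [NormedSpace ℝ U] [CompleteSpace U]
    (ι A : U →L[ℝ] V) (e : U ≃L[ℝ] V) (he : ∀ u, e u = A u)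
    (hH4 : H4hyp ι A) (hH5 : H5hyp ι A) :
    ∃ M : ℝ, 0 ≤ M ∧ ∃ S : ℕ → (V × V) →L[ℝ] (V × V),
      (∀ n : ℕ, 2 ≤ n → ((n : ℝ) • (Jop V * BBop ι e) - 1) * S n = 1) ∧
      (∀ n : ℕ, 2 ≤ n → S n * ((n : ℝ) • (Jop V * BBop ι e) - 1) = 1) ∧
      (∀ n : ℕ, 2 ≤ n → ‖(Jop V * BBop ι e) * S n‖ ≤ M / n) ∧ (∀ n, ‖S n‖ ≤ M + 1) := by
  obtain ⟨M, hM, hb⟩ := hH5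
  set P : ℕ → (V × V) →L[ℝ] (V × V) := fun n => (n : ℝ) • (Jop V * BBop ι e) - 1 with hP
  have hPe : ∀ (n : ℕ) (x : V × V),
      P n x = cMinusA ι A (Complex.I * (n : ℂ)) (e.symm x.1, e.symm x.2) := by
    intro n x
    have : P n x = (n : ℝ) • Jop V (BBop ι e x) - x := rfl
    rw [this, BBop_apply, Jop_apply]
    ext <;> simp [cMinusA, csmul, iotaC, AcC, ← he]
  have hbij : ∀ n : ℕ, 2 ≤ n → Function.Bijective (P n) := by
    intro n hn
    have h4 := hH4 (n : ℤ) (by omega) (by omega)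
    have h5 : ⇑(P n) = cMinusA ι A (Complex.I * ((n : ℤ) : ℂ)) ∘ (e.symm.prodCongr e.symm) := by
      ext1 x; rw [hPe]; simp
    rw [h5]
    exact h4.comp (e.symm.prodCongr e.symm).bijective
  have hex : ∀ n : ℕ, ∃ S : (V × V) →L[ℝ] (V × V),
      (2 ≤ n → P n * S = 1 ∧ S * P n = 1) ∧ (n < 2 → S = 0) := by
    intro n
    by_cases hn : 2 ≤ n
    · let E := ContinuousLinearEquiv.ofBijective (P n)
        (LinearMap.ker_eq_bot.2 (hbij n hn).1) (LinearMap.range_eq_top.2 (hbij n hn).2)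
      have hE : ∀ x, E x = P n x := fun x => rfl
      refine ⟨(E.symm : (V × V) →L[ℝ] (V × V)), fun _ => ⟨?_, ?_⟩, fun h => by omega⟩
      · refine ContinuousLinearMap.ext (fun x => ?_)
        change P n (E.symm x) = x
        rw [← hE]; simp
      · refine ContinuousLinearMap.ext (fun x => ?_)
        change E.symm (P n x) = x
        rw [← hE]; simp
    · exact ⟨0, fun h => absurd h hn, fun _ => rfl⟩
  choose S hS1 hS2 using hex
  have hDS : ∀ n : ℕ, 2 ≤ n → ‖(Jop V * BBop ι e) * S n‖ ≤ M / n := by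
    intro n hn
    have hn0 : (0 : ℝ) < n := by positivity
    refine ContinuousLinearMap.opNorm_le_bound _ (by positivity) (fun x => ?_)
    have h1 := hb n hn (e.symm (S n x).1, e.symm (S n x).2)
    rw [← hPe] at h1
    have h2 : P n (S n x) = x := by
      have := congrArg (fun T : (V × V) →L[ℝ] (V × V) => T x) (hS1 n hn).1
      exact this
    have h3 : iotaC ι (e.symm (S n x).1, e.symm (S n x).2) = BBop ι e (S n x) := rfl
    rw [h2, h3] at h1
    have h4 : ‖Jop V (BBop ι e (S n x))‖ ≤ 1 * ‖BBop ι e (S n x)‖ :=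
      (Jop V).le_of_opNorm_le (Jop_norm V) _
    change ‖Jop V (BBop ι e (S n x))‖ ≤ _
    rw [div_mul_eq_mul_div, le_div_iff₀ hn0]
    nlinarith
  refine ⟨M, hM.le, S, fun n hn => (hS1 n hn).1, fun n hn => (hS1 n hn).2, hDS, fun n => ?_⟩
  by_cases hn : 2 ≤ n
  · have hn0 : (0 : ℝ) < n := by positivity
    have h1 := (hS1 n hn).1
    have h2 : S n = (n : ℝ) • ((Jop V * BBop ι e) * S n) - 1 := by
      rw [hP] at h1
      simp only [sub_mul, one_mul, smul_mul_assoc] at h1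
      rw [← h1]; abel
    rw [h2]
    refine (norm_sub_le _ _).trans (add_le_add ?_ ContinuousLinearMap.norm_id_le)
    rw [norm_smul, Real.norm_eq_abs, abs_of_pos hn0]
    have := hDS n hn
    rw [le_div_iff₀ hn0] at this
    linarith
  · rw [hS2 n (by omega), norm_zero]; linarith

lemma T_maps {V : Type*} [NormedAddCommGroup V] [NormedSpace ℝ V] [CompleteSpace V]
    {U : Type*} [NormedAddCommGroup U] [NormedSpace ℝ U] [CompleteSpace U]
    (ι A : U →L[ℝ] V) (hι : Function.Injective ι) (β : ℝ) (hβ : β ∈ Set.Ioo (0 : ℝ) 1)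
    (w : ℝ → U) (hw : MemX β ι w)
    (hw0 : ∀ n : ℤ, n = -1 ∨ n = 0 ∨ n = 1 → fourierC (fun t => ι (w t)) n = 0) :
    MemHolder β (T1op ι A w) ∧
      ∀ n : ℤ, n = -1 ∨ n = 0 ∨ n = 1 → fourierC (T1op ι A w) n = 0 := by
  obtain ⟨h1, h2, h3⟩ := hw
  refine ⟨h3.sub (h1.clm A), ?_⟩
  have hwc := h1.continuous hβ.1
  have hXc := h3.continuous hβ.1
  rw [fourier_low] at hw0 ⊢
  intro m hm
  obtain ⟨c0, s0⟩ := hw0 m hm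
  have hP := parts (fun t => ι (w t)) (Xder ι w) (fun t => (h2 t).hasDerivAt) hXc
    (h1.clm ι).1 (m : ℤ)
  simp only [Int.cast_natCast] at hP
  rw [c0, s0, smul_zero, neg_zero] at hP
  rw [coef_clm ι _ (by fun_prop) w hwc] at c0 s0
  have c1 := hι (c0.trans (map_zero ι).symm)
  have s1 := hι (s0.trans (map_zero ι).symm)
  constructor
  · simp only [T1op, smul_sub]
    rw [intervalIntegral.integral_sub (Continuous.intervalIntegrable (by fun_prop) _ _)
      (Continuous.intervalIntegrable (by fun_prop) _ _), hP.1,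
      coef_clm A _ (by fun_prop) w hwc, c1, map_zero, sub_zero]
  · simp only [T1op, smul_sub]
    rw [intervalIntegral.integral_sub (Continuous.intervalIntegrable (by fun_prop) _ _)
      (Continuous.intervalIntegrable (by fun_prop) _ _), hP.2,
      coef_clm A _ (by fun_prop) w hwc, s1, map_zero, sub_zero]

lemma T_inj {V : Type*} [NormedAddCommGroup V] [NormedSpace ℝ V] [CompleteSpace V]
    {U : Type*} [NormedAddCommGroup U] [NormedSpace ℝ U] [CompleteSpace U]
    (ι : U →L[ℝ] V) (e : U ≃L[ℝ] V) (hι : Function.Injective ι)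
    (S : ℕ → (V × V) →L[ℝ] (V × V))
    (hS : ∀ n : ℕ, 2 ≤ n → S n * ((n : ℝ) • (Jop V * BBop ι e) - 1) = 1)
    (w : ℝ → U) (hwc : Continuous w) (hwp : Function.Periodic w (2 * π))
    (hd : ∀ t, HasDerivAt (fun t => ι (w t)) (e (w t)) t)
    (hw0 : ∀ m : ℕ, m < 2 → (∫ t in (0:ℝ)..(2 * π), Real.cos ((m : ℝ) * t) • ι (w t) = 0 ∧
       ∫ t in (0:ℝ)..(2 * π), Real.sin ((m : ℝ) * t) • ι (w t) = 0)) : ∀ t, w t = 0 := by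
  have key : ∀ m : ℕ, ∫ t in (0:ℝ)..(2 * π), Real.cos ((m : ℝ) * t) • w t = 0 ∧
       ∫ t in (0:ℝ)..(2 * π), Real.sin ((m : ℝ) * t) • w t = 0 := by
    intro m
    rcases Nat.lt_or_ge m 2 with hm | hm
    · obtain ⟨c0, s0⟩ := hw0 m hm
      rw [coef_clm ι _ (by fun_prop) w hwc] at c0 s0
      exact ⟨hι (c0.trans (map_zero ι).symm), hι (s0.trans (map_zero ι).symm)⟩
    · have hP := parts (fun t => ι (w t)) (fun t => e (w t)) hd (by fun_prop)
        (fun t => by simp only [hwp t]) (m : ℤ)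
      simp only [Int.cast_natCast] at hP
      rw [coef_clm ι _ (by fun_prop) w hwc, coef_clm ι _ (by fun_prop) w hwc] at hP
      have ec := coef_clm (e : U →L[ℝ] V) (fun t => Real.cos ((m : ℝ) * t)) (by fun_prop) w hwc
      have es := coef_clm (e : U →L[ℝ] V) (fun t => Real.sin ((m : ℝ) * t)) (by fun_prop) w hwc
      simp only [ContinuousLinearEquiv.coe_coe] at ec es
      rw [ec, es] at hP
      set a := ∫ t in (0:ℝ)..(2 * π), Real.cos ((m : ℝ) * t) • w t
      set b := ∫ t in (0:ℝ)..(2 * π), Real.sin ((m : ℝ) * t) • w t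
      have hz : ((m : ℝ) • (Jop V * BBop ι e) - 1) (e a, -e b) = 0 := by
        change (m : ℝ) • Jop V (BBop ι e (e a, -e b)) - (e a, -e b) = 0
        rw [BBop_apply, Jop_apply]
        ext
        · simp [hP.1]
        · simp [hP.2]
      have h0 : (e a, -e b) = (0 : V × V) := by
        have := congrArg (fun T : (V × V) →L[ℝ] (V × V) => T (e a, -e b)) (hS m hm)
        have h' : S m (((m : ℝ) • (Jop V * BBop ι e) - 1) (e a, -e b)) = (e a, -e b) := this
        rw [← h', hz, map_zero]
      rw [Prod.mk_eq_zero] at h0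
      exact ⟨by simpa using h0.1, by simpa using h0.2⟩
  exact fourier_unique w hwc hwp (fun m => (key m).1) (fun m => (key m).2)

lemma T_surj {V : Type*} [NormedAddCommGroup V] [NormedSpace ℝ V] [CompleteSpace V]
    {U : Type*} [NormedAddCommGroup U] [NormedSpace ℝ U] [CompleteSpace U]
    (ι : U →L[ℝ] V) (e : U ≃L[ℝ] V) (β : ℝ) (hβ : β ∈ Set.Ioo (0 : ℝ) 1)
    (S : ℕ → (V × V) →L[ℝ] (V × V)) (M : ℝ) (hM : 0 ≤ M)
    (h1 : ∀ n : ℕ, 2 ≤ n → ((n : ℝ) • (Jop V * BBop ι e) - 1) * S n = 1)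
    (h2 : ∀ n : ℕ, 2 ≤ n → S n * ((n : ℝ) • (Jop V * BBop ι e) - 1) = 1)
    (hb : ∀ n : ℕ, 2 ≤ n → ‖(Jop V * BBop ι e) * S n‖ ≤ M / n) (hS : ∀ n, ‖S n‖ ≤ M + 1)
    (y : ℝ → V) (hy : MemHolder β y)
    (hy0 : ∀ m : ℕ, m < 2 → (∫ t in (0:ℝ)..(2 * π), Real.cos ((m : ℝ) * t) • y t = 0 ∧
       ∫ t in (0:ℝ)..(2 * π), Real.sin ((m : ℝ) * t) • y t = 0)) :
    ∃ w : ℝ → U, MemHolder β w ∧ (∀ t, HasDerivAt (fun t => ι (w t)) (e (w t) + y t) t) ∧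
      ∀ m : ℕ, m < 2 → (∫ t in (0:ℝ)..(2 * π), Real.cos ((m : ℝ) * t) • ι (w t) = 0 ∧
       ∫ t in (0:ℝ)..(2 * π), Real.sin ((m : ℝ) * t) • ι (w t) = 0) := by
  have hyc := hy.continuous hβ.1
  obtain ⟨hyp, C, hC⟩ := hy
  have hJB : Jop V * BBop ι e = BBop ι e * Jop V := by
    refine ContinuousLinearMap.ext (fun x => ?_)
    change Jop V (BBop ι e x) = BBop ι e (Jop V x)
    rw [BBop_apply, Jop_apply, Jop_apply, BBop_apply]; simp
  set Y : ℝ → V × V := fun t => (y t, (0 : V)) with hYdef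
  have hYc : Continuous Y := by fun_prop
  have hYp : Function.Periodic Y (2 * π) := fun t => by simp only [hYdef, hyp t]
  have hYL : ∀ s t, ‖Y s - Y t‖ ≤ |C| * |s - t| ^ β := by
    intro s t
    have : ‖Y s - Y t‖ = ‖y s - y t‖ := by simp [hYdef, Prod.norm_def]
    rw [this]
    exact (hC s t).trans (mul_le_mul_of_nonneg_right (le_abs_self C) (by positivity))
  obtain ⟨⟨u, hu, hGu⟩, CG, hCG⟩ := multiplier (Jop_sq V) (Jop_norm V) hYc hYp hβ.1 hβ.2
    (abs_nonneg C) hYL S (D := 16 * (M + 1) ^ 3) (by positivity)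
    (fun j => Loc_S (Jop V * BBop ι e) S M hM h1 h2 hb hS j)
  obtain ⟨⟨v, hv, hGv⟩, CH, hCH⟩ := multiplier (Jop_sq V) (Jop_norm V) hYc hYp hβ.1 hβ.2
    (abs_nonneg C) hYL (fun _ => 1) (D := 1) zero_le_one (fun j => Loc_one j)
  have hder := G_BB_deriv (Jop_sq V) hJB Y S h1 h2 u v hu hv hGu hGv
  have hcG := fun m : ℕ => mult_coef (Jop V) Y S u hu hGu m (fun t => Real.cos (m * t))
    (by fun_prop) (fun t => Real.abs_cos_le_one _) 1 (fun n hn x => cos_Ee (Jop V) m n hn x)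
  have hsG := fun m : ℕ => mult_coef (Jop V) Y S u hu hGu m (fun t => Real.sin (m * t))
    (by fun_prop) (fun t => Real.abs_sin_le_one _) (Jop V)
    (fun n hn x => sin_Ee (Jop V) m n hn x)
  have hcH := fun m : ℕ => mult_coef (Jop V) Y (fun _ => 1) v hv hGv m
    (fun t => Real.cos (m * t))
    (by fun_prop) (fun t => Real.abs_cos_le_one _) 1 (fun n hn x => cos_Ee (Jop V) m n hn x)
  have hsH := fun m : ℕ => mult_coef (Jop V) Y (fun _ => 1) v hv hGv m
    (fun t => Real.sin (m * t))
    (by fun_prop) (fun t => Real.abs_sin_le_one _) (Jop V)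
    (fun n hn x => sin_Ee (Jop V) m n hn x)
  set G : ℝ → V × V := fun t => ∑' j, Gj (Jop V) Y S j t with hGdef
  set H : ℝ → V × V := fun t => ∑' j, Gj (Jop V) Y (fun _ => 1) j t with hHdef
  have hGh : MemHolder β G := by
    refine ⟨fun t => ?_, CG, hCG⟩
    simp only [hGdef, Gj]
    exact tsum_congr (fun j => Gc_periodic _ _ _ _ t)
  have hHh : MemHolder β H := by
    refine ⟨fun t => ?_, CH, hCH⟩
    simp only [hHdef, Gj]
    exact tsum_congr (fun j => Gc_periodic _ _ _ _ t)
  have hGc := hGh.continuous hβ.1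
  have hHc := hHh.continuous hβ.1
  have hπ : π ≠ 0 := Real.pi_ne_zero
  set F : V × V →L[ℝ] V := π⁻¹ • ContinuousLinearMap.fst ℝ V V with hF
  have hFa : ∀ x, F x = π⁻¹ • x.1 := fun x => rfl
  have hyH : ∀ t, F (H t) = y t := by
    intro t
    have hz := fourier_unique (fun t => F (H t) - y t) (by fun_prop)
      (fun t => by simp only [hHh.1 t, hyp t]) ?_ ?_ t
    · exact sub_eq_zero.1 hz
    · intro m
      simp only [smul_sub]
      rw [intervalIntegral.integral_sub (Continuous.intervalIntegrable (by fun_prop) _ _)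
        (Continuous.intervalIntegrable (by fun_prop) _ _), coef_clm F _ (by fun_prop) H hHc,
        sub_eq_zero]
      refine (congrArg F (hcH m)).trans ?_
      rcases Nat.lt_or_ge m 2 with hm | hm
      · rw [if_neg (by omega), map_zero, (hy0 m hm).1]
      · rw [if_pos hm, ← (zc_Y y hyc m).1, hFa]
        simp [smul_smul, hπ, hYdef]
    · intro m
      simp only [smul_sub]
      rw [intervalIntegral.integral_sub (Continuous.intervalIntegrable (by fun_prop) _ _)
        (Continuous.intervalIntegrable (by fun_prop) _ _), coef_clm F _ (by fun_prop) H hHc,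
        sub_eq_zero]
      refine (congrArg F (hsH m)).trans ?_
      rcases Nat.lt_or_ge m 2 with hm | hm
      · rw [if_neg (by omega), map_zero, (hy0 m hm).2]
      · rw [if_pos hm, ← (zc_Y y hyc m).2, hFa]
        simp [smul_smul, hπ, hYdef]
  refine ⟨fun t => e.symm (F (G t)), hGh.clm ((e.symm : V →L[ℝ] U).comp F), fun t => ?_, ?_⟩
  · have h := F.hasFDerivAt.comp_hasDerivAt t (hder t)
    have e1 : (fun t => ι (e.symm (F (G t)))) = F ∘ (fun t => BBop ι e (G t)) := by
      ext1 t
      simp [hFa, BBop_apply]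
    rw [e1]
    refine h.congr_deriv ?_
    rw [map_add]
    change F (G t) + F (H t) = _
    rw [hyH]; simp
  · intro m hm
    have hR := fun (θ : ℝ → ℝ) (hθ : Continuous θ) =>
      coef_clm ((ι.comp (e.symm : V →L[ℝ] U)).comp F) θ hθ G hGc
    constructor
    · refine (hR _ (by fun_prop)).trans ?_
      have := hcG m
      rw [if_neg (by omega)] at this
      exact (congrArg _ this).trans (map_zero _)
    · refine (hR _ (by fun_prop)).trans ?_
      have := hsG m
      rw [if_neg (by omega)] at this
      exact (congrArg _ this).trans (map_zero _)

end assembly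

/-- **Lemma 4.2.** Assume (H2), (H4) and (H5).  Then `T : X_∞ → Y_∞`, `Tu = u_t - Au`,
is bijective, where `X_∞` and `Y_∞` are the subspaces of `X` resp. `Y` of functions whose
Fourier coefficients of orders `-1, 0, 1` vanish. -/
theorem T_bijective_Xinf_Yinf
    {V : Type*} [NormedAddCommGroup V] [NormedSpace ℝ V] [CompleteSpace V]
    {U : Type*} [NormedAddCommGroup U] [NormedSpace ℝ U] [CompleteSpace U]
    (ι A : U →L[ℝ] V) (hι : Function.Injective ι)
    (hUnorm : ∀ u : U, ‖u‖ = ‖A u‖) (hAbij : Function.Bijective A)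
    (β : ℝ) (hβ : β ∈ Set.Ioo (0 : ℝ) 1)
    (hH2 : H2hyp ι A) (hH4 : H4hyp ι A) (hH5 : H5hyp ι A) :
    Set.BijOn (fun w : ℝ → U => T1op ι A w)
      {w : ℝ → U | MemX β ι w ∧
        ∀ n : ℤ, n = -1 ∨ n = 0 ∨ n = 1 → fourierC (fun t => ι (w t)) n = 0}
      {y : ℝ → V | MemHolder β y ∧
        ∀ n : ℤ, n = -1 ∨ n = 0 ∨ n = 1 → fourierC y n = 0} := by
  let e : U ≃L[ℝ] V := ContinuousLinearEquiv.ofBijective A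
    (LinearMap.ker_eq_bot.2 hAbij.1) (LinearMap.range_eq_top.2 hAbij.2)
  have he : ∀ u, e u = A u := fun u => rfl
  obtain ⟨M, hM, S, h1, h2, hb, hS⟩ := resolvent ι A e he hH4 hH5
  refine ⟨fun w hw => T_maps ι A hι β hβ w hw.1 hw.2, ?_, ?_⟩
  · rintro w1 ⟨⟨a1, a2, a3⟩, a4⟩ w2 ⟨⟨b1, b2, b3⟩, b4⟩ hT
    rw [fourier_low] at a4 b4
    have ac := a1.continuous hβ.1
    have bc := b1.continuous hβ.1
    have hz := T_inj ι e hι S h2 (fun t => w1 t - w2 t) (by fun_prop)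
      (fun t => by simp only [a1.1 t, b1.1 t]) ?_ ?_
    · funext t; exact sub_eq_zero.1 (hz t)
    · intro t
      have h := ((a2 t).hasDerivAt).sub ((b2 t).hasDerivAt)
      have hTt : deriv (fun s => ι (w1 s)) t - A (w1 t) = deriv (fun s => ι (w2 s)) t - A (w2 t) :=
        congrFun hT t
      have e1 : (fun t => ι (w1 t - w2 t)) = (fun s => ι (w1 s)) - (fun s => ι (w2 s)) := by
        ext1 s; simp
      rw [e1]
      refine h.congr_deriv ?_
      rw [he, map_sub, sub_eq_sub_iff_sub_eq_sub]
      exact hTt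
    · intro m hm
      simp only [map_sub, smul_sub]
      constructor
      · rw [intervalIntegral.integral_sub (Continuous.intervalIntegrable (by fun_prop) _ _)
          (Continuous.intervalIntegrable (by fun_prop) _ _), (a4 m hm).1, (b4 m hm).1, sub_zero]
      · rw [intervalIntegral.integral_sub (Continuous.intervalIntegrable (by fun_prop) _ _)
          (Continuous.intervalIntegrable (by fun_prop) _ _), (a4 m hm).2, (b4 m hm).2, sub_zero]
  · rintro y ⟨hy, hy0⟩
    obtain ⟨w, hw, hd, hw0⟩ := T_surj ι e β hβ S M hM h1 h2 hb hS y hy ((fourier_low y).1 hy0)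
    have hX : Xder ι w = fun t => A (w t) + y t := by
      funext t; exact (hd t).deriv
    refine ⟨w, ⟨⟨hw, fun t => (hd t).differentiableAt, ?_⟩, (fourier_low _).2 hw0⟩, ?_⟩
    · rw [hX]
      have := hy.sub (hw.clm (-A))
      convert this using 2 with t
      simp [add_comm]
    · funext t
      simp [T1op, hX]
end HopfStmt
end
end
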